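/- arXiv:1602.08989 — 10 statements merged into one kernel-verified Lean document; each statement's English description precedes it below -/
import Mathlib

section
/- Let F be a differential field of characteristic zero whose derivation ∂ is not identically zero, let n ≥ 1, and let A ∈ Mₙ(F). Then the connection operator D_A(v) = ∂v + A·v on Fⁿ admits a cyclic vector: there exists v ∈ Fⁿ such that v, D_A(v), D_A²(v), …, D_A^{n−1}(v) form a basis of Fⁿ over F. -/
/-!
Fix `t` with `∂t ≠ 0` and rescale: `δ = (t/∂t)·∂` satisfies `δ t = t`, and `E = (t/∂t)·D_A`
satisfies the Leibniz rule for `δ`. Each `E^i v` lies in the span of `v, …, D_A^i v`, so a cyclic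
vector for `E` is one for `D_A`.

For `E`, suppose `v, …, E^(m-1) v` are independent with `m < n`, while `u, …, E^m u` are dependent
for every `u`. Write `E^m v = ∑ c_i E^i v`, choose `w` outside the span of the `E^i v`, and a linear
functional `φ` vanishing on that span with `φ w ≠ 0`. Applying the assumption to
`u = v + l • t^k • w` for all naturals `l` and looking at the terms of first order in `l` gives
`φ (E^m (t^k w)) = ∑ c_i φ (E^i (t^k w))` (`first_order_relation`). Since
`E^i (t^k w) = t^k (E + k)^i w`, dividing by `t^k` yields
`φ ((E + k)^m w) = ∑ c_i φ ((E + k)^i w)` for all naturals `k`. Both sides are polynomial in `k`,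
and the coefficient of `k^m` is `φ w` on the left and `0` on the right (`exists_shift_poly`), a
contradiction.
-/

open Polynomial in
/-- A polynomial over a field of characteristic zero vanishing at all positive naturals is zero. -/
lemma poly_eq_zero_of_nat {F : Type*} [Field F] [CharZero F] (p : F[X])
    (h : ∀ k : ℕ, p.eval ((k : F) + 1) = 0) : p = 0 := by
  apply Polynomial.eq_zero_of_infinite_isRoot
  refine Set.Infinite.mono ?_ (Set.infinite_range_of_injective
    (f := fun k : ℕ => (k : F) + 1) ?_)
  · rintro _ ⟨k, rfl⟩
    exact h k
  · intro a b hab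
    simpa using hab

open Polynomial in
/-- If `a i + l • b i` (`i ≤ m`) is a dependent family for every positive natural `l`, where
`a 0, …, a (m-1)` are independent and `a m = ∑ c i • a i`, then modulo the span of the `a i` the
same relation holds among the `b i`. In coordinates dual to `a 0, …, a (m-1)` completed by `φ`, the
last column of the coordinate matrix is divisible by `l`; dividing the determinant by `l` and
setting `l = 0` gives the relation. -/
lemma first_order_relation {F V : Type*} [Field F] [CharZero F] [AddCommGroup V] [Module F V]
    (m : ℕ) (a b : ℕ → V) (c : Fin m → F) (φ : V →ₗ[F] F)
    (ha : LinearIndependent F (fun i : Fin m => a i))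
    (hc : a m = ∑ i : Fin m, c i • a i)
    (hφ : ∀ i : Fin m, φ (a i) = 0)
    (hdep : ∀ l : ℕ, ¬ LinearIndependent F
      (fun i : Fin (m + 1) => a i + ((l : F) + 1) • b i)) :
    φ (b m) = ∑ i : Fin m, c i * φ (b i) := by
  obtain ⟨L, hL⟩ := LinearMap.exists_leftInverse_of_injective
    (Fintype.linearCombination F (fun i : Fin m => a i))
    (LinearMap.ker_eq_bot.2 ha.fintypeLinearCombination_injective)
  have hLa : ∀ i : Fin m, L (a i) = Pi.single i 1 := by
    intro i
    have := LinearMap.congr_fun hL (Pi.single i 1)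
    simpa [Fintype.linearCombination_apply_single] using this
  have hφm : φ (a m) = 0 := by
    rw [hc]; simp [hφ]
  have hφ' : ∀ i : Fin (m + 1), φ (a i) = 0 := by
    intro i
    induction i using Fin.lastCases with
    | last => simpa using hφm
    | cast i => simpa using hφ i
  let N : Matrix (Fin (m + 1)) (Fin (m + 1)) F[X] := Matrix.of fun i =>
    Fin.snoc (α := fun _ => F[X]) (fun j : Fin m => C (L (a i) j) + X * C (L (b i) j)) (C (φ (b i)))
  have hev : ∀ x : F, N.det.eval x = (N.map (eval x)).det := by
    intro x
    have := RingHom.map_det (evalRingHom x) N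
    simpa using this
  have hN : N.det = 0 := by
    apply poly_eq_zero_of_nat
    intro l
    rw [hev]
    obtain ⟨g, hg, i, hi⟩ := Fintype.not_linearIndependent_iff.1 (hdep l)
    apply Matrix.exists_vecMul_eq_zero_iff.1
    refine ⟨g, fun h => hi (by simp [h]), ?_⟩
    ext j
    induction j using Fin.lastCases with
    | last =>
      have h := congrArg φ hg
      have hl : ((l : F) + 1) ≠ 0 := Nat.cast_add_one_ne_zero l
      simp only [map_sum, map_smul, map_add, hφ', zero_add, smul_eq_mul, map_zero] at h
      simp only [Matrix.vecMul, dotProduct, Matrix.map_apply, N, Matrix.of_apply, Fin.snoc_last,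
        eval_C, Pi.zero_apply]
      apply mul_left_cancel₀ hl
      rw [mul_zero, ← h, Finset.mul_sum]
      exact Finset.sum_congr rfl fun i _ => by ring
    | cast j =>
      have h := congrFun (congrArg L hg) j
      simp only [map_sum, map_smul, map_add, map_zero, Finset.sum_apply, Pi.smul_apply,
        Pi.add_apply, smul_eq_mul, Pi.zero_apply] at h
      simp only [Matrix.vecMul, dotProduct, Matrix.map_apply, N, Matrix.of_apply,
        Fin.snoc_castSucc, eval_C, eval_add, eval_mul, eval_X, Pi.zero_apply]
      exact h
  have h0 : (N.map (eval 0)).det = 0 := by rw [← hev, hN, eval_zero]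
  obtain ⟨x, hx0, hx⟩ := Matrix.exists_mulVec_eq_zero_iff.2 h0
  have hrow : ∀ i : Fin m, x i.castSucc = - (φ (b i) * x (Fin.last m)) := by
    intro i
    have h := congrFun hx i.castSucc
    simp [Matrix.mulVec, dotProduct, N, Fin.sum_univ_castSucc, hLa, Pi.single_apply,
      apply_ite (eval (0 : F))] at h
    linear_combination h
  have hlast : ∑ i : Fin m, c i * x i.castSucc + φ (b m) * x (Fin.last m) = 0 := by
    have h := congrFun hx (Fin.last m)
    simpa [Matrix.mulVec, dotProduct, N, Fin.sum_univ_castSucc, hc, hLa, Pi.single_apply] using h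
  have hxl : x (Fin.last m) ≠ 0 := by
    intro h
    apply hx0
    ext i
    induction i using Fin.lastCases with
    | last => simpa using h
    | cast i => simp [hrow, h]
  apply mul_right_cancel₀ hxl
  simp only [hrow] at hlast
  rw [Finset.sum_mul, eq_comm, ← sub_eq_zero, ← neg_eq_zero, ← hlast, neg_sub, sub_eq_add_neg,
    add_comm, ← Finset.sum_neg_distrib]
  congr 1
  exact Finset.sum_congr rfl fun i _ => by ring

open Polynomial in
/-- `φ ((E + k)^i w)` is a polynomial in `k` of degree at most `i`, with `φ w` as coefficient
of `k^i`. -/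
lemma exists_shift_poly {F V : Type*} [Field F] [AddCommGroup V] [Module F V]
    (E : AddMonoid.End V) (φ : V →ₗ[F] F) (i : ℕ) (w : V) :
    ∃ q : F[X], (∀ k : ℕ, q.eval (k : F) = φ (((E + (k : AddMonoid.End V)) ^ i) w)) ∧
      q.natDegree ≤ i ∧ q.coeff i = φ w := by
  induction i generalizing w with
  | zero => exact ⟨C (φ w), by simp, by simp, by simp⟩
  | succ i ih =>
    obtain ⟨q, hq, hqd, hqc⟩ := ih w
    obtain ⟨r, hr, hrd, -⟩ := ih (E w)
    refine ⟨r + X * q, fun k => ?_, ?_, ?_⟩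
    · have h : ((E + (k : AddMonoid.End V)) ^ (i + 1)) w
          = ((E + (k : AddMonoid.End V)) ^ i) (E w) + k • ((E + (k : AddMonoid.End V)) ^ i) w := by
        rw [pow_succ, ← map_nsmul, ← map_add]
        rfl
      rw [h]
      simp [hq, hr, map_nsmul]
    · refine (natDegree_add_le _ _).trans (max_le (by lia) ?_)
      refine natDegree_mul_le.trans ?_
      have := natDegree_X_le (R := F)
      lia
    · rw [coeff_add, coeff_X_mul, hqc, coeff_eq_zero_of_natDegree_lt (by lia), zero_add]

lemma pow_smul_shift {F V : Type*} [Field F] [AddCommGroup V] [Module F V]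
    (δ : F → F) (hmul : ∀ x y : F, δ (x * y) = x * δ y + δ x * y)
    (E : AddMonoid.End V) (hE : ∀ (x : F) (v : V), E (x • v) = δ x • v + x • E v)
    (t : F) (hδ : δ t = t) (k i : ℕ) (w : V) :
    (E ^ i) (t ^ k • w) = t ^ k • ((E + (k : AddMonoid.End V)) ^ i) w := by
  have h1 : δ 1 = 0 := by simpa using hmul 1 1
  have hk : δ (t ^ k) = k * t ^ k := by
    induction k with
    | zero => simp [h1]
    | succ k ih => rw [pow_succ, hmul, ih, hδ]; push_cast; ring
  induction i generalizing w with
  | zero => simp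
  | succ i ih =>
    have h : E (t ^ k • w) = t ^ k • ((E + (k : AddMonoid.End V)) w) := by
      have : (E + (k : AddMonoid.End V)) w = E w + k • w := rfl
      rw [hE, hk, this, smul_add, ← Nat.cast_smul_eq_nsmul F, smul_smul, mul_comm, add_comm]
    rw [pow_succ, pow_succ]
    exact (congrArg (E ^ i) h).trans (ih _)

open Polynomial in
/-- The cyclic vector theorem for an operator `E` over a derivation normalised by `δ t = t`: by
induction on `m`, some vector has its first `m` iterates independent, up to the dimension. -/
lemma exists_independent_iterates {F V : Type*} [Field F] [CharZero F] [AddCommGroup V]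
    [Module F V] [FiniteDimensional F V]
    (δ : F → F) (hmul : ∀ x y : F, δ (x * y) = x * δ y + δ x * y)
    (E : AddMonoid.End V) (hE : ∀ (x : F) (v : V), E (x • v) = δ x • v + x • E v)
    (t : F) (ht : t ≠ 0) (hδ : δ t = t) (m : ℕ) (hm : m ≤ Module.finrank F V) :
    ∃ v : V, LinearIndependent F (fun i : Fin m => (E ^ (i : ℕ)) v) := by
  induction m with
  | zero => exact ⟨0, linearIndependent_empty_type⟩
  | succ m ih =>
    obtain ⟨v, hv⟩ := ih (by lia)
    by_contra! hdep
    set S := Submodule.span F (Set.range fun i : Fin m => (E ^ (i : ℕ)) v) with hS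
    have hmem : (E ^ m) v ∈ S := by
      by_contra h
      refine hdep v (linearIndependent_finSucc'.2 ⟨?_, ?_⟩)
      · exact hv
      · exact h
    obtain ⟨c, hc⟩ := (Submodule.mem_span_range_iff_exists_fun F).1 hmem
    have hSt : S ≠ ⊤ := by
      intro h
      have h1 := finrank_range_le_card (R := F) (fun i : Fin m => (E ^ (i : ℕ)) v)
      rw [Set.finrank, ← hS, h, finrank_top, Fintype.card_fin] at h1
      lia
    obtain ⟨w, -, hw⟩ := SetLike.exists_of_lt (lt_top_iff_ne_top.2 hSt)
    obtain ⟨φ, hφw, hφS⟩ := Submodule.exists_le_ker_of_notMem hw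
    have key : ∀ k : ℕ, φ (((E + (k : AddMonoid.End V)) ^ m) w)
        = ∑ i : Fin m, c i * φ (((E + (k : AddMonoid.End V)) ^ (i : ℕ)) w) := by
      intro k
      have h := first_order_relation m (fun i => (E ^ i) v) (fun i => (E ^ i) (t ^ k • w)) c φ hv
        hc.symm (fun i => hφS (Submodule.subset_span ⟨i, rfl⟩)) (fun l => by
          have h := hdep (v + (l + 1) • t ^ k • w)
          convert h using 3 with i
          rw [map_add, map_nsmul, ← Nat.cast_smul_eq_nsmul F (l + 1)]
          push_cast
          rfl)
      simp only [pow_smul_shift δ hmul E hE t hδ, map_smul, smul_eq_mul] at h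
      apply mul_left_cancel₀ (pow_ne_zero k ht)
      rw [h, Finset.mul_sum]
      exact Finset.sum_congr rfl fun i _ => by ring
    choose q hq hqd hqc using fun i : ℕ => exists_shift_poly E φ i w
    have hz : q m - ∑ i : Fin m, C (c i) * q i = 0 := by
      apply poly_eq_zero_of_nat
      intro k
      have h1 := key (k + 1)
      simp only [← hq] at h1
      push_cast at h1
      simp [eval_finsetSum, h1]
    have hco := congrArg (fun p => p.coeff m) hz
    simp only [coeff_sub, finsetSum_coeff, coeff_C_mul, coeff_zero, hqc] at hco
    rw [Finset.sum_eq_zero, sub_zero] at hco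
    · exact hφw hco
    · intro i _
      rw [coeff_eq_zero_of_natDegree_lt ((hqd i).trans_lt i.2), mul_zero]

/-- Iterates of a rescaled operator `f • D` stay in the span of the iterates of `D`. -/
lemma rescaled_iterate_mem {F V : Type*} [Field F] [AddCommGroup V] [Module F V]
    (δ : F → F) (D E : AddMonoid.End V) (f : F)
    (hD : ∀ (x : F) (v : V), D (x • v) = δ x • v + x • D v)
    (hE : ∀ v, E v = f • D v) (v : V) (i : ℕ) :
    (E ^ i) v ∈ Submodule.span F ((fun j => (D ^ j) v) '' Set.Iio (i + 1)) := by
  induction i with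
  | zero => exact Submodule.subset_span ⟨0, by simp, by simp⟩
  | succ i ih =>
    have h : (E ^ (i + 1)) v = f • D ((E ^ i) v) := by
      rw [pow_succ', ← hE]; rfl
    rw [h]
    apply Submodule.smul_mem
    have hle : Submodule.span F ((fun j => (D ^ j) v) '' Set.Iio (i + 1)) ≤
        Submodule.span F ((fun j => (D ^ j) v) '' Set.Iio (i + 1 + 1)) :=
      Submodule.span_mono (Set.image_mono (Set.Iio_subset_Iio (by lia)))
    generalize (E ^ i) v = u at ih
    clear h
    induction ih using Submodule.span_induction with
    | mem x hx =>
      obtain ⟨j, hj, rfl⟩ := hx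
      refine Submodule.subset_span ⟨j + 1, ?_, ?_⟩
      · simp only [Set.mem_Iio] at hj ⊢; lia
      · simp only [pow_succ']; rfl
    | zero => simp
    | add x y _ _ hx hy => rw [map_add]; exact add_mem hx hy
    | smul a x hx hx' =>
      rw [hD]
      exact add_mem (Submodule.smul_mem _ _ (hle hx)) (Submodule.smul_mem _ _ hx')

/-- **Cyclic vector theorem.** Let `F` be a differential field of characteristic zero
whose derivation `der` is not identically zero, let `n ≥ 1`, and let `A ∈ Mₙ(F)`.
Then the connection operator `D_A v = derv + A·v` on `Fⁿ` admits a cyclic vector: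
there is `v` such that `v, D_A v, …, D_A^{n-1} v` is a basis of `Fⁿ` over `F`. -/
theorem cyclic_vector_exists
    {F : Type*} [Field F] [CharZero F]
    (der : F → F)
    (hadd : ∀ x y : F, der (x + y) = der x + der y)
    (hmul : ∀ x y : F, der (x * y) = x * der y + der x * y)
    (hne : der ≠ 0)
    (n : ℕ) (hn : 1 ≤ n)
    (A : Matrix (Fin n) (Fin n) F) :
    ∃ v : Fin n → F,
      LinearIndependent F
        (fun i : Fin n =>
          (fun w : Fin n → F => (fun j => der (w j)) + A.mulVec w)^[(i : ℕ)] v) ∧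
      Submodule.span F
        (Set.range (fun i : Fin n =>
          (fun w : Fin n → F => (fun j => der (w j)) + A.mulVec w)^[(i : ℕ)] v)) = ⊤ := by
  obtain ⟨t, ht⟩ := Function.ne_iff.1 hne
  simp only [Pi.zero_apply] at ht
  have h0 : der 0 = 0 := by simpa using hadd 0 0
  have ht0 : t ≠ 0 := by
    rintro rfl
    exact ht h0
  let D : AddMonoid.End (Fin n → F) := AddMonoidHom.mk'
    (fun w : Fin n → F => (fun j => der (w j)) + A.mulVec w) (by
      intro x y
      ext j
      simp only [Pi.add_apply, hadd, Matrix.mulVec_add]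
      ring)
  have hDapp : ∀ w, D w = (fun j => der (w j)) + A.mulVec w := fun _ => rfl
  have hD : ∀ (x : F) (v : Fin n → F), D (x • v) = der x • v + x • D v := by
    intro x v
    ext j
    simp only [hDapp, Pi.add_apply, Pi.smul_apply, smul_eq_mul, hmul, Matrix.mulVec_smul]
    ring
  let f : F := t / der t
  let E : AddMonoid.End (Fin n → F) := AddMonoidHom.mk' (fun w => f • D w) (by
      intro x y
      rw [map_add, smul_add])
  have hEapp : ∀ w, E w = f • D w := fun _ => rfl
  obtain ⟨v, hv⟩ := exists_independent_iterates (fun x => f * der x)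
    (fun x y => by rw [hmul]; ring) E
    (fun x v => by simp only [hEapp, hD, smul_add, smul_smul, mul_comm])
    t ht0 (div_mul_cancel₀ t ht) n (by simp)
  have hspan : Submodule.span F (Set.range fun i : Fin n => (D ^ (i : ℕ)) v) = ⊤ := by
    rw [eq_top_iff, ← hv.span_eq_top_of_card_eq_finrank' (by simp), Submodule.span_le]
    rintro _ ⟨i, rfl⟩
    refine Submodule.span_mono ?_ (rescaled_iterate_mem der D E f hD hEapp v i)
    rintro _ ⟨j, hj, rfl⟩
    exact ⟨⟨j, by have := i.2; simp only [Set.mem_Iio] at hj; lia⟩, rfl⟩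
  have hpow : ∀ i : ℕ,
      (fun w : Fin n → F => (fun j => der (w j)) + A.mulVec w)^[i] v = (D ^ i) v := by
    intro i
    rw [AddMonoid.End.coe_pow]
    rfl
  refine ⟨v, ?_⟩
  simp only [hpow]
  exact ⟨linearIndependent_of_top_le_span_of_card_eq_finrank hspan.ge (by simp), hspan⟩
end

section
/- Let F be a differential field of characteristic zero whose derivation ∂ is not identically zero, let n ≥ 1, and let A ∈ Mₙ(F). Then there exist g ∈ GLₙ(F) and c₁, …, cₙ ∈ F such that B := g⁻¹·A·g + g⁻¹·∂g is the companion-type matrix with B_{i+1,i} = 1 for 1 ≤ i ≤ n−1, B_{i,n} = cᵢ for 1 ≤ i ≤ n, and all other entries zero. In particular, every A ∈ Mₙ(F) is gauge equivalent to a matrix in non-degenerate oper form. -/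
/-!
The columns of a suitable `g` are `v, Dv, …, Dⁿ⁻¹v`, where `D v = A v + ∂v` is the connection on `Fⁿ`
attached to `A` and `v` is a cyclic vector for `D`; so the theorem amounts to the existence of a
cyclic vector.

Take `v` such that `v, Dv, …, Dᵐ⁻¹v` is linearly independent with `m` as large as possible, let `W`
be the span of this family, and suppose `m < dim V`. By maximality `Dᵐv = ∑ aⱼ Dʲv`; put
`L = Dᵐ - ∑ aⱼ Dʲ`.

* If `L y ∉ W` for some `y`, then `v + k y` has `m + 1` independent iterates for a suitable positive
  integer `k`: independence of `v, …, Dᵐ⁻¹v, L y` persists when `Dʲv` is replaced by `Dʲ(v + k y)` for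
  all but finitely many `k` (`exists_nat_linearIndependent`), and `L (v + k y) = k L y`. This
  contradicts the choice of `m`.
* If `L y ∈ W` for all `y`, pick `x` with `∂x ≠ 0`. Taking the commutator with multiplication by `x`
  lowers the order of an operator by one and multiplies its leading coefficient by `(order) · ∂x`,
  which is nonzero in characteristic zero. After `m` commutators a nonzero multiple of the
  identity maps `V` into `W`, so `W = V` (`mem_of_operator_mem`), which is absurd.
-/

namespace CyclicVector

open Submodule

section Operators

variable {F V : Type*} [Field F] [AddCommGroup V] [Module F V]

/-- The differential operators of order less than `m`: the `F`-linear combinations of the powers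
`Dʲ` with `j < m`, as plain functions `V → V` (they are not `F`-linear). -/
def lowerOps (F : Type*) {V : Type*} [Field F] [AddCommGroup V] [Module F V]
    (D : AddMonoid.End V) (m : ℕ) : Submodule F (V → V) :=
  span F ((fun j : ℕ => fun y : V => (D ^ j) y) '' Set.Iio m)

theorem pow_mem_lowerOps (D : AddMonoid.End V) {j m : ℕ} (h : j < m) :
    (fun y : V => (D ^ j) y) ∈ lowerOps F D m :=
  subset_span ⟨j, h, rfl⟩

theorem lowerOps_mono (D : AddMonoid.End V) {k m : ℕ} (h : k ≤ m) :
    lowerOps F D k ≤ lowerOps F D m :=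
  span_mono (Set.image_mono (Set.Iio_subset_Iio h))

theorem comp_mem_lowerOps (D : AddMonoid.End V) {m : ℕ} {T : V → V} (hT : T ∈ lowerOps F D m) :
    (fun y => T (D y)) ∈ lowerOps F D (m + 1) := by
  induction hT using span_induction with
  | mem T hT =>
    obtain ⟨j, hj, rfl⟩ := hT
    have : (fun y : V => (D ^ j) (D y)) = fun y => (D ^ (j + 1)) y := by
      funext y; rw [pow_succ]; rfl
    simp only [this]
    exact pow_mem_lowerOps D (Nat.succ_lt_succ hj)
  | zero => exact zero_mem _
  | add S T _ _ hS hT => exact add_mem hS hT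
  | smul a T _ hT => exact smul_mem _ a hT

/-- The two leading terms of the Leibniz formula for `Dᵐ⁺¹ (x y)`. -/
theorem leibniz (der : F → F) (D : AddMonoid.End V)
    (hD : ∀ (f : F) (y : V), D (f • y) = f • D y + der f • y) (m : ℕ) (x : F) :
    ∃ T ∈ lowerOps F D m, ∀ y, (D ^ (m + 1)) (x • y) =
      x • (D ^ (m + 1)) y + (((m + 1 : ℕ) : F) * der x) • (D ^ m) y + T y := by
  induction m generalizing x with
  | zero => exact ⟨0, zero_mem _, fun y => by simp [hD]⟩
  | succ m ih =>
    obtain ⟨T, hT, h⟩ := ih x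
    obtain ⟨S, hS, h'⟩ := ih (der x)
    refine ⟨(fun y => T (D y)) + ((((m + 1 : ℕ) : F) * der (der x)) • (fun y => (D ^ m) y) + S),
      add_mem (comp_mem_lowerOps D hT) (add_mem (smul_mem _ _ (pow_mem_lowerOps D (by omega)))
        (lowerOps_mono D (by omega) hS)), fun y => ?_⟩
    have e : ∀ (j : ℕ) (z : V), (D ^ (j + 1)) z = (D ^ j) (D z) := fun j z => by
      rw [pow_succ]; rfl
    rw [e (m + 1) (x • y), hD, map_add, h, h', e (m + 1) y, e m y]
    simp only [Pi.add_apply, Pi.smul_apply]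
    push_cast
    module

/-- Commuting with multiplication by `x` lowers the order of an operator. -/
theorem commutator_mem_lowerOps (der : F → F) (D : AddMonoid.End V)
    (hD : ∀ (f : F) (y : V), D (f • y) = f • D y + der f • y) (m : ℕ) (x : F) {T : V → V}
    (hT : T ∈ lowerOps F D (m + 1)) :
    (fun y => T (x • y) - x • T y) ∈ lowerOps F D m := by
  induction hT using span_induction with
  | mem T hT =>
    obtain ⟨j, hj, rfl⟩ := hT
    rcases j with _ | j
    · convert zero_mem (lowerOps F D m) using 1
      funext y; simp
    · obtain ⟨S, hS, h⟩ := leibniz der D hD j x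
      have hj' : j < m := Nat.lt_of_succ_lt_succ hj
      convert add_mem (smul_mem _ (((j + 1 : ℕ) : F) * der x) (pow_mem_lowerOps (F := F) D hj'))
        (lowerOps_mono D hj'.le hS) using 1
      funext y
      simp only [h, Pi.add_apply, Pi.smul_apply]
      abel
  | zero => convert zero_mem (lowerOps F D m) using 1; funext y; simp
  | add S T _ _ hS hT =>
    convert add_mem hS hT using 1
    funext y; simp only [Pi.add_apply, smul_add]; abel
  | smul a T _ hT =>
    convert smul_mem _ a hT using 1
    funext y; simp only [Pi.smul_apply, smul_sub, smul_comm x a]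

/-- A subspace containing all values of a differential operator with nonzero leading coefficient is
the whole space. -/
theorem mem_of_operator_mem [CharZero F] (der : F → F) (D : AddMonoid.End V)
    (hD : ∀ (f : F) (y : V), D (f • y) = f • D y + der f • y) (x : F) (hx : der x ≠ 0)
    (W : Submodule F V) (m : ℕ) (c : F) (hc : c ≠ 0) (T : V → V) (hT : T ∈ lowerOps F D m)
    (h : ∀ y, c • (D ^ m) y + T y ∈ W) (y : V) : y ∈ W := by
  induction m generalizing c T with
  | zero =>
    have hT0 : T = 0 := by simpa [lowerOps] using hT
    have := h y
    simp only [hT0, pow_zero, AddMonoid.End.coe_one, id, Pi.zero_apply, add_zero] at this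
    exact (W.smul_mem_iff hc).1 this
  | succ m ih =>
    obtain ⟨S, hS, hl⟩ := leibniz der D hD m x
    refine ih (c * (((m + 1 : ℕ) : F) * der x))
      (mul_ne_zero hc (mul_ne_zero (Nat.cast_ne_zero.2 m.succ_ne_zero) hx))
      (c • S + fun y => T (x • y) - x • T y)
      (add_mem (smul_mem _ c hS) (commutator_mem_lowerOps der D hD m x hT)) fun z => ?_
    convert W.sub_mem (h (x • z)) (W.smul_mem x (h z)) using 1
    rw [hl]
    simp only [Pi.add_apply, Pi.smul_apply]
    module

end Operators

/-- Linear independence of `p` persists along the line `p + k q` for all but finitely many scalars,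
hence for some positive integer `k`. -/
theorem exists_nat_linearIndependent {F V : Type*} [Field F] [CharZero F] [AddCommGroup V]
    [Module F V] {k : ℕ} (p q : Fin k → V) (hp : LinearIndependent F p) :
    ∃ l : ℕ, l ≠ 0 ∧ LinearIndependent F (fun i => p i + (l : F) • q i) := by
  obtain ⟨P, hP⟩ := LinearMap.exists_leftInverse_of_injective (Fintype.linearCombination F p)
    (LinearMap.ker_eq_bot.2 hp.fintypeLinearCombination_injective)
  have hPp : ∀ i, P (p i) = Pi.single i 1 := fun i => by
    have := LinearMap.congr_fun hP (Pi.single i 1)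
    simpa [Fintype.linearCombination_apply_single] using this
  -- After applying the left inverse `P` of `p`, the determinant along the line is `det (1 + k N)`.
  let N : Matrix (Fin k) (Fin k) F := Matrix.of fun i => P (q i)
  have hne : Polynomial.X * (-N).charpolyRev ≠ 0 := by
    refine mul_ne_zero Polynomial.X_ne_zero fun h0 => ?_
    have := Matrix.eval_charpolyRev (M := -N)
    simp [h0] at this
  obtain ⟨l, hl⟩ : ∃ l : ℕ, ¬ (Polynomial.X * (-N).charpolyRev).IsRoot (l : F) := by
    by_contra! hcon
    refine hne (Polynomial.eq_zero_of_infinite_isRoot _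
      ((Set.infinite_range_of_injective (Nat.cast_injective (R := F))).mono ?_))
    rintro _ ⟨l, rfl⟩
    exact hcon l
  rw [Polynomial.IsRoot, Polynomial.eval_mul, Polynomial.eval_X, mul_eq_zero, not_or] at hl
  refine ⟨l, fun h => hl.1 (by simp [h]), ?_⟩
  have hdet : (1 + (l : F) • N).det ≠ 0 := by
    convert hl.2 using 1
    rw [Matrix.charpolyRev, ← Polynomial.coe_evalRingHom, RingHom.map_det]
    congr 1
    ext i j
    simp [Matrix.one_apply, apply_ite]
    exact mul_comm _ _
  have hrows : LinearIndependent F (1 + (l : F) • N).row :=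
    Matrix.linearIndependent_rows_iff_isUnit.2
      ((Matrix.isUnit_iff_isUnit_det _).2 (isUnit_iff_ne_zero.2 hdet))
  refine LinearIndependent.of_comp P ?_
  have hcomp : (P ∘ fun i => p i + (l : F) • q i) = (1 + (l : F) • N).row := by
    funext i j
    have h1 : (Pi.single i (1 : F) : Fin k → F) j = (1 : Matrix (Fin k) (Fin k) F) i j := by
      rw [Matrix.one_apply, Pi.single_apply]
      exact if_congr eq_comm rfl rfl
    simp only [Function.comp_apply, map_add, map_smul, hPp, Pi.add_apply, h1]
    rfl
  rw [hcomp]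
  exact hrows

/-- The cyclic vector theorem. -/
theorem exists_cyclic {F V : Type*} [Field F] [CharZero F] [AddCommGroup V] [Module F V]
    [FiniteDimensional F V] (der : F → F) (D : AddMonoid.End V)
    (hD : ∀ (f : F) (y : V), D (f • y) = f • D y + der f • y) (x : F) (hx : der x ≠ 0) :
    ∃ v : V, LinearIndependent F (fun i : Fin (Module.finrank F V) => (D ^ (i : ℕ)) v) := by
  classical
  let Q : ℕ → Prop := fun m => ∃ v : V, LinearIndependent F (fun i : Fin m => (D ^ (i : ℕ)) v)
  have hQ0 : Q 0 := ⟨0, linearIndependent_empty_type⟩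
  set n := Module.finrank F V with hn
  set m := Nat.findGreatest Q n with hm
  have hQm : Q m := Nat.findGreatest_spec (Nat.zero_le n) hQ0
  have hmn : m ≤ n := Nat.findGreatest_le n
  rcases hmn.eq_or_lt with h | hlt
  · rw [h] at hQm; exact hQm
  exfalso
  have hQs : ¬ Q (m + 1) := Nat.findGreatest_is_greatest (Nat.lt_succ_self m) hlt
  have snoc_eq : ∀ v : V, (fun i : Fin (m + 1) => (D ^ (i : ℕ)) v) =
      Fin.snoc (α := fun _ => V) (fun i : Fin m => (D ^ (i : ℕ)) v) ((D ^ m) v) := by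
    intro v
    funext i
    refine Fin.lastCases ?_ (fun i => ?_) i <;> simp
  obtain ⟨v, hv⟩ := hQm
  set W := span F (Set.range fun i : Fin m => (D ^ (i : ℕ)) v) with hW
  have hmem : (D ^ m) v ∈ W := by
    by_contra hnot
    exact hQs ⟨v, by rw [snoc_eq]; exact linearIndependent_finSnoc.2 ⟨hv, hnot⟩⟩
  obtain ⟨a, ha⟩ := (mem_span_range_iff_exists_fun F).1 hmem
  obtain ⟨y, hy⟩ : ∃ y, (D ^ m) y - ∑ i, a i • (D ^ (i : ℕ)) y ∉ W := by
    by_contra! hcon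
    have htop : W = ⊤ := by
      refine eq_top_iff.2 fun z _ => mem_of_operator_mem der D hD x hx W m 1 one_ne_zero
        (-∑ i : Fin m, a i • fun y => (D ^ (i : ℕ)) y)
        (neg_mem (sum_mem fun i _ => smul_mem _ _ (pow_mem_lowerOps D i.2))) (fun y => ?_) z
      simpa [sub_eq_add_neg] using hcon y
    have := finrank_span_eq_card hv
    rw [← hW, htop, finrank_top, Fintype.card_fin] at this
    omega
  set z := (D ^ m) y - ∑ i, a i • (D ^ (i : ℕ)) y with hz
  obtain ⟨l, hl0, hl⟩ := exists_nat_linearIndependent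
    (Fin.snoc (α := fun _ => V) (fun i : Fin m => (D ^ (i : ℕ)) v) z)
    (Fin.snoc (α := fun _ => V) (fun i : Fin m => (D ^ (i : ℕ)) y) 0)
    (linearIndependent_finSnoc.2 ⟨hv, hy⟩)
  have hu : ∀ j : ℕ, (D ^ j) (v + l • y) = (D ^ j) v + (l : F) • (D ^ j) y := fun j => by
    rw [map_add, map_nsmul, Nat.cast_smul_eq_nsmul]
  have hfam : (fun i : Fin (m + 1) =>
      (Fin.snoc (α := fun _ => V) (fun i : Fin m => (D ^ (i : ℕ)) v) z : Fin (m + 1) → V) i +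
      (l : F) • (Fin.snoc (α := fun _ => V) (fun i : Fin m => (D ^ (i : ℕ)) y) 0 :
        Fin (m + 1) → V) i) =
      Fin.snoc (α := fun _ => V) (fun i : Fin m => (D ^ (i : ℕ)) (v + l • y)) z := by
    funext i
    refine Fin.lastCases ?_ (fun i => ?_) i <;> simp [hu, -map_add]
  rw [hfam, linearIndependent_finSnoc] at hl
  refine hQs ⟨v + l • y, ?_⟩
  rw [snoc_eq, linearIndependent_finSnoc]
  refine ⟨hl.1, fun hin => hl.2 ?_⟩
  have hlz : (l : F) • z = (D ^ m) (v + l • y) - ∑ i, a i • (D ^ (i : ℕ)) (v + l • y) := by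
    simp only [hu, smul_add, Finset.sum_add_distrib, ha, hz, smul_sub, Finset.smul_sum,
      smul_comm (l : F)]
    abel
  refine (smul_mem_iff _ (Nat.cast_ne_zero.2 hl0 : (l : F) ≠ 0)).1 ?_
  rw [hlz]
  exact sub_mem hin (sum_mem fun i _ => smul_mem _ _ (subset_span ⟨i, rfl⟩))

end CyclicVector

/-- **Frobenius normal form / non-degenerate oper form for `GLₙ`.**
Let `F` be a differential field of characteristic zero whose derivation `der` is not
identically zero, `n ≥ 1`, and `A ∈ Mₙ(F)`. Then there are `g ∈ GLₙ(F)` and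
`c₁, …, cₙ ∈ F` such that `B := g⁻¹·A·g + g⁻¹·(der g)` is the companion-type matrix:
`B_{i+1,i} = 1` for `1 ≤ i ≤ n-1`, `B_{i,n} = cᵢ`, and all other entries zero.
(Indices below are 0-based: the subdiagonal entries are `B i j` with `i = j + 1`,
and the last column is `j = n - 1`.) -/
theorem gauge_to_companion_form
    {F : Type*} [Field F] [CharZero F]
    (der : F → F)
    (hadd : ∀ x y : F, der (x + y) = der x + der y)
    (hmul : ∀ x y : F, der (x * y) = x * der y + der x * y)
    (hne : der ≠ 0)
    (n : ℕ) (hn : 1 ≤ n)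
    (A : Matrix (Fin n) (Fin n) F) :
    ∃ (g : Matrix (Fin n) (Fin n) F) (c : Fin n → F),
      IsUnit g.det ∧
      ∀ i j : Fin n,
        (g⁻¹ * A * g + g⁻¹ * g.map der) i j =
          if (i : ℕ) = (j : ℕ) + 1 then 1
          else if (j : ℕ) = n - 1 then c i
          else 0 := by
  obtain ⟨x, hx⟩ : ∃ x, der x ≠ 0 := by
    by_contra! h
    exact hne (funext h)
  have h0 : der 0 = 0 := by simpa using hadd 0 0
  -- The connection `v ↦ A v + ∂v`.
  let D : AddMonoid.End (Fin n → F) :=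
    { toFun := fun v => A.mulVec v + fun i => der (v i)
      map_zero' := by
        funext i
        simp [h0]
      map_add' := fun v w => by
        funext i
        simp only [Matrix.mulVec_add, Pi.add_apply, hadd]
        ring }
  have hDapp : ∀ v i, D v i = A.mulVec v i + der (v i) := fun _ _ => rfl
  have hD : ∀ (f : F) (y : Fin n → F), D (f • y) = f • D y + der f • y := fun f y => by
    funext i
    simp only [hDapp, Matrix.mulVec_smul, Pi.add_apply, Pi.smul_apply, smul_eq_mul, hmul]
    ring
  obtain ⟨v, hv⟩ := CyclicVector.exists_cyclic der D hD x hx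
  rw [Module.finrank_fin_fun] at hv
  let g : Matrix (Fin n) (Fin n) F := Matrix.of fun i j => (D ^ (j : ℕ)) v i
  have hg : IsUnit g.det := (Matrix.isUnit_iff_isUnit_det _).1
    (Matrix.linearIndependent_cols_iff_isUnit.1 hv)
  refine ⟨g, fun i => (g⁻¹ * A * g + g⁻¹ * g.map der) i ⟨n - 1, by omega⟩, hg, fun i j => ?_⟩
  by_cases hj : (j : ℕ) = n - 1
  · rw [if_neg (by omega), if_pos hj]
    have hjl : j = ⟨n - 1, by omega⟩ := Fin.ext hj
    exact congrArg _ hjl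
  · rw [if_neg hj]
    have hj1 : (j : ℕ) + 1 < n := by omega
    -- Column `j` of `A g + ∂g` is `D` of column `j` of `g`, that is, column `j + 1` of `g`.
    have hcol : ∀ k, (A * g + g.map der) k j = g k ⟨j + 1, hj1⟩ := fun k => by
      have : (D ^ ((j : ℕ) + 1)) v = D ((D ^ (j : ℕ)) v) := by
        rw [pow_succ']
        rfl
      simp only [g, Matrix.of_apply, this, hDapp]
      rfl
    have : (g⁻¹ * A * g + g⁻¹ * g.map der) i j = (g⁻¹ * g) i ⟨j + 1, hj1⟩ := by
      rw [Matrix.mul_assoc, ← Matrix.mul_add, Matrix.mul_apply, Matrix.mul_apply]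
      simp only [hcol]
    rw [this, Matrix.nonsing_inv_mul _ hg, Matrix.one_apply]
    simp only [Fin.ext_iff]
end

section
/- Let k be an algebraically closed field of characteristic zero and K = k((t)). Let N ∈ Mₙ(k) be strictly upper triangular with all superdiagonal entries N_{i,i+1} nonzero (a regular nilpotent element of the standard Borel subalgebra of glₙ), and let C ∈ Mₙ(k) satisfy C_{n,1} ≠ 0. Set A = t⁻²·N + t⁻¹·C ∈ Mₙ(K). Then the connection (Kⁿ, D_A) is irreducible: the only K-subspaces W ⊆ Kⁿ with D_A(W) ⊆ W are 0 and Kⁿ. -/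
/-!
Grade `Kⁿ` by giving `tᵐ eᵢ` (with `0 ≤ i < n`) the degree `n m - i`. Every integer is the degree
of exactly one monomial `tᵐ eᵢ`, so `Kⁿ` carries an order function that behaves like the one of
`k((s))` with `sⁿ = t`: multiplication by `f ∈ Kˣ` shifts it by `n · ord f`
(`HasOrd.smul`).

If `n ≥ 2`, the operator `P = t² D_A = t² ∂ + N + t C` raises the order of every nonzero vector by
exactly one (`HasOrd.step`): the superdiagonal of `N` (sending `eⱼ` to `eⱼ₋₁`) and the corner entry
of `t C` (sending `e₀` to `t eₙ₋₁`) have degree `1` and act on monomials by nonzero scalars, while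
`t² ∂`, which has degree `n`, and all other entries have degree at least `2`.

Hence for a nonzero `w` in an invariant subspace `W` the vectors `w, P w, …, Pⁿ⁻¹ w ∈ W` have
orders in pairwise distinct classes modulo `n`, so they are linearly independent over `K`
(`linearIndependent_of_hasOrd`) and `W = Kⁿ`. For `n = 1` only the vector `w` is needed.
-/

/-- `v ∈ Kⁿ` has order `d` for the grading in which `tᵐ eᵢ` has degree `n m - i`: all coefficients
in degrees below `d` vanish and the one in degree `d` does not. -/
def HasOrd {k : Type*} [Field k] {n : ℕ} (v : Fin n → LaurentSeries k) (d : ℤ) : Prop :=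
  (∀ (m : ℤ) (i : Fin n), (n : ℤ) * m - (i : ℕ) < d → (v i).coeff m = 0) ∧
    ∃ (m : ℤ) (i : Fin n), (n : ℤ) * m - (i : ℕ) = d ∧ (v i).coeff m ≠ 0

theorem exists_hasOrd {k : Type*} [Field k] {n : ℕ} (v : Fin n → LaurentSeries k) (hv : v ≠ 0) :
    ∃ d, HasOrd v d := by
  classical
  obtain ⟨B, hB⟩ : ∃ B : ℤ, ∀ i, B ≤ (v i).order := by
    obtain ⟨B, hB⟩ := (Set.finite_range fun i => (v i).order).bddBelow
    exact ⟨B, fun i => hB ⟨i, rfl⟩⟩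
  obtain ⟨i₀, hi₀⟩ : ∃ i, v i ≠ 0 := by
    by_contra! h
    exact hv (funext h)
  obtain ⟨d, ⟨m, i, hd, hne⟩, hmin⟩ := Int.exists_least_of_bdd
    (P := fun d => ∃ (m : ℤ) (i : Fin n), (n : ℤ) * m - (i : ℕ) = d ∧ (v i).coeff m ≠ 0)
    ⟨n * B - n, by
      rintro z ⟨m, i, rfl, hne⟩
      have h1 : B ≤ m := (hB i).trans (HahnSeries.order_le_of_coeff_ne_zero hne)
      have h2 : (n : ℤ) * B ≤ n * m := mul_le_mul_of_nonneg_left h1 (by positivity)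
      have := i.2
      omega⟩
    ⟨_, (v i₀).order, i₀, rfl, HahnSeries.coeff_order_eq_zero.not.mpr hi₀⟩
  refine ⟨d, fun m' i' hlt => ?_, m, i, hd, hne⟩
  by_contra h
  exact absurd (hmin _ ⟨m', i', rfl, h⟩) (not_le.mpr hlt)

theorem laurent_coeff_mul_eq_zero {k : Type*} [Field k] (f g : LaurentSeries k) (a b m : ℤ)
    (hf : ∀ p < a, f.coeff p = 0) (hg : ∀ p < b, g.coeff p = 0) (hm : m < a + b) :
    (f * g).coeff m = 0 := by
  rw [HahnSeries.coeff_mul]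
  refine Finset.sum_eq_zero fun x hx => ?_
  rw [Finset.mem_antidiagonal] at hx
  rcases lt_or_ge x.1 a with h | h
  · rw [hf _ h, zero_mul]
  · rw [hg x.2 (by omega), mul_zero]

theorem laurent_coeff_mul_add {k : Type*} [Field k] (f g : LaurentSeries k) (a b : ℤ)
    (hf : ∀ p < a, f.coeff p = 0) (hg : ∀ p < b, g.coeff p = 0) :
    (f * g).coeff (a + b) = f.coeff a * g.coeff b := by
  rw [HahnSeries.coeff_mul]
  rw [Finset.sum_eq_single (a, b)]
  · rintro ⟨p, q⟩ hx hne
    rw [Finset.mem_antidiagonal] at hx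
    simp only at hx ⊢
    rcases lt_trichotomy p a with h | h | h
    · rw [hf _ h, zero_mul]
    · exact absurd (Prod.ext h (by simp only; omega)) hne
    · rw [hg q (by omega), mul_zero]
  · intro hx
    rw [Finset.mem_antidiagonal] at hx
    simp only [HahnSeries.mem_support, and_true] at hx
    by_contra h
    exact hx ⟨left_ne_zero_of_mul h, right_ne_zero_of_mul h⟩

theorem HasOrd.smul {k : Type*} [Field k] {n : ℕ} {v : Fin n → LaurentSeries k} {d : ℤ}
    (hv : HasOrd v d) {f : LaurentSeries k} (hf : f ≠ 0) :
    HasOrd (f • v) (n * f.order + d) := by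
  have hlow : ∀ p < f.order, f.coeff p = 0 := fun p hp => HahnSeries.coeff_eq_zero_of_lt_order hp
  obtain ⟨h0, m, i, hd, hne⟩ := hv
  constructor
  · intro m' i' hlt
    refine laurent_coeff_mul_eq_zero f (v i') f.order (m' - f.order + 1) m' hlow
      (fun p hp => h0 p i' ?_) (by omega)
    have : (n : ℤ) * p ≤ n * (m' - f.order) := mul_le_mul_of_nonneg_left (by omega) (by positivity)
    rw [mul_sub] at this
    omega
  · refine ⟨f.order + m, i, by rw [mul_add]; omega, ?_⟩
    have hg : ∀ p < m, (v i).coeff p = 0 := fun p hp => h0 p i (by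
      have : (n : ℤ) * p < n * m := mul_lt_mul_of_pos_left hp (by have := i.2; omega)
      omega)
    rw [Pi.smul_apply, smul_eq_mul, laurent_coeff_mul_add f (v i) _ _ hlow hg]
    exact mul_ne_zero (HahnSeries.coeff_order_eq_zero.not.mpr hf) hne

/-- The orders `n · ord f + d + i` of the nonzero terms of a combination of the `u i` are distinct
modulo `n`, so the term of least order cannot be cancelled. -/
theorem linearIndependent_of_hasOrd {k : Type*} [Field k] {n : ℕ}
    (u : Fin n → Fin n → LaurentSeries k) (d : ℤ) (hu : ∀ i, HasOrd (u i) (d + (i : ℕ))) :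
    LinearIndependent (LaurentSeries k) u := by
  classical
  rw [Fintype.linearIndependent_iff]
  intro g hg
  by_contra! hne
  obtain ⟨i₁, hi₁⟩ := hne
  obtain ⟨i, hi, hmin⟩ := Finset.exists_min_image (Finset.univ.filter fun i => g i ≠ 0)
    (fun i => (n : ℤ) * (g i).order + (d + (i : ℕ))) ⟨i₁, by simp [hi₁]⟩
  simp only [Finset.mem_filter, Finset.mem_univ, true_and] at hi hmin
  obtain ⟨-, m, l, hd, hcoeff⟩ := (hu i).smul hi
  have hsum := congrArg (fun x : Fin n → LaurentSeries k => (x l).coeff m) hg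
  simp only [Finset.sum_apply, HahnSeries.coeff_sum, Pi.zero_apply, HahnSeries.coeff_zero] at hsum
  rw [Finset.sum_eq_single i] at hsum
  · exact hcoeff hsum
  · intro j _ hji
    by_cases hj : g j = 0
    · simp [hj]
    · refine ((hu j).smul hj).1 m l ?_
      rw [hd]
      refine lt_of_le_of_ne (hmin j hj) fun heq => hji ?_
      have h1 : (n : ℤ) ∣ (j : ℕ) - (i : ℕ) :=
        ⟨(g i).order - (g j).order, by rw [mul_sub]; omega⟩
      have h2 := Int.eq_zero_of_abs_lt_dvd h1 (by
        have := i.2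
        have := j.2
        rw [abs_lt]; constructor <;> omega)
      exact Fin.ext (by omega)
  · simp

/-- Coefficients of `t² D_A v = t² ∂v + N v + t C v`. -/
theorem coeff_step {k : Type*} [Field k]
    (der : LaurentSeries k → LaurentSeries k)
    (hder : ∀ (f : LaurentSeries k) (m : ℤ), (der f).coeff m = (m + 1) • f.coeff (m + 1))
    {n : ℕ} (N C : Matrix (Fin n) (Fin n) k) (A : Matrix (Fin n) (Fin n) (LaurentSeries k))
    (hA : ∀ i j : Fin n,
      A i j = HahnSeries.single (-2 : ℤ) (N i j) + HahnSeries.single (-1 : ℤ) (C i j))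
    (v : Fin n → LaurentSeries k) (i : Fin n) (m : ℤ) :
    (((HahnSeries.single (2 : ℤ) (1 : k) : LaurentSeries k) •
      ((fun j => der (v j)) + A.mulVec v)) i).coeff m =
      (m - 1) • (v i).coeff (m - 1) +
        ∑ j, (N i j * (v j).coeff m + C i j * (v j).coeff (m - 1)) := by
  have hs : ∀ (a : ℤ) (r : k) (x : LaurentSeries k) (p : ℤ),
      (HahnSeries.single a r * x).coeff p = r * x.coeff (p - a) := by
    intro a r x p
    have := HahnSeries.coeff_single_mul_add (r := r) (x := x) (a := p - a) (b := a)
    rwa [sub_add_cancel] at this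
  rw [Pi.smul_apply, smul_eq_mul, hs, one_mul, Pi.add_apply, HahnSeries.coeff_add, hder,
    Matrix.mulVec, dotProduct, HahnSeries.coeff_sum]
  congr 1
  · rw [show m - 2 + 1 = m - 1 by ring]
  · refine Finset.sum_congr rfl fun j _ => ?_
    rw [hA, add_mul, HahnSeries.coeff_add, hs, hs]
    congr 3 <;> ring_nf

theorem HasOrd.step {k : Type*} [Field k]
    (der : LaurentSeries k → LaurentSeries k)
    (hder : ∀ (f : LaurentSeries k) (m : ℤ), (der f).coeff m = (m + 1) • f.coeff (m + 1))
    {n : ℕ} (hn : 2 ≤ n) (N C : Matrix (Fin n) (Fin n) k)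
    (hNtri : ∀ i j : Fin n, (j : ℕ) ≤ (i : ℕ) → N i j = 0)
    (hNsup : ∀ i j : Fin n, (j : ℕ) = (i : ℕ) + 1 → N i j ≠ 0)
    (hC : ∀ i j : Fin n, (i : ℕ) = n - 1 → (j : ℕ) = 0 → C i j ≠ 0)
    (A : Matrix (Fin n) (Fin n) (LaurentSeries k))
    (hA : ∀ i j : Fin n,
      A i j = HahnSeries.single (-2 : ℤ) (N i j) + HahnSeries.single (-1 : ℤ) (C i j))
    {v : Fin n → LaurentSeries k} {d : ℤ} (hv : HasOrd v d) :
    HasOrd ((HahnSeries.single (2 : ℤ) (1 : k) : LaurentSeries k) •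
      ((fun j => der (v j)) + A.mulVec v)) (d + 1) := by
  obtain ⟨h0, m₀, j₀, hd, hne⟩ := hv
  -- Contributions of `t² ∂`, of `N` off the superdiagonal and of `t C` off the corner have too
  -- high a degree to be seen in degrees at most `d + 1`.
  have hT : ∀ (m : ℤ) (i : Fin n), (n : ℤ) * m - (i : ℕ) ≤ d + 1 → (v i).coeff (m - 1) = 0 :=
    fun m i h => h0 _ _ (by rw [mul_sub]; omega)
  have hNz : ∀ (m : ℤ) (i j : Fin n), (n : ℤ) * m - (i : ℕ) ≤ d + 1 →
      ((n : ℤ) * m - (i : ℕ) = d + 1 → (j : ℕ) ≠ i + 1) → N i j * (v j).coeff m = 0 := by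
    intro m i j h hj
    rcases le_or_gt (j : ℕ) i with hle | hlt
    · rw [hNtri i j hle, zero_mul]
    · rw [h0 m j (by omega), mul_zero]
  have hCz : ∀ (m : ℤ) (i j : Fin n), (n : ℤ) * m - (i : ℕ) ≤ d + 1 →
      ((n : ℤ) * m - (i : ℕ) = d + 1 → ¬ ((i : ℕ) = n - 1 ∧ (j : ℕ) = 0)) →
      C i j * (v j).coeff (m - 1) = 0 := by
    intro m i j h hj
    have := i.2
    rw [h0 (m - 1) j (by rw [mul_sub]; omega), mul_zero]
  constructor
  · intro m i hlt
    rw [coeff_step der hder N C A hA, hT m i hlt.le, smul_zero, zero_add]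
    refine Finset.sum_eq_zero fun j _ => ?_
    rw [hNz m i j hlt.le (by omega), hCz m i j hlt.le (by omega), add_zero]
  · have hj₀ := j₀.2
    rcases Nat.eq_zero_or_pos (j₀ : ℕ) with hz | hpos
    · -- `tᵐ e₀` is sent to `tᵐ⁺¹ eₙ₋₁` by the corner entry of `t C`.
      let i : Fin n := ⟨n - 1, by omega⟩
      have hi : (i : ℕ) = n - 1 := rfl
      have hdeg : (n : ℤ) * (m₀ + 1) - (i : ℕ) = d + 1 := by rw [mul_add]; omega
      refine ⟨m₀ + 1, i, hdeg, ?_⟩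
      rw [coeff_step der hder N C A hA, hT _ i hdeg.le, smul_zero, zero_add,
        Finset.sum_eq_single j₀]
      · rw [hNz _ i j₀ hdeg.le (by omega), zero_add, add_sub_cancel_right]
        exact mul_ne_zero (hC i j₀ hi hz) hne
      · intro j _ hj
        have hj' : (j : ℕ) ≠ j₀ := fun h => hj (Fin.ext h)
        have := j.2
        rw [hNz _ i j hdeg.le (by omega), hCz _ i j hdeg.le (by omega), add_zero]
      · simp
    · let i : Fin n := ⟨j₀ - 1, by omega⟩
      have hi : (i : ℕ) = j₀ - 1 := rfl
      have hdeg : (n : ℤ) * m₀ - (i : ℕ) = d + 1 := by omega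
      refine ⟨m₀, i, hdeg, ?_⟩
      rw [coeff_step der hder N C A hA, hT _ i hdeg.le, smul_zero, zero_add,
        Finset.sum_eq_single j₀]
      · rw [hCz _ i j₀ hdeg.le (by omega), add_zero]
        exact mul_ne_zero (hNsup i j₀ (by omega)) hne
      · intro j _ hj
        have hj' : (j : ℕ) ≠ j₀ := fun h => hj (Fin.ext h)
        rw [hNz _ i j hdeg.le (by omega), hCz _ i j hdeg.le (by omega), add_zero]
      · simp

/-- **Irreducibility of the Frenkel–Gross type connection.**
Let `k` be an algebraically closed field of characteristic zero, `K = k((t))`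
with derivation `der = d/dt` (characterized on coefficients by
`(der f).coeff m = (m+1) • f.coeff (m+1)`). Let `N ∈ Mₙ(k)` be strictly upper
triangular with all superdiagonal entries nonzero, and let `C ∈ Mₙ(k)` satisfy
`C_{n,1} ≠ 0`. Set `A = t⁻²·N + t⁻¹·C ∈ Mₙ(K)`. Then the connection `(Kⁿ, D_A)`,
`D_A v = der v + A·v`, is irreducible: its only invariant `K`-subspaces are
`0` and `Kⁿ`. -/
theorem frenkel_gross_connection_irreducible
    {k : Type*} [Field k] [IsAlgClosed k] [CharZero k]
    (der : LaurentSeries k → LaurentSeries k)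
    (hder : ∀ (f : LaurentSeries k) (m : ℤ), (der f).coeff m = (m + 1) • f.coeff (m + 1))
    (n : ℕ)
    (N C : Matrix (Fin n) (Fin n) k)
    (hNtri : ∀ i j : Fin n, (j : ℕ) ≤ (i : ℕ) → N i j = 0)
    (hNsup : ∀ i j : Fin n, (j : ℕ) = (i : ℕ) + 1 → N i j ≠ 0)
    (hC : ∀ i j : Fin n, (i : ℕ) = n - 1 → (j : ℕ) = 0 → C i j ≠ 0)
    (A : Matrix (Fin n) (Fin n) (LaurentSeries k))
    (hA : ∀ i j : Fin n,
      A i j = HahnSeries.single (-2 : ℤ) (N i j) + HahnSeries.single (-1 : ℤ) (C i j)) :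
    ∀ W : Submodule (LaurentSeries k) (Fin n → LaurentSeries k),
      (∀ w ∈ W, ((fun j => der (w j)) + A.mulVec w) ∈ W) → W = ⊥ ∨ W = ⊤ := by
  intro W hW
  refine or_iff_not_imp_left.mpr fun hbot => ?_
  obtain ⟨w, hwW, hw⟩ := W.exists_mem_ne_zero_of_ne_bot hbot
  obtain ⟨d, hd⟩ := exists_hasOrd w hw
  let P : (Fin n → LaurentSeries k) → (Fin n → LaurentSeries k) := fun v =>
    (HahnSeries.single (2 : ℤ) (1 : k) : LaurentSeries k) • ((fun j => der (v j)) + A.mulVec v)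
  have hmem : ∀ i : ℕ, P^[i] w ∈ W := by
    intro i
    induction i with
    | zero => exact hwW
    | succ i ih =>
      rw [Function.iterate_succ_apply']
      exact W.smul_mem _ (hW _ ih)
  have hord : ∀ i : ℕ, i < n → HasOrd (P^[i] w) (d + i) := by
    intro i
    induction i with
    | zero => intro _; simpa using hd
    | succ i ih =>
      intro hi
      rw [Function.iterate_succ_apply', Nat.cast_succ, ← add_assoc]
      -- `i + 1 < n` forces `n ≥ 2`, so that `P` raises the order by one.
      exact HasOrd.step der hder (by omega) N C hNtri hNsup hC A hA (ih (by omega))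
  have hli := linearIndependent_of_hasOrd (fun i : Fin n => P^[i] w) d fun i => hord i i.2
  have htop := hli.span_eq_top_of_card_eq_finrank' (by simp)
  rw [eq_top_iff, ← htop, Submodule.span_le]
  rintro _ ⟨i, rfl⟩
  exact hmem i
end

section
/- Let k be a field and n ≥ 1. Every g ∈ GLₙ(k((t))) can be factored as g = b·h, where b ∈ GLₙ(k((t))) is upper triangular and h ∈ GLₙ(k[[t]]), i.e. both h and h⁻¹ have entries in the power series ring k[[t]] (Iwasawa decomposition of GLₙ over the formal punctured disk). -/
/-!
The ring `R = k[[t]]` is a valuation ring with fraction field `K = k((t))`, and this is all that the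
factorization uses. Given a nonzero row over `K`, dividing by an entry of largest valuation turns
it into a row over `R` with some entry `1`; such a row is the last row of a matrix in `GL(R)`
(`exists_unit_row`). Multiplying on the right by the inverse of that matrix therefore clears all but
the last entry of the row. Clearing the last row of `g` in this way and recursing on the upper
left block gives `u ∈ GLₙ(R)` with `g * u` upper triangular (`exists_mul_upper`); then
`b = g * u` and `h = u⁻¹`.
-/

/-- Every row over the fraction field is a multiple of an integral row with some entry `1`. -/
lemma exists_normalized_row {R K : Type*} [CommRing R] [IsDomain R] [ValuationRing R] [Field K]
    [Algebra R K] [IsFractionRing R K] {n : ℕ} (x : Fin (n + 1) → K) :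
    ∃ (p : Fin (n + 1)) (c : K) (r : Fin (n + 1) → R), r p = 1 ∧
      ∀ j, x j = c * algebraMap R K (r j) := by
  obtain ⟨p, hp⟩ := Finite.exists_max fun j => ValuationRing.valuation R K (x j)
  by_cases h0 : x p = 0
  · refine ⟨p, 0, 1, rfl, fun j => ?_⟩
    have := hp j
    simp only [h0, map_zero] at this
    simpa using this
  · have key : ∀ j, ∃ a : R, algebraMap R K a = x j / x p := fun j => by
      rw [← ValuationRing.mem_integer_iff, Valuation.mem_integer_iff, map_div₀]
      exact div_le_one_of_le₀ (hp j) zero_le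
    choose r hr using key
    refine ⟨p, x p, r, ?_, fun j => ?_⟩
    · apply IsFractionRing.injective R K
      rw [hr, div_self h0, map_one]
    · rw [hr, mul_div_cancel₀ _ h0]

/-- A row with an entry `1` is the last row of an invertible matrix. -/
lemma exists_unit_row {R : Type*} [CommRing R] {n : ℕ} (r : Fin (n + 1) → R) (p : Fin (n + 1))
    (hp : r p = 1) :
    ∃ w : Matrix (Fin (n + 1)) (Fin (n + 1)) R, IsUnit w.det ∧ w (Fin.last n) = r := by
  -- Put `r` into row `p` of the identity, then swap rows `p` and `last`.
  refine ⟨((1 : Matrix (Fin (n + 1)) (Fin (n + 1)) R).updateRow p r).submatrix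
    (Equiv.swap p (Fin.last n)) id, ?_, ?_⟩
  · rw [Matrix.det_permute]
    have : ((1 : Matrix (Fin (n + 1)) (Fin (n + 1)) R).updateRow p r).det = 1 := by
      rw [← Matrix.cramer_transpose_apply]
      simp [hp]
    rw [this, mul_one]
    exact (Equiv.Perm.sign (Equiv.swap p (Fin.last n))).isUnit.map (Int.castRingHom R)
  · ext j
    simp

/-- Column operations over a valuation ring make any square matrix over its fraction field
upper triangular. -/
lemma exists_mul_upper {R K : Type*} [CommRing R] [IsDomain R] [ValuationRing R] [Field K]
    [Algebra R K] [IsFractionRing R K] (n : ℕ) (g : Matrix (Fin n) (Fin n) K) :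
    ∃ u : Matrix (Fin n) (Fin n) R, IsUnit u.det ∧
      ∀ i j : Fin n, j < i → (g * u.map (algebraMap R K)) i j = 0 := by
  induction n with
  | zero => exact ⟨1, by simp, fun i => i.elim0⟩
  | succ n ih =>
    obtain ⟨p, c, r, hp, hx⟩ := exists_normalized_row (R := R) (g (Fin.last n))
    obtain ⟨w, hw, hwr⟩ := exists_unit_row r p hp
    set g' := g * (w⁻¹).map (algebraMap R K) with hg'
    have hlast : ∀ j : Fin n, g' (Fin.last n) j.castSucc = 0 := fun j => by
      have h1 : g' (Fin.last n) j.castSucc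
          = c * algebraMap R K ((w * w⁻¹) (Fin.last n) j.castSucc) := by
        simp only [hg', Matrix.mul_apply, hx, hwr, Matrix.map_apply, map_sum, map_mul,
          Finset.mul_sum, mul_assoc]
      rw [h1, Matrix.mul_nonsing_inv _ hw, Matrix.one_apply_ne (Fin.castSucc_lt_last j).ne']
      simp
    obtain ⟨u, hu, hut⟩ := ih (g'.submatrix Fin.castSucc Fin.castSucc)
    let e : Fin n ⊕ Fin 1 ≃ Fin (n + 1) := finSumFinEquiv
    let U : Matrix (Fin (n + 1)) (Fin (n + 1)) R :=
      Matrix.reindex e e (Matrix.fromBlocks u 0 0 1)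
    have el : ∀ i : Fin n, e.symm i.castSucc = Sum.inl i := fun i => by
      rw [Equiv.symm_apply_eq]; rfl
    have er : e.symm (Fin.last n) = Sum.inr 0 := by
      rw [Equiv.symm_apply_eq]; rfl
    have hU1 : ∀ i j : Fin n, U i.castSucc j.castSucc = u i j := fun i j => by
      simp [U, el]
    have hU2 : ∀ j : Fin n, U (Fin.last n) j.castSucc = 0 := fun j => by
      simp [U, el, er]
    refine ⟨w⁻¹ * U, ?_, fun i j hij => ?_⟩
    · rw [Matrix.det_mul]
      refine (Matrix.isUnit_nonsing_inv_det _ hw).mul ?_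
      simpa [U] using hu
    · rw [Matrix.map_mul, ← Matrix.mul_assoc, ← hg', Matrix.mul_apply, Fin.sum_univ_castSucc]
      obtain ⟨j, rfl⟩ := Fin.exists_castSucc_eq.2 (hij.trans_le (Fin.le_last i)).ne
      simp only [Matrix.map_apply, hU1, hU2, map_zero, mul_zero, add_zero]
      induction i using Fin.lastCases with
      | last => simp [hlast]
      | cast i =>
        have := hut i j (by simpa using hij)
        simpa [Matrix.mul_apply] using this


/-- **Iwasawa decomposition of `GLₙ` over the formal punctured disk.**
Let `k` be a field and `n ≥ 1`. Every `g ∈ GLₙ(k((t)))` factors as `g = b·h`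
with `b` upper triangular and invertible, and `h ∈ GLₙ(k[[t]])`, i.e. `h` is
invertible and both `h` and `h⁻¹` have all entries lying in the power series
subring `k[[t]] ⊆ k((t))` (no coefficients in negative degrees). -/
theorem iwasawa_decomposition_laurent
    {k : Type*} [Field k]
    (n : ℕ) (hn : 1 ≤ n)
    (g : Matrix (Fin n) (Fin n) (LaurentSeries k))
    (hg : IsUnit g.det) :
    ∃ b h : Matrix (Fin n) (Fin n) (LaurentSeries k),
      IsUnit b.det ∧
      (∀ i j : Fin n, (j : ℕ) < (i : ℕ) → b i j = 0) ∧
      IsUnit h.det ∧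
      (∀ (i j : Fin n) (m : ℤ), m < 0 → (h i j).coeff m = 0) ∧
      (∀ (i j : Fin n) (m : ℤ), m < 0 → ((h⁻¹) i j).coeff m = 0) ∧
      g = b * h := by
  obtain ⟨u, hu, hut⟩ := exists_mul_upper (R := PowerSeries k) n g
  set φ := algebraMap (PowerSeries k) (LaurentSeries k)
  have hmul : u.map φ * (u⁻¹).map φ = 1 := by
    rw [← Matrix.map_mul, Matrix.mul_nonsing_inv _ hu, Matrix.map_one _ (map_zero _) (map_one _)]
  have hdet : (u.map φ).det * ((u⁻¹).map φ).det = 1 := by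
    rw [← Matrix.det_mul, hmul, Matrix.det_one]
  have hcoeff : ∀ (f : PowerSeries k) (m : ℤ), m < 0 → (φ f).coeff m = 0 := fun f m hm => by
    have := PowerSeries.coeff_coe (R := k) f m
    rwa [if_pos hm] at this
  refine ⟨g * u.map φ, (u⁻¹).map φ, ?_, fun i j hij => hut i j hij, ?_, fun i j => hcoeff _, ?_, ?_⟩
  · rw [Matrix.det_mul]
    exact hg.mul (IsUnit.of_mul_eq_one _ hdet)
  · exact IsUnit.of_mul_eq_one_right _ hdet
  · rw [Matrix.inv_eq_left_inv hmul]
    exact fun i j => hcoeff _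
  · rw [Matrix.mul_assoc, hmul, Matrix.mul_one]
end

section
/- Let k be an algebraically closed field of characteristic zero and A ∈ Mₙ(k((t))). Then there exists an integer N ≥ 0 such that for every integer j ≥ 0 and every Y ∈ t^{j+N}·Mₙ(k[[t]]) there exists X ∈ t^{j}·Mₙ(k[[t]]) with ∂X + A·X − X·A = Y. -/
/-!
Write `K = k((t))`, `D X = ∂X + AX − XA` and `∇ = t·D`, so that `∇` satisfies the Leibniz rule over
the Euler derivation `t∂`, and let `θ = −t∂` be the formal adjoint of `t∂`.

By bilinearity it suffices to solve `∇x = f·v` for a fixed matrix `v` and a varying `f ∈ K` with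
bounded loss of `t`-adic order (`solve_smul`). The matrices `v, ∇v, ∇²v, …` lie in a
finite-dimensional `K`-space, so they satisfy a nontrivial relation `∑ cᵢ ∇ⁱv = 0`. Multiply it by
`u ∈ K` and integrate by parts (`integrate_by_parts`): each `(cᵢu)·∇ⁱv` equals `θⁱ(cᵢu)·v` up to
`∇` of something whose order is bounded below in terms of the order of `u`. Hence `(Tu)·v` is in the
image of `∇`, where `T u = ∑ θⁱ(cᵢu)` is the adjoint scalar operator.

It remains to solve `Tu = f`. If `ν` is the least order of the `cᵢ`, then
`T(t^m) = Q(−(m+ν)) t^(m+ν) + ⋯` where `Q = ∑ cᵢ,ᵥ Xⁱ`, with `cᵢ,ᵥ` the coefficient of `t^ν` in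
`cᵢ`, is a nonzero polynomial. In characteristic zero `Q` has no root at `−(m+ν)` for large `m`, so
`u` is found coefficient by coefficient (`solve_triangular`).
-/

/-- The formal adjoint `−t·d/dt` of the Euler derivation on Laurent series. -/
noncomputable def eulerAdj {k : Type*} [Field k] (f : LaurentSeries k) : LaurentSeries k where
  coeff m := -(m : k) * f.coeff m
  isPWO_support' := f.isPWO_support.mono fun m hm h0 => hm (by simp [h0])

/-- `f ∈ t^m k[[t]]`. -/
def OrdGE {k : Type*} [Field k] (m : ℤ) (f : LaurentSeries k) : Prop :=
  ∀ a < m, f.coeff a = 0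

section

variable {k : Type*} [Field k]

theorem eulerAdj_coeff (f : LaurentSeries k) (m : ℤ) :
    (eulerAdj f).coeff m = -(m : k) * f.coeff m := rfl

theorem eulerAdj_iterate_coeff (i : ℕ) (f : LaurentSeries k) (m : ℤ) :
    (eulerAdj^[i] f).coeff m = (-(m : k)) ^ i * f.coeff m := by
  induction i with
  | zero => simp
  | succ i ih => rw [Function.iterate_succ_apply', eulerAdj_coeff, ih]; ring

theorem eulerAdj_mul (f g : LaurentSeries k) :
    eulerAdj (f * g) = eulerAdj f * g + f * eulerAdj g := by
  have support_le : ∀ h : LaurentSeries k, (eulerAdj h).support ⊆ h.support :=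
    fun h m hm h0 => hm (by rw [eulerAdj_coeff, h0, mul_zero])
  ext m
  rw [eulerAdj_coeff, HahnSeries.coeff_add, HahnSeries.coeff_mul,
    HahnSeries.coeff_mul_left' f.isPWO_support (support_le f),
    HahnSeries.coeff_mul_right' g.isPWO_support (support_le g), ← Finset.sum_add_distrib,
    Finset.mul_sum]
  refine Finset.sum_congr rfl fun p hp => ?_
  have hpm : p.1 + p.2 = m := (Finset.mem_antidiagonal.mp hp).2.2
  rw [eulerAdj_coeff, eulerAdj_coeff, ← hpm]
  push_cast
  ring

theorem OrdGE.mono {m m' : ℤ} {f : LaurentSeries k} (h : OrdGE m f) (hm : m' ≤ m) :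
    OrdGE m' f := fun a ha => h a (ha.trans_le hm)

theorem OrdGE.eulerAdj {m : ℤ} {f : LaurentSeries k} (h : OrdGE m f) : OrdGE m (eulerAdj f) :=
  fun a ha => by rw [eulerAdj_coeff, h a ha, mul_zero]

theorem OrdGE.mul {m m' : ℤ} {f g : LaurentSeries k} (hf : OrdGE m f) (hg : OrdGE m' g) :
    OrdGE (m + m') (f * g) := by
  intro a ha
  rw [HahnSeries.coeff_mul]
  refine Finset.sum_eq_zero fun p hp => ?_
  have hpm : p.1 + p.2 = a := (Finset.mem_antidiagonal.mp hp).2.2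
  rcases lt_or_ge p.1 m with h | h
  · rw [hf _ h, zero_mul]
  · rw [hg p.2 (by omega), mul_zero]

theorem OrdGE.coeff_mul {m m' : ℤ} {f g : LaurentSeries k} (hf : OrdGE m f) (hg : OrdGE m' g) :
    (f * g).coeff (m + m') = f.coeff m * g.coeff m' := by
  rw [HahnSeries.coeff_mul]
  refine Finset.sum_eq_single (m, m') (fun p hp hne => ?_) (fun hnot => ?_)
  · have hpm : p.1 + p.2 = m + m' := (Finset.mem_antidiagonal.mp hp).2.2
    rcases lt_or_ge p.1 m with h | h
    · rw [hf _ h, zero_mul]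
    · rcases lt_or_ge p.2 m' with h' | h'
      · rw [hg _ h', mul_zero]
      · exact absurd (Prod.ext (by simp; omega) (by simp; omega)) hne
  · by_contra h
    exact hnot (Finset.mem_antidiagonal.mpr
      ⟨left_ne_zero_of_mul h, right_ne_zero_of_mul h, rfl⟩)

theorem exists_ordGE (f : LaurentSeries k) : ∃ C : ℕ, OrdGE (-(C : ℤ)) f :=
  ⟨f.order.natAbs, fun _ ha => HahnSeries.coeff_eq_zero_of_lt_order (by omega)⟩

/-- An additive operator on `k((t))` sending `t^m` to `φ(m) t^(m+ν) + ⋯` maps `t^j k[[t]]` onto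
`t^(j+ν) k[[t]]` as soon as `φ` does not vanish on the integers `≥ j`. -/
theorem solve_triangular (T : LaurentSeries k → LaurentSeries k)
    (hadd : ∀ f g, T (f + g) = T f + T g) (ν : ℤ) (φ : ℤ → k)
    (hord : ∀ m f, OrdGE m f → OrdGE (m + ν) (T f))
    (hlead : ∀ m f, OrdGE m f → (T f).coeff (m + ν) = φ m * f.coeff m)
    (j : ℤ) (hφ : ∀ m, j ≤ m → φ m ≠ 0) (g : LaurentSeries k) (hg : OrdGE (j + ν) g) :
    ∃ u, OrdGE j u ∧ T u = g := by
  -- the coefficient of `t^(j+s)` of the solution, given the truncation `p` of the solution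
  let c : ℕ → LaurentSeries k → k := fun s p => (φ (j + s))⁻¹ * (g - T p).coeff (j + s + ν)
  let p : ℕ → LaurentSeries k :=
    fun s => Nat.rec 0 (fun s q => q + HahnSeries.single (j + (s : ℤ)) (c s q)) s
  have p_succ : ∀ s, p (s + 1) = p s + HahnSeries.single (j + (s : ℤ)) (c s (p s)) := fun _ => rfl
  have p_top : ∀ s : ℕ, ∀ q : ℤ, j + s ≤ q → (p s).coeff q = 0 := by
    intro s
    induction s with
    | zero => intro q _; rfl
    | succ s ih =>
      intro q hq
      push_cast at hq
      rw [p_succ, HahnSeries.coeff_add, ih q (by omega),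
        HahnSeries.coeff_single_of_ne (by omega), zero_add]
  let coeffs : ℤ → k := fun q => if q < j then 0 else c (q - j).toNat (p (q - j).toNat)
  have coeffs_low : ∀ q, q < j → coeffs q = 0 := fun q hq => if_pos hq
  have coeffs_add : ∀ s : ℕ, coeffs (j + s) = c s (p s) := by
    intro s
    have hs : (j + (s : ℤ) - j).toNat = s := by omega
    simp only [coeffs, hs]
    exact if_neg (by omega)
  let u : LaurentSeries k := HahnSeries.ofSuppBddBelow coeffs
    ⟨j, fun q hq => not_lt.mp fun h => hq (coeffs_low q h)⟩
  have u_coeff : ∀ q, u.coeff q = coeffs q := fun _ => rfl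
  have u_sub : ∀ s : ℕ, OrdGE (j + s) (u - p s) := by
    intro s
    induction s with
    | zero =>
      intro q hq
      rw [HahnSeries.coeff_sub, u_coeff, coeffs_low q (by simpa using hq)]
      simp [p]
    | succ s ih =>
      intro q hq
      push_cast at hq
      rw [p_succ, ← sub_sub, HahnSeries.coeff_sub]
      rcases eq_or_ne q (j + s) with rfl | hne
      · rw [HahnSeries.coeff_sub, u_coeff, coeffs_add, p_top s _ le_rfl,
          HahnSeries.coeff_single_same, sub_zero, sub_self]
      · rw [ih q (by omega), HahnSeries.coeff_single_of_ne hne, sub_zero]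
  have u_ord : OrdGE j u := fun q hq => coeffs_low q hq
  refine ⟨u, u_ord, ?_⟩
  ext q
  rcases lt_or_ge q (j + ν) with hq | hq
  · rw [hord j u u_ord q hq, hg q hq]
  · obtain ⟨s, rfl⟩ : ∃ s : ℕ, q = j + s + ν := ⟨(q - j - ν).toNat, by omega⟩
    have hsplit : T u = T (p s) + T (u - p s) := by rw [← hadd, add_sub_cancel]
    have hus : (u - p s).coeff (j + s) = c s (p s) := by
      rw [HahnSeries.coeff_sub, u_coeff, coeffs_add, p_top s _ le_rfl, sub_zero]
    rw [hsplit, HahnSeries.coeff_add, hlead _ _ (u_sub s), hus]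
    simp only [c]
    rw [mul_inv_cancel_left₀ (hφ _ (by omega)), HahnSeries.coeff_sub, add_sub_cancel]

/-- The adjoint operator `u ↦ ∑ θⁱ(cᵢu)` of a nonzero scalar differential operator is surjective
on `t`-adic neighbourhoods of zero, with constant shift `ν`, and the `cᵢ` have order `≥ ν`. -/
theorem solve_scalar [CharZero k] (s : Finset ℕ) (c : ℕ → LaurentSeries k)
    (hc : ∃ i ∈ s, c i ≠ 0) :
    ∃ ν n₀ : ℤ, (∀ i ∈ s, OrdGE ν (c i)) ∧
      ∀ j, n₀ ≤ j → ∀ g, OrdGE (j + ν) g →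
        ∃ u, OrdGE j u ∧ ∑ i ∈ s, eulerAdj^[i] (c i * u) = g := by
  classical
  obtain ⟨i₁, hi₁, hne₁⟩ := hc
  obtain ⟨i₀, hi₀, hmin⟩ := Finset.exists_min_image (s.filter fun i => c i ≠ 0)
    (fun i => (c i).order) ⟨i₁, Finset.mem_filter.mpr ⟨hi₁, hne₁⟩⟩
  obtain ⟨hi₀s, hne₀⟩ := Finset.mem_filter.mp hi₀
  set ν := (c i₀).order with hν
  have hcν : ∀ i ∈ s, OrdGE ν (c i) := by
    intro i hi a ha
    by_cases h0 : c i = 0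
    · simp [h0]
    · exact HahnSeries.coeff_eq_zero_of_lt_order
        (ha.trans_le (hmin i (Finset.mem_filter.mpr ⟨hi, h0⟩)))
  let Q : Polynomial k := ∑ i ∈ s, Polynomial.monomial i ((c i).coeff ν)
  have hQ : Q ≠ 0 := by
    intro h
    have : Q.coeff i₀ = (c i₀).coeff ν := by
      simp [Q, Polynomial.coeff_monomial, hi₀s]
    rw [h, Polynomial.coeff_zero] at this
    exact hne₀ (HahnSeries.coeff_order_eq_zero.mp this.symm)
  let φ : ℤ → k := fun m => Q.eval (-((m + ν : ℤ) : k))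
  -- `φ` has only finitely many integer zeros
  have hfin : {m : ℤ | φ m = 0}.Finite := by
    have hroots : {x : k | Q.IsRoot x}.Finite := Polynomial.finite_setOfPred_isRoot hQ
    refine Set.Finite.of_finite_image (f := fun m : ℤ => -((m + ν : ℤ) : k))
      (hroots.subset ?_) ?_
    · rintro _ ⟨m, hm, rfl⟩
      exact hm
    · intro a _ b _ hab
      have : a + ν = b + ν := by exact_mod_cast neg_injective hab
      omega
  obtain ⟨B, hB⟩ := hfin.bddAbove
  refine ⟨ν, B + 1, hcν, fun j hj g hg => ?_⟩
  refine solve_triangular (fun u => ∑ i ∈ s, eulerAdj^[i] (c i * u)) ?_ ν φ ?_ ?_ j ?_ g hg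
  · intro f g
    rw [← Finset.sum_add_distrib]
    refine Finset.sum_congr rfl fun i _ => ?_
    ext m
    simp only [HahnSeries.coeff_add, eulerAdj_iterate_coeff, mul_add]
  · intro m f hf a ha
    rw [HahnSeries.coeff_sum]
    refine Finset.sum_eq_zero fun i hi => ?_
    rw [eulerAdj_iterate_coeff, (hcν i hi).mul hf a (by omega), mul_zero]
  · intro m f hf
    rw [HahnSeries.coeff_sum]
    simp only [φ, Q, Polynomial.eval_finsetSum, Polynomial.eval_monomial]
    rw [Finset.sum_mul]
    refine Finset.sum_congr rfl fun i hi => ?_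
    rw [eulerAdj_iterate_coeff, add_comm m ν, (hcν i hi).coeff_mul hf]
    ring
  · intro m hm h0
    have : m ≤ B := hB h0
    omega

variable {n : ℕ}

theorem exists_ordGE_matrix (w : Matrix (Fin n) (Fin n) (LaurentSeries k)) :
    ∃ C : ℕ, ∀ i i', OrdGE (-(C : ℤ)) (w i i') := by
  choose C hC using fun p : Fin n × Fin n => exists_ordGE (w p.1 p.2)
  refine ⟨∑ p, C p, fun i i' => (hC (i, i')).mono ?_⟩
  have : C (i, i') ≤ ∑ p, C p := Finset.single_le_sum (fun _ _ => Nat.zero_le _) (Finset.mem_univ _)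
  omega

/-- Modulo the image of `D`, the matrix `h • Dⁱv` equals `θⁱh • v`, and the correction term has
order at least that of `h` up to a constant depending only on `v` and `i`. -/
theorem integrate_by_parts
    (D : Matrix (Fin n) (Fin n) (LaurentSeries k) →+ Matrix (Fin n) (Fin n) (LaurentSeries k))
    (hD : ∀ (f : LaurentSeries k) x, D (f • x) = f • D x - eulerAdj f • x)
    (v : Matrix (Fin n) (Fin n) (LaurentSeries k)) (i : ℕ) :
    ∃ C : ℕ, ∀ (m : ℤ) (h : LaurentSeries k), OrdGE (m + C) h →
      ∃ x, (∀ a b, OrdGE m (x a b)) ∧ h • D^[i] v = D x + eulerAdj^[i] h • v := by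
  induction i with
  | zero => exact ⟨0, fun m h _ => ⟨0, fun a b q _ => rfl, by simp⟩⟩
  | succ i ih =>
    obtain ⟨C, hC⟩ := ih
    obtain ⟨C', hC'⟩ := exists_ordGE_matrix (D^[i] v)
    refine ⟨C + C', fun m h hh => ?_⟩
    push_cast at hh
    obtain ⟨x, hx, hxeq⟩ := hC m (eulerAdj h) (hh.eulerAdj.mono (by omega))
    refine ⟨h • D^[i] v + x, fun a b q hq => ?_, ?_⟩
    · have := hh.mul (hC' a b) q (by omega)
      rw [Matrix.add_apply, Matrix.smul_apply, smul_eq_mul, HahnSeries.coeff_add, this,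
        hx a b q hq, add_zero]
    · rw [map_add, hD, Function.iterate_succ_apply', Function.iterate_succ_apply, hxeq]
      abel

/-- For fixed `v`, the equation `D x = f • v` is solvable with a loss of order independent of `f`:
apply `integrate_by_parts` to `u` times a linear relation among the `Dⁱv`, with `u` chosen by
`solve_scalar`. -/
theorem solve_smul [CharZero k]
    (D : Matrix (Fin n) (Fin n) (LaurentSeries k) →+ Matrix (Fin n) (Fin n) (LaurentSeries k))
    (hD : ∀ (f : LaurentSeries k) x, D (f • x) = f • D x - eulerAdj f • x)
    (v : Matrix (Fin n) (Fin n) (LaurentSeries k)) :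
    ∃ N : ℕ, ∀ (j : ℤ), 0 ≤ j → ∀ f : LaurentSeries k, OrdGE (j + N) f →
      ∃ x, (∀ a b, OrdGE j (x a b)) ∧ D x = f • v := by
  obtain ⟨s, c, hrel, hne⟩ := not_linearIndependent_iff.mp
    (Module.Finite.not_linearIndependent_of_infinite (R := LaurentSeries k) fun i : ℕ => D^[i] v)
  obtain ⟨ν, n₀, hν, hsolve⟩ := solve_scalar s c hne
  choose C hC using integrate_by_parts D hD v
  refine ⟨(n₀ + ν).toNat + ∑ i ∈ s, C i, fun j hj f hf => ?_⟩
  push_cast at hf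
  set S : ℕ := ∑ i ∈ s, C i with hS
  have hCS : ∀ i ∈ s, C i ≤ S := fun i hi => Finset.single_le_sum (fun _ _ => Nat.zero_le _) hi
  rw [← Nat.cast_sum, ← hS] at hf
  obtain ⟨u, hu, hTu⟩ := hsolve (j + ((n₀ + ν).toNat + S) - ν) (by omega) f (hf.mono (by omega))
  have hx : ∀ i, ∃ x, i ∈ s → (∀ a b, OrdGE j (x a b)) ∧
      (c i * u) • D^[i] v = D x + eulerAdj^[i] (c i * u) • v := by
    intro i
    by_cases hi : i ∈ s
    · have := hCS i hi
      obtain ⟨x, hx⟩ := hC i j (c i * u) (((hν i hi).mul hu).mono (by omega))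
      exact ⟨x, fun _ => hx⟩
    · exact ⟨0, fun h => absurd h hi⟩
  choose x hx using hx
  refine ⟨-∑ i ∈ s, x i, fun a b q hq => ?_, ?_⟩
  · rw [Matrix.neg_apply, Matrix.sum_apply, HahnSeries.coeff_neg, HahnSeries.coeff_sum,
      Finset.sum_eq_zero fun i hi => (hx i hi).1 a b q hq, neg_zero]
  · have h0 : ∑ i ∈ s, (c i * u) • D^[i] v = 0 := by
      have := congrArg (u • ·) hrel
      simpa only [Finset.smul_sum, smul_smul, smul_zero, mul_comm u] using this
    rw [Finset.sum_congr rfl fun i hi => (hx i hi).2, Finset.sum_add_distrib, ← map_sum,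
      ← Finset.sum_smul, hTu] at h0
    rw [map_neg]
    exact neg_eq_of_add_eq_zero_right h0

end

/-- **Solvability of `ad(∇)X = Y` with bounded loss.**
Let `k` be an algebraically closed field of characteristic zero and
`A ∈ Mₙ(k((t)))`, with `der = d/dt` on `k((t))` (characterized on coefficients).
Then there is `N ≥ 0` such that for every `j ≥ 0` and every
`Y ∈ t^{j+N}·Mₙ(k[[t]])` there exists `X ∈ t^{j}·Mₙ(k[[t]])` with
`der X + A·X − X·A = Y`. (Membership in `t^r·Mₙ(k[[t]])` is expressed by the
vanishing of all coefficients in degrees `< r`.) -/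
theorem ad_nabla_solvable_with_loss
    {k : Type*} [Field k] [IsAlgClosed k] [CharZero k]
    (der : LaurentSeries k → LaurentSeries k)
    (hder : ∀ (f : LaurentSeries k) (m : ℤ), (der f).coeff m = (m + 1) • f.coeff (m + 1))
    (n : ℕ)
    (A : Matrix (Fin n) (Fin n) (LaurentSeries k)) :
    ∃ N : ℕ,
      ∀ (j : ℕ) (Y : Matrix (Fin n) (Fin n) (LaurentSeries k)),
        (∀ (i i' : Fin n) (m : ℤ), m < (j : ℤ) + (N : ℤ) → (Y i i').coeff m = 0) →
        ∃ X : Matrix (Fin n) (Fin n) (LaurentSeries k),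
          (∀ (i i' : Fin n) (m : ℤ), m < (j : ℤ) → (X i i').coeff m = 0) ∧
          X.map der + A * X - X * A = Y := by
  classical
  let t : LaurentSeries k := HahnSeries.single 1 1
  have ht : t ≠ 0 := HahnSeries.single_ne_zero one_ne_zero
  have t_mul_der : ∀ f, t * der f = -eulerAdj f := by
    intro f
    ext m
    simp [t, HahnSeries.coeff_single_mul, hder, eulerAdj_coeff]
  have der_add : ∀ f g, der (f + g) = der f + der g := by
    intro f g
    ext m
    simp only [HahnSeries.coeff_add, hder, smul_add]
  -- `D` is `t` times the operator of the theorem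
  let D : Matrix (Fin n) (Fin n) (LaurentSeries k) →+ Matrix (Fin n) (Fin n) (LaurentSeries k) :=
    AddMonoidHom.mk' (fun X => t • (X.map der + A * X - X * A)) fun X Z => by
      rw [Matrix.map_add der der_add, mul_add, add_mul, ← smul_add]
      congr 1
      abel
  have D_apply : ∀ X, D X = t • (X.map der + A * X - X * A) := fun _ => rfl
  have hD : ∀ (f : LaurentSeries k) X, D (f • X) = f • D X - eulerAdj f • X := by
    intro f X
    have hmap : t • (f • X).map der = f • t • X.map der - eulerAdj f • X := by
      ext1 a b
      simp only [Matrix.smul_apply, Matrix.map_apply, Matrix.sub_apply, smul_eq_mul, t_mul_der,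
        eulerAdj_mul]
      ring
    rw [D_apply, D_apply, Matrix.mul_smul, Matrix.smul_mul, smul_sub, smul_add, hmap, smul_sub,
      smul_add, smul_sub, smul_add, smul_comm t f (A * X), smul_comm t f (X * A)]
    abel
  choose N hN using fun p : Fin n × Fin n =>
    solve_smul D hD (Matrix.single p.1 p.2 (1 : LaurentSeries k))
  refine ⟨∑ p, N p, fun j Y hY => ?_⟩
  have hx : ∀ p : Fin n × Fin n, ∃ x : Matrix (Fin n) (Fin n) (LaurentSeries k),
      (∀ a b, OrdGE (j : ℤ) (x a b)) ∧
        D x = (t * Y p.1 p.2) • Matrix.single p.1 p.2 (1 : LaurentSeries k) := by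
    intro p
    have hle : N p ≤ ∑ p, N p :=
      Finset.single_le_sum (fun _ _ => Nat.zero_le _) (Finset.mem_univ _)
    refine hN p j (by omega) _ fun q hq => ?_
    rw [HahnSeries.coeff_single_mul, hY p.1 p.2 (q - 1) (by omega), mul_zero]
  choose x hxord hxeq using hx
  refine ⟨∑ p, x p, fun a b q hq => ?_, ?_⟩
  · rw [Matrix.sum_apply, HahnSeries.coeff_sum]
    exact Finset.sum_eq_zero fun p _ => hxord p a b q hq
  · have hsum : D (∑ p, x p) = t • Y := by
      rw [map_sum, Finset.sum_congr rfl fun p _ => hxeq p]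
      conv_rhs => rw [Matrix.matrix_eq_sum_single Y]
      rw [Fintype.sum_prod_type, Finset.smul_sum]
      refine Finset.sum_congr rfl fun a _ => ?_
      rw [Finset.smul_sum]
      refine Finset.sum_congr rfl fun b _ => ?_
      rw [Matrix.smul_single, Matrix.smul_single, smul_eq_mul, smul_eq_mul, mul_one]
    rw [D_apply] at hsum
    exact smul_right_injective _ ht hsum
end

section
/- Let k be an algebraically closed field of characteristic zero and A ∈ Mₙ(k((t))). Then there exists an integer m ≥ 0 such that every A' ∈ Mₙ(k((t))) with A' − A ∈ t^{m}·Mₙ(k[[t]]) is gauge equivalent to A; moreover the gauge transformation can be taken in GLₙ(k[[t]]). In other words, gauge equivalence classes of connection matrices over k((t)) are open in the t-adic topology. -/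
/-!
Writing `A' = A + B` and `g = 1 + h`, the gauge equation becomes `D h + B h = -B`, where
`D h = ∂h + A h - h A` is the connection induced on endomorphisms. The point is that `D` is
*boundedly surjective* (`conn_surj`): there is `c` such that for all `l ≥ c` every element of
`t^l Mₙ(k[[t]])` is `D h` for some `h ∈ t^(l-c) Mₙ(k[[t]])`. If `B ∈ t^(c+1) Mₙ(k[[t]])`, then
`h ↦ B h` is a small perturbation of `D`, so by successive approximation
(`exists_preimage_of_approx`) `D + B` is boundedly surjective as well, and the equation has a
solution `h ∈ t Mₙ(k[[t]])`; such a `1 + h` is invertible over `k[[t]]`, again by approximation.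

For the bounded surjectivity it suffices to solve `D h = y v` for `v` a fixed elementary matrix and
`y` a scalar. By finite dimensionality there is a nontrivial relation `∑ aᵢ Dⁱ v = 0` over `k((t))`.
Since `u aᵢ Dⁱ v ≡ (-∂)ⁱ(u aᵢ) v` modulo the image of `D` (`by_parts`), the relation multiplied by
`u` shows that `L(u) v` is in the image of `D`, where `L(u) = ∑ (-∂)ⁱ(aᵢ u)`. The scalar operator
`L` is boundedly surjective (`adjOp_surj`): `L(t^(l-d)) = p(l) t^l + ⋯` for a fixed integer `d` and
a nonzero polynomial `p`, and in characteristic zero `p(l) ≠ 0` for all large integers `l`.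
-/

namespace GaugeOpen

/-! ### Successive approximation in complete filtered groups -/

/-- In a complete separated filtered group, a bounded additive map that hits every `y ∈ F l`
(`l ≥ l₀`) up to an error in `F (l + 1)`, from `F (l - c)`, hits it exactly from `F (l - c)`. -/
theorem exists_preimage_of_approx {M : Type*} [AddCommGroup M] (F : ℤ → AddSubgroup M)
    (hanti : Antitone F)
    (hsep : ∀ x, (∀ N : ℕ, x ∈ F N) → x = 0)
    (hcomplete : ∀ (l : ℤ) (x : ℕ → M), (∀ i : ℕ, x i ∈ F (l + i)) →
      ∃ s ∈ F l, ∀ N : ℕ, s - ∑ i ∈ Finset.range N, x i ∈ F (l + N))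
    (P : M →+ M) (c c' l₀ : ℤ)
    (hbdd : ∀ l, ∀ x ∈ F l, P x ∈ F (l - c'))
    (happ : ∀ l ≥ l₀, ∀ y ∈ F l, ∃ x ∈ F (l - c), y - P x ∈ F (l + 1)) :
    ∀ l ≥ l₀, ∀ y ∈ F l, ∃ x ∈ F (l - c), P x = y := by
  intro l hl y hy
  have happ' : ∀ (l : ℤ) (y : M), ∃ x, l ≥ l₀ → y ∈ F l →
      x ∈ F (l - c) ∧ y - P x ∈ F (l + 1) := by
    intro l y
    by_cases h : l ≥ l₀ ∧ y ∈ F l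
    · obtain ⟨x, hx⟩ := happ l h.1 y h.2
      exact ⟨x, fun _ _ => hx⟩
    · exact ⟨0, fun h1 h2 => absurd ⟨h1, h2⟩ h⟩
  choose X hX using happ'
  -- `r i` is the part of `y` still to be hit after `i` corrections.
  let r : ℕ → M := fun i => Nat.rec y (fun i z => z - P (X (l + i) z)) i
  have hr : ∀ i, r (i + 1) = r i - P (X (l + i) (r i)) := fun i => rfl
  have hrF : ∀ i : ℕ, r i ∈ F (l + i) := by
    intro i
    induction i with
    | zero => simpa [r] using hy
    | succ i ih =>
      rw [hr]
      have := (hX (l + i) (r i) (by omega) ih).2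
      rwa [show l + ((i + 1 : ℕ) : ℤ) = l + i + 1 by push_cast; ring]
  let x : ℕ → M := fun i => X (l + i) (r i)
  have hx : ∀ i : ℕ, x i ∈ F (l - c + i) := by
    intro i
    have := (hX (l + i) (r i) (by omega) (hrF i)).1
    rwa [show l - c + (i : ℤ) = l + i - c by ring]
  have hsum : ∀ N : ℕ, y - P (∑ i ∈ Finset.range N, x i) = r N := by
    intro N
    induction N with
    | zero => simp [r]
    | succ N ih => rw [Finset.sum_range_succ, map_add, hr, ← sub_sub, ih]
  obtain ⟨s, hs, hsN⟩ := hcomplete (l - c) x hx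
  refine ⟨s, hs, ?_⟩
  have : y - P s = 0 := by
    apply hsep
    intro N
    obtain ⟨n, hn⟩ : ∃ n : ℕ, (N : ℤ) ≤ l + n ∧ (N : ℤ) ≤ l - c + n - c' :=
      ⟨(max (N - l) (N - l + c + c')).toNat, by omega, by omega⟩
    have e : y - P s = r n - P (s - ∑ i ∈ Finset.range n, x i) := by
      rw [← hsum, map_sub]; abel
    rw [e]
    exact sub_mem (hanti hn.1 (hrF n)) (hanti hn.2 (hbdd _ _ (hsN n)))
  exact (sub_eq_zero.mp this).symm

/-! ### The `t`-adic filtration of Laurent series -/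

variable {k : Type*} [Field k]

/-- The fractional ideal `t^l k[[t]]` of `k((t))`. -/
def fil (l : ℤ) : AddSubgroup (LaurentSeries k) where
  carrier := {f | ∀ j < l, f.coeff j = 0}
  zero_mem' := fun j _ => by simp
  add_mem' := fun {a b} ha hb j hj => by simp [ha j hj, hb j hj]
  neg_mem' := fun {a} ha j hj => by simp [ha j hj]

theorem mem_fil {l : ℤ} {f : LaurentSeries k} : f ∈ fil l ↔ ∀ j < l, f.coeff j = 0 := Iff.rfl

theorem fil_anti : Antitone (fil (k := k)) := fun _ _ h _ hf j hj => hf j (hj.trans_le h)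

theorem exists_mem_fil (f : LaurentSeries k) : ∃ l, f ∈ fil l :=
  ⟨f.order, fun _ hj => HahnSeries.coeff_eq_zero_of_lt_order hj⟩

theorem mul_mem_fil {a b : ℤ} {f g : LaurentSeries k} (hf : f ∈ fil a) (hg : g ∈ fil b) :
    f * g ∈ fil (a + b) := by
  intro j hj
  rw [HahnSeries.coeff_mul]
  refine Finset.sum_eq_zero fun p hp => ?_
  have h := (Finset.mem_antidiagonal.mp hp).2.2
  rcases lt_or_ge p.1 a with h1 | h1
  · rw [hf _ h1, zero_mul]
  · rw [hg p.2 (by omega), mul_zero]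

theorem fil_sep (x : LaurentSeries k) (h : ∀ N : ℕ, x ∈ fil N) : x = 0 := by
  ext j
  exact h (j.toNat + 1) j (by omega)

theorem fil_complete (l : ℤ) (x : ℕ → LaurentSeries k) (hx : ∀ i : ℕ, x i ∈ fil (l + i)) :
    ∃ s ∈ fil l, ∀ N : ℕ, s - ∑ i ∈ Finset.range N, x i ∈ fil (l + N) := by
  let c : ℤ → k := fun j => ∑ i ∈ Finset.range ((j - l).toNat + 1), (x i).coeff j
  have hc : ∀ j < l, c j = 0 := fun j hj => Finset.sum_eq_zero fun i _ => hx i j (by omega)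
  let s : LaurentSeries k := HahnSeries.ofSuppBddBelow c
    ⟨l, fun j hj => not_lt.mp fun h => hj (hc j h)⟩
  have hs : ∀ j, s.coeff j = c j := fun j => rfl
  refine ⟨s, fun j hj => by rw [hs, hc j hj], fun N j hj => ?_⟩
  rw [HahnSeries.coeff_sub, hs, HahnSeries.coeff_sum, sub_eq_zero]
  rcases le_total ((j - l).toNat + 1) N with h | h
  · refine Finset.sum_subset (by simpa using h) fun i _ hi => hx i j ?_
    simp at hi; omega
  · refine (Finset.sum_subset (by simpa using h) fun i _ hi => hx i j ?_).symm
    simp at hi; omega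


theorem fil_preimage (P : LaurentSeries k →+ LaurentSeries k) (c c' l₀ : ℤ)
    (hbdd : ∀ l, ∀ x ∈ fil l, P x ∈ fil (l - c'))
    (happ : ∀ l ≥ l₀, ∀ y ∈ fil l, ∃ x ∈ fil (l - c), y - P x ∈ fil (l + 1)) :
    ∀ l ≥ l₀, ∀ y ∈ fil l, ∃ x ∈ fil (l - c), P x = y := by
  have H := exists_preimage_of_approx (M := LaurentSeries k) fil fil_anti fil_sep fil_complete
  exact H P c c' l₀ hbdd happ

/-! ### The derivation -/

theorem der_mem_fil {δ : AddMonoid.End (LaurentSeries k)}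
    (hδ : ∀ f m, (δ f).coeff m = (m + 1) • f.coeff (m + 1))
    {l : ℤ} {f : LaurentSeries k} (hf : f ∈ fil l) : δ f ∈ fil (l - 1) := by
  intro j hj
  rw [hδ, hf _ (by omega), smul_zero]

/-- The Euler operator `t · d/dt`. -/
def euler (f : LaurentSeries k) : LaurentSeries k where
  coeff m := m • f.coeff m
  isPWO_support' := f.isPWO_support.mono fun m hm h => hm (by simp [h])

/-- The Leibniz rule is simplest for `t · d/dt`, which does not enlarge supports, so that all three
products are sums over the same antidiagonal. -/
theorem euler_mul (f g : LaurentSeries k) : euler (f * g) = euler f * g + f * euler g := by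
  ext m
  have hs : ∀ f : LaurentSeries k, (euler f).support ⊆ f.support := by
    intro f m hm h
    exact hm (show m • f.coeff m = 0 by rw [h, smul_zero])
  rw [HahnSeries.coeff_add, HahnSeries.coeff_mul_left' f.isPWO_support (hs f),
    HahnSeries.coeff_mul_right' g.isPWO_support (hs g), ← Finset.sum_add_distrib]
  change m • (f * g).coeff m = _
  rw [HahnSeries.coeff_mul, Finset.smul_sum]
  refine Finset.sum_congr rfl fun p hp => ?_
  have h := (Finset.mem_antidiagonal.mp hp).2.2
  change m • (f.coeff p.1 * g.coeff p.2) =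
    (p.1 • f.coeff p.1) * g.coeff p.2 + f.coeff p.1 * (p.2 • g.coeff p.2)
  rw [← h]
  simp only [zsmul_eq_mul, Int.cast_add]
  ring

theorem der_mul {δ : AddMonoid.End (LaurentSeries k)}
    (hδ : ∀ f m, (δ f).coeff m = (m + 1) • f.coeff (m + 1)) (f g : LaurentSeries k) :
    δ (f * g) = δ f * g + f * δ g := by
  have e : ∀ f, δ f = euler f * HahnSeries.single (-1) 1 := by
    intro f
    ext m
    have := HahnSeries.coeff_mul_single_add (r := (1 : k)) (x := euler f) (a := m + 1) (b := -1)
    rw [add_neg_cancel_right, mul_one] at this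
    rw [this, hδ]
    rfl
  simp only [e, euler_mul]
  ring

/-! ### Scalar differential operators -/

open Polynomial in
/-- The polynomial `∏_{q<i} -(X + q + 1)`, whose value at `m` is the factor by which `(-d/dt)^i`
multiplies the coefficient of `t^(m+i)` on its way to `t^m`. -/
noncomputable def fallPoly (k : Type*) [Field k] (i : ℕ) : k[X] :=
  ∏ q ∈ Finset.range i, (-(X + C ((q : k) + 1)))

theorem coeff_neg_der_pow {δ : AddMonoid.End (LaurentSeries k)}
    (hδ : ∀ f m, (δ f).coeff m = (m + 1) • f.coeff (m + 1)) (i : ℕ) (f : LaurentSeries k) (m : ℤ) :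
    (((-δ) ^ i) f).coeff m = (fallPoly k i).eval (m : k) * f.coeff (m + i) := by
  induction i generalizing f with
  | zero => simp [fallPoly]
  | succ i ih =>
    rw [pow_succ]
    change (((-δ) ^ i) (-(δ f))).coeff m = _
    rw [ih, HahnSeries.coeff_neg, hδ, fallPoly, fallPoly, Finset.prod_range_succ, Polynomial.eval_mul]
    simp only [Polynomial.eval_neg, Polynomial.eval_add, Polynomial.eval_X, Polynomial.eval_C,
      zsmul_eq_mul]
    push_cast
    rw [← add_assoc m]
    ring

/-- The polynomials `fallPoly k i` are linearly independent: at `-(p + 1)` those with `i > p`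
vanish and the one with `i = p` does not. -/
theorem sum_fallPoly_ne_zero [CharZero k] (s : Finset ℕ) (b : ℕ → k) (h : ∃ i ∈ s, b i ≠ 0) :
    ∑ i ∈ s, Polynomial.C (b i) * fallPoly k i ≠ 0 := by
  classical
  intro h0
  obtain ⟨hp, hmin⟩ := And.intro (Nat.find_spec h) (fun m => Nat.find_min h (m := m))
  set p := Nat.find h
  have := congrArg (Polynomial.eval (-((p : k) + 1))) h0
  rw [Polynomial.eval_finsetSum, Polynomial.eval_zero, Finset.sum_eq_single p] at this
  · simp only [fallPoly, Polynomial.eval_mul, Polynomial.eval_C, Polynomial.eval_prod,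
      Polynomial.eval_neg, Polynomial.eval_add, Polynomial.eval_X, mul_eq_zero,
      Finset.prod_eq_zero_iff, Finset.mem_range] at this
    rcases this with h1 | ⟨q, hq, h1⟩
    · exact hp.2 h1
    · have : (q : k) = p := by linear_combination -h1
      exact hq.ne (Nat.cast_injective this)
  · intro i hi hip
    rcases lt_or_gt_of_ne hip with hlt | hgt
    · have : b i = 0 := by
        by_contra hb
        exact hmin i hlt ⟨hi, hb⟩
      simp [this]
    · rw [Polynomial.eval_mul, fallPoly, Polynomial.eval_prod,
        Finset.prod_eq_zero (Finset.mem_range.mpr hgt) (by simp), mul_zero]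
  · exact fun hn => absurd hp.1 hn

/-- The scalar differential operator `u ↦ ∑_{i ∈ s} (-d/dt)^i (a_i u)`. -/
noncomputable def adjOp (δ : AddMonoid.End (LaurentSeries k)) (s : Finset ℕ)
    (a : ℕ → LaurentSeries k) : LaurentSeries k →+ LaurentSeries k :=
  AddMonoidHom.mk' (fun u => ∑ i ∈ s, ((-δ) ^ i) (a i * u)) fun x y => by
    simp only [mul_add, map_add, Finset.sum_add_distrib]

theorem adjOp_apply (δ : AddMonoid.End (LaurentSeries k)) (s : Finset ℕ)
    (a : ℕ → LaurentSeries k) (u : LaurentSeries k) :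
    adjOp δ s a u = ∑ i ∈ s, ((-δ) ^ i) (a i * u) := rfl

/-- The coefficient polynomial: `adjOp` sends `t^e` to `∑_m indPoly (m - e) (m) t^m`. -/
noncomputable def indPoly (s : Finset ℕ) (a : ℕ → LaurentSeries k) (j : ℤ) : Polynomial k :=
  ∑ i ∈ s, Polynomial.C ((a i).coeff (j + i)) * fallPoly k i

theorem coeff_adjOp_single {δ : AddMonoid.End (LaurentSeries k)}
    (hδ : ∀ f m, (δ f).coeff m = (m + 1) • f.coeff (m + 1)) (s : Finset ℕ)
    (a : ℕ → LaurentSeries k) (e m : ℤ) (c : k) :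
    (adjOp δ s a (HahnSeries.single e c)).coeff m = (indPoly s a (m - e)).eval (m : k) * c := by
  rw [adjOp_apply, HahnSeries.coeff_sum, indPoly, Polynomial.eval_finsetSum, Finset.sum_mul]
  refine Finset.sum_congr rfl fun i _ => ?_
  rw [coeff_neg_der_pow hδ, show m + (i : ℤ) = (m - e + i) + e by ring,
    HahnSeries.coeff_mul_single_add, Polynomial.eval_mul, Polynomial.eval_C]
  ring

theorem exists_common_fil (s : Finset ℕ) (a : ℕ → LaurentSeries k) :
    ∃ e, ∀ i ∈ s, a i ∈ fil (e + i) := by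
  classical
  choose o ho using fun i => exists_mem_fil (a i)
  induction s using Finset.induction_on with
  | empty => exact ⟨0, by simp⟩
  | insert j s hj ih =>
    obtain ⟨e, he⟩ := ih
    refine ⟨min e (o j - j), fun i hi => ?_⟩
    rcases Finset.mem_insert.mp hi with rfl | hi
    · exact fil_anti (by omega) (ho i)
    · exact fil_anti (by omega) (he i hi)

theorem exists_forall_eval_ne_zero [CharZero k] {p : Polynomial k} (hp : p ≠ 0) :
    ∃ l₀ : ℤ, ∀ l ≥ l₀, p.eval (l : k) ≠ 0 := by
  have hfin : {l : ℤ | p.eval (l : k) = 0}.Finite :=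
    (Polynomial.finite_setOfPred_isRoot hp).preimage Int.cast_injective.injOn
  obtain ⟨B, hB⟩ := hfin.bddAbove
  refine ⟨B + 1, fun l hl h => ?_⟩
  have := hB h
  omega

theorem exists_least_indPoly [CharZero k] (s : Finset ℕ) (a : ℕ → LaurentSeries k) (e : ℤ)
    (he : ∀ i ∈ s, a i ∈ fil (e + i)) (ha : ∃ i ∈ s, a i ≠ 0) :
    ∃ d, indPoly s a d ≠ 0 ∧ ∀ j, indPoly s a j ≠ 0 → d ≤ j := by
  apply Int.exists_least_of_bdd
  · refine ⟨e, fun j hj => ?_⟩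
    by_contra hlt
    refine hj (Finset.sum_eq_zero fun i hi => ?_)
    rw [he i hi _ (by omega), Polynomial.C_0, zero_mul]
  · obtain ⟨i, hi, hai⟩ := ha
    refine ⟨(a i).order - i, sum_fallPoly_ne_zero s (fun q => (a q).coeff _) ⟨i, hi, ?_⟩⟩
    simp only [sub_add_cancel]
    exact HahnSeries.coeff_order_eq_zero.not.mpr hai

theorem adjOp_mem_fil {δ : AddMonoid.End (LaurentSeries k)}
    (hδ : ∀ f m, (δ f).coeff m = (m + 1) • f.coeff (m + 1)) (s : Finset ℕ)
    (a : ℕ → LaurentSeries k) (e : ℤ) (he : ∀ i ∈ s, a i ∈ fil (e + i)) (l : ℤ)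
    (x : LaurentSeries k) (hx : x ∈ fil l) : adjOp δ s a x ∈ fil (l - -e) := by
  rw [adjOp_apply]
  refine sum_mem fun i hi => mem_fil.mpr fun j hj => ?_
  have h : (a i * x).coeff (j + i) = 0 :=
    mem_fil.mp (mul_mem_fil (he i hi) hx) (j + i) (by omega)
  rw [coeff_neg_der_pow hδ, h, mul_zero]

/-- One step of approximation: `t^(l-d)` is sent to a nonzero multiple of `t^l` modulo higher
terms. -/
theorem adjOp_approx {δ : AddMonoid.End (LaurentSeries k)}
    (hδ : ∀ f m, (δ f).coeff m = (m + 1) • f.coeff (m + 1)) (s : Finset ℕ)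
    (a : ℕ → LaurentSeries k) (d l : ℤ) (hmin : ∀ j, indPoly s a j ≠ 0 → d ≤ j)
    (hl : (indPoly s a d).eval (l : k) ≠ 0) (y : LaurentSeries k) (hy : y ∈ fil l) :
    ∃ x ∈ fil (l - d), y - adjOp δ s a x ∈ fil (l + 1) := by
  refine ⟨HahnSeries.single (l - d) (y.coeff l / (indPoly s a d).eval (l : k)),
    mem_fil.mpr fun j hj => HahnSeries.coeff_single_of_ne hj.ne, mem_fil.mpr fun j hj => ?_⟩
  rw [HahnSeries.coeff_sub, coeff_adjOp_single hδ]
  rcases (Int.lt_add_one_iff.mp hj).lt_or_eq with hlt | heq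
  · have : indPoly s a (j - (l - d)) = 0 := by
      by_contra hne
      have := hmin _ hne
      omega
    rw [mem_fil.mp hy j hlt, this, Polynomial.eval_zero, zero_mul, sub_zero]
  · rw [heq, sub_sub_cancel, mul_div_cancel₀ _ hl, sub_self]

/-- Bounded surjectivity of a nonzero scalar operator on `t^l k[[t]]`, `l` large: with `d` the
least index having `indPoly d ≠ 0`, it sends `t^(l-d)` to `indPoly d (l) t^l + ⋯`. -/
theorem adjOp_surj [CharZero k] {δ : AddMonoid.End (LaurentSeries k)}
    (hδ : ∀ f m, (δ f).coeff m = (m + 1) • f.coeff (m + 1)) (s : Finset ℕ)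
    (a : ℕ → LaurentSeries k) (ha : ∃ i ∈ s, a i ≠ 0) :
    ∃ d l₀ : ℤ, ∀ l ≥ l₀, ∀ y ∈ fil l, ∃ u ∈ fil (l - d), adjOp δ s a u = y := by
  obtain ⟨e, he⟩ := exists_common_fil s a
  obtain ⟨d, hd, hmin⟩ := exists_least_indPoly s a e he ha
  obtain ⟨l₀, hl₀⟩ := exists_forall_eval_ne_zero hd
  exact ⟨d, l₀, fil_preimage (adjOp δ s a) d (-e) l₀ (adjOp_mem_fil hδ s a e he)
    fun l hl y hy => adjOp_approx hδ s a d l hmin (hl₀ l hl) y hy⟩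

/-! ### The `t`-adic filtration of matrices -/

/-- The lattice `t^l Mₙ(k[[t]])` in `Mₙ(k((t)))`. -/
def matFil (n : ℕ) (l : ℤ) : AddSubgroup (Matrix (Fin n) (Fin n) (LaurentSeries k)) where
  carrier := {x | ∀ i j, x i j ∈ fil l}
  zero_mem' := fun _ _ => zero_mem _
  add_mem' := fun ha hb i j => add_mem (ha i j) (hb i j)
  neg_mem' := fun ha i j => neg_mem (ha i j)

variable {n : ℕ}

local notation "Mat" => Matrix (Fin n) (Fin n) (LaurentSeries k)

theorem matFil_anti : Antitone (matFil (k := k) n) :=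
  fun _ _ h _ hf i j => fil_anti h (hf i j)

theorem exists_mem_matFil (x : Mat) : ∃ c : ℕ, x ∈ matFil n (-(c : ℤ)) := by
  choose o ho using fun p : Fin n × Fin n => exists_mem_fil (x p.1 p.2)
  refine ⟨∑ p, (o p).natAbs, fun i j => fil_anti ?_ (ho (i, j))⟩
  have := Finset.single_le_sum (f := fun p => (o p).natAbs) (fun _ _ => Nat.zero_le _)
    (Finset.mem_univ (i, j))
  omega

theorem matFil_mul {a b : ℤ} {x y : Mat} (hx : x ∈ matFil n a) (hy : y ∈ matFil n b) :
    x * y ∈ matFil n (a + b) := fun i j => by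
  rw [Matrix.mul_apply]
  exact sum_mem fun p _ => mul_mem_fil (hx i p) (hy p j)

theorem matFil_smul {a b : ℤ} {f : LaurentSeries k} {y : Mat} (hf : f ∈ fil a)
    (hy : y ∈ matFil n b) : f • y ∈ matFil n (a + b) := fun i j => mul_mem_fil hf (hy i j)

theorem matFil_preimage (P : Mat →+ Mat) (c c' l₀ : ℤ)
    (hbdd : ∀ l, ∀ x ∈ matFil n l, P x ∈ matFil n (l - c'))
    (happ : ∀ l ≥ l₀, ∀ y ∈ matFil n l, ∃ x ∈ matFil n (l - c), y - P x ∈ matFil n (l + 1)) :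
    ∀ l ≥ l₀, ∀ y ∈ matFil n l, ∃ x ∈ matFil n (l - c), P x = y := by
  refine exists_preimage_of_approx (matFil n) matFil_anti ?_ ?_ P c c' l₀ hbdd happ
  · intro x hx
    ext1 i j
    exact fil_sep _ fun N => hx N i j
  · intro l x hx
    choose s hs hsN using fun i j => fil_complete l (fun q => x q i j) fun q => hx q i j
    refine ⟨Matrix.of s, hs, fun N i j => ?_⟩
    have := hsN i j N
    rwa [← Matrix.sum_apply] at this

/-! ### Bounded surjectivity of connections -/

/-- Integration by parts: modulo the image of a connection `D`, moving `D` from one factor to the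
other turns `g • Dⁱv` into `(-d/dt)ⁱ g • v`, with loss of precision bounded independently of `g`. -/
theorem by_parts {δ : AddMonoid.End (LaurentSeries k)}
    (hδ : ∀ f m, (δ f).coeff m = (m + 1) • f.coeff (m + 1)) (D : AddMonoid.End Mat)
    (hD : ∀ (f : LaurentSeries k) (x : Mat), D (f • x) = δ f • x + f • D x) (v : Mat) (i : ℕ) :
    ∃ c : ℤ, ∀ l, ∀ g ∈ fil l, ∃ h ∈ matFil n (l - c),
      D h = g • (D ^ i) v - ((-δ) ^ i) g • v := by
  induction i with
  | zero => exact ⟨0, fun l g _ => ⟨0, zero_mem _, by simp⟩⟩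
  | succ i ih =>
    obtain ⟨c, hc⟩ := ih
    obtain ⟨b, hb⟩ := exists_mem_matFil ((D ^ i) v)
    refine ⟨max b (c + 1), fun l g hg => ?_⟩
    obtain ⟨h, hh, hDh⟩ := hc (l - 1) (δ g) (der_mem_fil hδ hg)
    refine ⟨g • (D ^ i) v - h, sub_mem (matFil_anti (by omega) (matFil_smul hg hb))
      (matFil_anti (by omega) hh), ?_⟩
    have e1 : (D ^ (i + 1)) v = D ((D ^ i) v) := by rw [pow_succ']; rfl
    have e2 : ((-δ) ^ (i + 1)) g = -(((-δ) ^ i) (δ g)) := by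
      rw [pow_succ]
      change ((-δ) ^ i) (-(δ g)) = _
      rw [map_neg]
    rw [map_sub, hD, hDh, e1, e2, neg_smul]
    abel

theorem by_parts_sum {δ : AddMonoid.End (LaurentSeries k)}
    (hδ : ∀ f m, (δ f).coeff m = (m + 1) • f.coeff (m + 1)) (D : AddMonoid.End Mat)
    (hD : ∀ (f : LaurentSeries k) (x : Mat), D (f • x) = δ f • x + f • D x) (v : Mat)
    (s : Finset ℕ) (a : ℕ → LaurentSeries k) :
    ∃ c : ℤ, ∀ l, ∀ u ∈ fil l, ∃ h ∈ matFil n (l - c),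
      D h = u • ∑ i ∈ s, a i • (D ^ i) v - adjOp δ s a u • v := by
  classical
  simp only [adjOp_apply]
  induction s using Finset.induction_on with
  | empty => exact ⟨0, fun l u _ => ⟨0, zero_mem _, by simp⟩⟩
  | insert j s hj ih =>
    obtain ⟨c, hc⟩ := ih
    obtain ⟨b, hb⟩ := by_parts hδ D hD v j
    obtain ⟨o, ho⟩ := exists_mem_fil (a j)
    refine ⟨max c (b - o), fun l u hu => ?_⟩
    obtain ⟨h, hh, hDh⟩ := hc l u hu
    obtain ⟨h', hh', hDh'⟩ := hb _ _ (mul_mem_fil ho hu)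
    refine ⟨h' + h, add_mem (matFil_anti (by omega) hh') (matFil_anti (by omega) hh), ?_⟩
    rw [map_add, hDh, hDh', Finset.sum_insert hj, Finset.sum_insert hj, smul_add, smul_smul,
      add_smul, mul_comm u]
    abel

/-- Bounded solvability of `D h = y • v` for a fixed `v`. A linear relation `∑ aᵢ Dⁱv = 0`,
available in finite dimension, and integration by parts reduce it to a scalar equation. -/
theorem conn_surj_vector [CharZero k] {δ : AddMonoid.End (LaurentSeries k)}
    (hδ : ∀ f m, (δ f).coeff m = (m + 1) • f.coeff (m + 1)) (D : AddMonoid.End Mat)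
    (hD : ∀ (f : LaurentSeries k) (x : Mat), D (f • x) = δ f • x + f • D x) (v : Mat) :
    ∃ c l₀ : ℤ, ∀ l ≥ l₀, ∀ y ∈ fil l, ∃ h ∈ matFil n (l - c), D h = (y : LaurentSeries k) • v := by
  obtain ⟨s, a, hsum, hne⟩ := not_linearIndependent_iff.mp
    (Module.Finite.not_linearIndependent_of_infinite (R := LaurentSeries k)
      fun i : ℕ => (D ^ i) v)
  obtain ⟨d, l₀, hd⟩ := adjOp_surj hδ s a hne
  obtain ⟨c, hc⟩ := by_parts_sum hδ D hD v s a
  refine ⟨d + c, l₀, fun l hl y hy => ?_⟩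
  obtain ⟨u, hu, rfl⟩ := hd l hl y hy
  obtain ⟨h, hh, hDh⟩ := hc _ u hu
  refine ⟨-h, neg_mem (matFil_anti (by omega) hh), ?_⟩
  rw [map_neg, hDh, hsum, smul_zero, zero_sub, neg_neg]

/-- Bounded surjectivity of any connection on `Mₙ(k((t)))`, summing over elementary matrices. -/
theorem conn_surj [CharZero k] {δ : AddMonoid.End (LaurentSeries k)}
    (hδ : ∀ f m, (δ f).coeff m = (m + 1) • f.coeff (m + 1)) (D : AddMonoid.End Mat)
    (hD : ∀ (f : LaurentSeries k) (x : Mat), D (f • x) = δ f • x + f • D x) :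
    ∃ c : ℕ, ∀ l ≥ (c : ℤ), ∀ y ∈ matFil n l, ∃ h ∈ matFil n (l - c), D h = y := by
  choose c l₀ H using fun p : Fin n × Fin n =>
    conn_surj_vector hδ D hD (Matrix.single p.1 p.2 1)
  have hle : ∀ p, (c p).natAbs + (l₀ p).natAbs ≤ ∑ p, ((c p).natAbs + (l₀ p).natAbs) := fun p =>
    Finset.single_le_sum (f := fun p => (c p).natAbs + (l₀ p).natAbs) (fun _ _ => Nat.zero_le _)
      (Finset.mem_univ p)
  refine ⟨∑ p, ((c p).natAbs + (l₀ p).natAbs), fun l hl y hy => ?_⟩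
  choose h hh hDh using fun p : Fin n × Fin n =>
    H p l (by have := hle p; omega) (y p.1 p.2) (hy p.1 p.2)
  refine ⟨∑ p, h p, sum_mem fun p _ => matFil_anti (by have := hle p; omega) (hh p), ?_⟩
  rw [map_sum, Finset.sum_congr rfl fun p _ => hDh p, Fintype.sum_prod_type]
  conv_rhs => rw [Matrix.matrix_eq_sum_single y]
  simp [Matrix.smul_single]

/-! ### The gauge equation -/

/-- The connection `h ↦ ∂h + A h - h A` induced on endomorphisms. -/
noncomputable def endConn (δ : AddMonoid.End (LaurentSeries k)) (A : Mat) : AddMonoid.End Mat :=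
  AddMonoidHom.mk' (fun h => h.map δ + A * h - h * A) fun x y => by
    rw [Matrix.map_add _ (map_add δ), mul_add, add_mul]; abel

theorem endConn_apply (δ : AddMonoid.End (LaurentSeries k)) (A h : Mat) :
    endConn δ A h = h.map δ + A * h - h * A := rfl

theorem endConn_smul {δ : AddMonoid.End (LaurentSeries k)}
    (hδ : ∀ f m, (δ f).coeff m = (m + 1) • f.coeff (m + 1)) (A : Mat) (f : LaurentSeries k)
    (x : Mat) : endConn δ A (f • x) = δ f • x + f • endConn δ A x := by
  have : (f • x).map δ = δ f • x + f • x.map δ := by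
    ext1 i j
    exact der_mul hδ _ _
  rw [endConn_apply, endConn_apply, this, Matrix.mul_smul, Matrix.smul_mul, smul_sub, smul_add]
  abel

/-- `1 + t Mₙ(k[[t]])` consists of units of `Mₙ(k[[t]])`. -/
theorem exists_right_inv {h : Mat} (hh : h ∈ matFil n 1) : ∃ x ∈ matFil n 0, (1 + h) * x = 1 := by
  have one_mem : (1 : Mat) ∈ matFil n 0 := by
    intro i j l hl
    rw [Matrix.one_apply]
    split_ifs
    · rw [HahnSeries.coeff_one, if_neg hl.ne]
    · exact HahnSeries.coeff_zero
  obtain ⟨x, hx, e⟩ := matFil_preimage (AddMonoidHom.mulLeft (1 + h)) 0 0 0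
    (fun l x hx => matFil_anti (by omega)
      (matFil_mul (add_mem one_mem (matFil_anti (by omega) hh)) hx))
    (fun l _ y hy => ⟨y, by rwa [sub_zero], by
      have : y - AddMonoidHom.mulLeft (1 + h) y = -(h * y) := by
        rw [AddMonoidHom.coe_mulLeft, add_mul, one_mul]; abel
      rw [this]
      exact neg_mem (matFil_anti (by omega) (matFil_mul hh hy))⟩) 0 le_rfl 1 one_mem
  exact ⟨x, by simpa using hx, e⟩

/-- Solvability of the equation for `h = g - 1` that expresses the gauge equivalence of `A` and
`A + B`, for `B` sufficiently divisible by `t`. -/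
theorem exists_gauge [CharZero k] {δ : AddMonoid.End (LaurentSeries k)}
    (hδ : ∀ f m, (δ f).coeff m = (m + 1) • f.coeff (m + 1)) (A : Mat) :
    ∃ m : ℕ, ∀ B ∈ matFil n (m : ℤ), ∃ h ∈ matFil n 1, endConn δ A h + B * h = -B := by
  obtain ⟨c, hc⟩ := conn_surj hδ (endConn δ A) (endConn_smul hδ A)
  obtain ⟨b, hb⟩ := exists_mem_matFil A
  refine ⟨c + 1, fun B hB => ?_⟩
  let P : Mat →+ Mat := AddMonoidHom.mk' (fun h => endConn δ A h + B * h) fun x y => by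
    rw [map_add, mul_add]; abel
  have H := matFil_preimage P c (max 1 b) c ?_ ?_
    (c + 1 : ℕ) (by omega) (-B) (neg_mem hB)
  · obtain ⟨h, hh, e⟩ := H
    exact ⟨h, matFil_anti (by omega) hh, e⟩
  · intro l x hx
    refine add_mem (sub_mem (add_mem ?_ ?_) ?_) ?_
    · exact fun i j => fil_anti (by omega) (der_mem_fil hδ (hx i j))
    · exact matFil_anti (by omega) (matFil_mul hb hx)
    · exact matFil_anti (by omega) (matFil_mul hx hb)
    · exact matFil_anti (by omega) (matFil_mul hB hx)
  · intro l hl y hy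
    obtain ⟨x, hx, rfl⟩ := hc l hl y hy
    refine ⟨x, hx, ?_⟩
    have : endConn δ A x - P x = -(B * x) := by
      change endConn δ A x - (endConn δ A x + B * x) = _
      abel
    rw [this]
    exact neg_mem (matFil_anti (by push_cast; omega) (matFil_mul hB hx))

end GaugeOpen

/-- **Gauge equivalence classes are open in the `t`-adic topology.**
Let `k` be an algebraically closed field of characteristic zero and
`A ∈ Mₙ(k((t)))`, with `der = d/dt` on `k((t))`. Then there is `m ≥ 0` such that
every `A'` with `A' − A ∈ t^m·Mₙ(k[[t]])` is gauge equivalent to `A`, via a gauge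
transformation `g ∈ GLₙ(k[[t]])` (i.e. `g` and `g⁻¹` have power series entries):
`A' = g·A·g⁻¹ − (der g)·g⁻¹`. -/
theorem gauge_class_is_open
    {k : Type*} [Field k] [IsAlgClosed k] [CharZero k]
    (der : LaurentSeries k → LaurentSeries k)
    (hder : ∀ (f : LaurentSeries k) (m : ℤ), (der f).coeff m = (m + 1) • f.coeff (m + 1))
    (n : ℕ)
    (A : Matrix (Fin n) (Fin n) (LaurentSeries k)) :
    ∃ m : ℕ,
      ∀ A' : Matrix (Fin n) (Fin n) (LaurentSeries k),
        (∀ (i j : Fin n) (l : ℤ), l < (m : ℤ) → ((A' - A) i j).coeff l = 0) →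
        ∃ g : Matrix (Fin n) (Fin n) (LaurentSeries k),
          IsUnit g.det ∧
          (∀ (i j : Fin n) (l : ℤ), l < 0 → (g i j).coeff l = 0) ∧
          (∀ (i j : Fin n) (l : ℤ), l < 0 → ((g⁻¹) i j).coeff l = 0) ∧
          A' = g * A * g⁻¹ - g.map der * g⁻¹ := by
  let δ : AddMonoid.End (LaurentSeries k) := AddMonoidHom.mk' der fun f g => by
    ext m
    simp only [hder, HahnSeries.coeff_add, smul_add]
  have hδ : ∀ f m, (δ f).coeff m = (m + 1) • f.coeff (m + 1) := hder
  obtain ⟨m, hm⟩ := GaugeOpen.exists_gauge hδ A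
  refine ⟨m, fun A' hA' => ?_⟩
  obtain ⟨h, hh, e⟩ := hm (A' - A) hA'
  obtain ⟨x, hx, hgx⟩ := GaugeOpen.exists_right_inv hh
  have hinv : (1 + h)⁻¹ = x := Matrix.inv_eq_right_inv hgx
  have hone : δ 1 = 0 := by
    have := GaugeOpen.der_mul hδ 1 1
    simpa using this
  have hder1 : (1 + h).map der = h.map δ := by
    change (1 + h).map δ = h.map δ
    ext1 i j
    rw [Matrix.map_apply, Matrix.map_apply, Matrix.add_apply, map_add, Matrix.one_apply]
    split_ifs <;> simp [hone]
  refine ⟨1 + h, (Matrix.isUnit_iff_isUnit_det _).mp (IsUnit.of_mul_eq_one x hgx), ?_, ?_, ?_⟩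
  · intro i j l hl
    rw [Matrix.add_apply, HahnSeries.coeff_add, hh i j l (by omega), add_zero, Matrix.one_apply]
    split_ifs
    · rw [HahnSeries.coeff_one, if_neg hl.ne]
    · exact HahnSeries.coeff_zero
  · rw [hinv]
    exact hx
  · rw [hinv, hder1, ← sub_mul]
    have key : A' * (1 + h) = (1 + h) * A - h.map δ := by
      rw [GaugeOpen.endConn_apply, sub_mul] at e
      rw [← sub_eq_zero] at e ⊢
      rw [← e]
      noncomm_ring
    rw [← key, mul_assoc, hgx, mul_one]
end

section
/- Let k be an algebraically closed field of characteristic zero and A ∈ Mₙ(k((t))). Then there exists a matrix B ∈ Mₙ(k((t))) all of whose entries are Laurent polynomials in t (in particular, rational functions of t) such that B is gauge equivalent to A over k((t)). -/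
/-!
Write `K = k((t))` and `θ = t d/dt`. The result is a consequence of finite determinacy: for `N` large,
every matrix congruent to `A` modulo `t ^ N` is gauge equivalent to `A`, so truncating `A` suffices.

With `g = 1 + X` and `B = A + E`, gauge equivalence is the *linear* equation
`D X + t E X = -t E`, where `D X = θ X + t A X - X t A` is the induced connection on endomorphisms.
It can be solved by successive approximation (`successive_approx`, `finite_determinacy`) as soon as
`D` has a right inverse on deep terms of the `t`-adic filtration with a bounded loss of order
(`adj_solve`).

To invert `D` on multiples `f • e` of a matrix unit `e` (`adj_solve_smul`), take a nontrivial relation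
`∑ b i • D ^ i e = 0` over `K`, which exists by finite dimensionality. Multiplying it by `y` and moving
all `D`s off `e` by parts (`by_parts`) gives `D x = (L y) • e`, where
`L y = ∑ (-1) ^ i θ ^ i (b i * y)` and `x` depends on `y` with bounded loss. So only the scalar
equation `L y = f` remains (`scalar_solve`). If `v` is the least order of the `b i`, then `L` sends
`t ^ (m - v)` to `P(m) t ^ m + ⋯` with `P` a nonzero polynomial. In characteristic zero `P(m) ≠ 0` for
all large integers `m`, and the equation is solved one coefficient at a time.
-/
namespace FormalGauge

variable {k : Type*} [Field k]

/-! ### The `t`-adic filtration of `k((t))` -/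

/-- The `t`-adic filtration of `k((t))`: series all of whose coefficients below `m` vanish. -/
def fil (k : Type*) [Field k] (m : ℤ) : AddSubgroup (LaurentSeries k) where
  carrier := {f | ∀ j < m, f.coeff j = 0}
  zero_mem' := by intro j _; simp
  add_mem' := by intro f g hf hg j hj; simp [hf j hj, hg j hj]
  neg_mem' := by intro f hf j hj; simp [hf j hj]

lemma fil_anti {a b : ℤ} (h : a ≤ b) : fil k b ≤ fil k a :=
  fun _ hf j hj => hf j (hj.trans_le h)

/-- A Laurent series in `fil k a` is `t ^ a` times a power series. -/
lemma mem_fil_iff {a : ℤ} {f : LaurentSeries k} :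
    f ∈ fil k a ↔ ∃ p : PowerSeries k, f = HahnSeries.single a 1 * (p : LaurentSeries k) := by
  constructor
  · intro hf
    refine ⟨PowerSeries.mk fun i => f.coeff (a + i), ?_⟩
    ext j
    rw [show j = (j - a) + a by ring, HahnSeries.coeff_single_mul_add, one_mul]
    by_cases h : j < a
    · rw [sub_add_cancel, hf j h, PowerSeries.coeff_coe, if_pos (by omega)]
    · obtain ⟨i, rfl⟩ : ∃ i : ℕ, j = a + i := ⟨(j - a).toNat, by omega⟩
      rw [show a + (i : ℤ) - a = i by ring, LaurentSeries.coeff_coe_powerSeries]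
      simp [add_comm]
  · rintro ⟨p, rfl⟩ j hj
    rw [show j = (j - a) + a by ring, HahnSeries.coeff_single_mul_add, PowerSeries.coeff_coe,
      if_pos (by omega), mul_zero]

lemma mul_mem_fil {a b : ℤ} {f g : LaurentSeries k} (hf : f ∈ fil k a) (hg : g ∈ fil k b) :
    f * g ∈ fil k (a + b) := by
  obtain ⟨p, rfl⟩ := mem_fil_iff.1 hf
  obtain ⟨q, rfl⟩ := mem_fil_iff.1 hg
  refine mem_fil_iff.2 ⟨p * q, ?_⟩
  rw [mul_mul_mul_comm, HahnSeries.single_mul_single, one_mul]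
  simp

lemma exists_mem_fil (f : LaurentSeries k) : ∃ m, f ∈ fil k m :=
  ⟨f.order, fun _ hj => HahnSeries.coeff_eq_zero_of_lt_order hj⟩

/-- Completeness of `k((t))`, in the form of convergence of series. -/
lemma fil_complete (a : ℤ) (x : ℕ → LaurentSeries k) (hx : ∀ j : ℕ, x j ∈ fil k (a + j)) :
    ∃ X : LaurentSeries k, ∀ J : ℕ, X - ∑ j ∈ Finset.range J, x j ∈ fil k (a + J) := by
  let p : PowerSeries k :=
    PowerSeries.mk fun i => (∑ j ∈ Finset.range (i + 1), x j).coeff (a + i)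
  have hp : ∀ i : ℕ, (HahnSeries.single a 1 * (p : LaurentSeries k)).coeff (a + i) =
      (∑ j ∈ Finset.range (i + 1), x j).coeff (a + i) := by
    intro i
    rw [add_comm a, HahnSeries.coeff_single_mul_add, one_mul, LaurentSeries.coeff_coe_powerSeries]
    simp [p, add_comm]
  refine ⟨HahnSeries.single a 1 * (p : LaurentSeries k), fun J m hm => ?_⟩
  by_cases h : m < a
  · have h1 := mem_fil_iff.2 ⟨p, rfl⟩ m h
    have h2 : ∑ j ∈ Finset.range J, x j ∈ fil k a :=
      sum_mem fun j _ => fil_anti (a := a) (b := a + j) (by omega) (hx j)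
    rw [HahnSeries.coeff_sub, h1, h2 m h, sub_zero]
  · obtain ⟨i, rfl⟩ : ∃ i : ℕ, m = a + i := ⟨(m - a).toNat, by omega⟩
    rw [HahnSeries.coeff_sub, hp, ← HahnSeries.coeff_sub]
    have hi : i + 1 ≤ J := by omega
    rw [← Finset.sum_range_add_sum_Ico _ hi, sub_add_cancel_left]
    have : ∑ j ∈ Finset.Ico (i + 1) J, x j ∈ fil k (a + i + 1) :=
      sum_mem fun j hj => fil_anti (a := a + i + 1) (b := a + j)
        (by have := Finset.mem_Ico.1 hj; omega) (hx j)
    exact neg_mem this _ (by omega)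

/-! ### Successive approximation -/

/-- Successive approximation. In a separated and complete filtered group, an additive map that is
continuous (it lowers the filtration by at most `r`) and that can be inverted modulo one further
step of the filtration with a bounded loss `c`, can be inverted exactly with the same loss. -/
lemma successive_approx {M : Type*} [AddCommGroup M] (F : ℤ → AddSubgroup M)
    (hanti : Antitone F) (hsep : ∀ x, (∀ m, x ∈ F m) → x = 0)
    (hcomp : ∀ (a : ℤ) (x : ℕ → M), (∀ j : ℕ, x j ∈ F (a + j)) →
      ∃ X, ∀ J : ℕ, X - ∑ j ∈ Finset.range J, x j ∈ F (a + J))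
    (T : M →+ M) (r c N : ℤ) (hT : ∀ m, ∀ x ∈ F m, T x ∈ F (m - r))
    (happ : ∀ m ≥ N, ∀ f ∈ F m, ∃ x ∈ F (m - c), f - T x ∈ F (m + 1))
    (f : M) (hf : f ∈ F N) : ∃ x ∈ F (N - c), T x = f := by
  classical
  have happ' : ∀ m f, ∃ x, N ≤ m → f ∈ F m → x ∈ F (m - c) ∧ f - T x ∈ F (m + 1) := by
    intro m f
    by_cases h : N ≤ m ∧ f ∈ F m
    · obtain ⟨x, h1, h2⟩ := happ m h.1 f h.2
      exact ⟨x, fun _ _ => ⟨h1, h2⟩⟩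
    · exact ⟨0, fun h1 h2 => absurd ⟨h1, h2⟩ h⟩
  choose S hS using happ'
  -- the successive residuals
  let R : ℕ → M := fun j => Nat.rec f (fun j g => g - T (S (N + j) g)) j
  have hR : ∀ j : ℕ, R j ∈ F (N + j) := by
    intro j
    induction j with
    | zero => simpa [R] using hf
    | succ j ih =>
      have := (hS (N + j) (R j) (by omega) ih).2
      rw [add_assoc] at this
      exact_mod_cast this
  have hx : ∀ j : ℕ, S (N + j) (R j) ∈ F ((N - c) + j) := by
    intro j
    have := (hS (N + j) (R j) (by omega) (hR j)).1
    rwa [show N - c + (j : ℤ) = N + j - c by ring]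
  obtain ⟨X, hX⟩ := hcomp _ _ hx
  refine ⟨X, by simpa using hX 0, ?_⟩
  have hsum : ∀ J : ℕ, f - T (∑ j ∈ Finset.range J, S (N + j) (R j)) = R J := by
    intro J
    induction J with
    | zero => simp [R]
    | succ J ih => rw [Finset.sum_range_succ, map_add, ← sub_sub, ih]
  rw [← sub_eq_zero]
  refine hsep _ fun m => ?_
  obtain ⟨J, hJ1, hJ2⟩ : ∃ J : ℕ, m ≤ N + J ∧ m ≤ N - c + J - r :=
    ⟨(m - N).toNat + (m - N + c + r).toNat, by omega, by omega⟩
  have e : T X - f = T (X - ∑ j ∈ Finset.range J, S (N + j) (R j)) - R J := by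
    rw [map_sub, ← hsum J]; abel
  rw [e]
  exact sub_mem (hanti hJ2 (hT _ _ (hX J))) (hanti hJ1 (hR J))

lemma fil_sep (x : LaurentSeries k) (h : ∀ m, x ∈ fil k m) : x = 0 := by
  ext j
  exact h (j + 1) j (by omega)

/-! ### Scalar differential equations in `θ = t d/dt` -/

/-- The Euler derivation `θ = t d/dt`, which multiplies the `m`-th coefficient by `m`. -/
def theta (k : Type*) [Field k] : LaurentSeries k →+ LaurentSeries k where
  toFun f :=
    { coeff := fun m => (m : k) * f.coeff m
      isPWO_support' := f.isPWO_support.mono fun m hm h => hm (by simp [h]) }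
  map_zero' := by ext; simp
  map_add' f g := by ext; simp [mul_add]

@[simp] lemma theta_coeff (f : LaurentSeries k) (m : ℤ) :
    (theta k f).coeff m = (m : k) * f.coeff m := rfl

lemma theta_mul (f g : LaurentSeries k) :
    theta k (f * g) = theta k f * g + f * theta k g := by
  have hs : ∀ f : LaurentSeries k, (theta k f).support ⊆ f.support :=
    fun f m hm h => hm (by simp [h])
  ext m
  rw [HahnSeries.coeff_add, theta_coeff, HahnSeries.coeff_mul,
    HahnSeries.coeff_mul_left' f.isPWO_support (hs f),
    HahnSeries.coeff_mul_right' g.isPWO_support (hs g), Finset.mul_sum, ← Finset.sum_add_distrib]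
  refine Finset.sum_congr rfl fun ij hij => ?_
  rw [← (Finset.mem_antidiagonal.1 hij).2.2]
  simp only [theta_coeff]
  push_cast
  ring

lemma theta_mem {m : ℤ} {f : LaurentSeries k} (hf : f ∈ fil k m) : theta k f ∈ fil k m := by
  intro j hj
  simp [hf j hj]

lemma theta_iterate_coeff (i : ℕ) (f : LaurentSeries k) (m : ℤ) :
    ((theta k)^[i] f).coeff m = (m : k) ^ i * f.coeff m := by
  induction i with
  | zero => simp
  | succ i ih => rw [Function.iterate_succ_apply', theta_coeff, ih, pow_succ']; ring

/-- If all `b i` lie in `fil k v`, the scalar operator `y ↦ ∑ i, (-1) ^ i θ ^ i (b i * y)` acts on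
leading coefficients through the polynomial
`∑ i, (-1) ^ i * (b i).coeff v * X ^ i`. This polynomial is nonzero, so it does not vanish at large
integers, and the operator is invertible on sufficiently deep terms of the filtration. -/
lemma scalar_solve [CharZero k] {r : ℕ} (b : Fin r → LaurentSeries k) (v : ℤ)
    (hb : ∀ i, b i ∈ fil k v) (i₀ : Fin r) (hi₀ : (b i₀).coeff v ≠ 0) :
    ∃ N₀ : ℤ, ∀ N ≥ N₀, ∀ f ∈ fil k N, ∃ y ∈ fil k (N - v),
      ∑ i : Fin r, (-1 : LaurentSeries k) ^ (i : ℕ) * (theta k)^[i] (b i * y) = f := by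
  let P : Polynomial k := ∑ i : Fin r, Polynomial.monomial (i : ℕ) ((-1) ^ (i : ℕ) * (b i).coeff v)
  have hP : P ≠ 0 := by
    intro h
    have h1 : P.coeff i₀ = (-1) ^ (i₀ : ℕ) * (b i₀).coeff v := by
      simp only [P, Polynomial.finsetSum_coeff, Polynomial.coeff_monomial, Fin.val_inj]
      simp
    rw [h, Polynomial.coeff_zero] at h1
    exact mul_ne_zero (pow_ne_zero _ (by simp)) hi₀ h1.symm
  have hfin : {m : ℤ | P.eval (m : k) = 0}.Finite := by
    have := (Polynomial.finite_setOfPred_isRoot hP).preimage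
      (f := fun m : ℤ => (m : k)) Int.cast_injective.injOn
    exact this
  obtain ⟨N₀, hN₀⟩ := hfin.bddAbove
  let T : LaurentSeries k →+ LaurentSeries k :=
    { toFun := fun y => ∑ i : Fin r, (-1 : LaurentSeries k) ^ (i : ℕ) * (theta k)^[i] (b i * y)
      map_zero' := by simp
      map_add' := by
        intro x y
        simp only [mul_add, iterate_map_add, Finset.sum_add_distrib] }
  have hTc : ∀ y j, (T y).coeff j =
      ∑ i : Fin r, (-1) ^ (i : ℕ) * ((j : k) ^ (i : ℕ) * (b i * y).coeff j) := by
    intro y j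
    change (∑ i : Fin r, (-1 : LaurentSeries k) ^ (i : ℕ) * (theta k)^[i] (b i * y)).coeff j = _
    rw [HahnSeries.coeff_sum]
    refine Finset.sum_congr rfl fun i _ => ?_
    rw [← theta_iterate_coeff]
    rcases Nat.even_or_odd (i : ℕ) with h' | h' <;> simp [h'.neg_one_pow]
  have hT : ∀ m, ∀ y ∈ fil k m, T y ∈ fil k (m - -v) := by
    intro m y hy j hj
    rw [hTc]
    refine Finset.sum_eq_zero fun i _ => ?_
    rw [mul_mem_fil (hb i) hy j (by omega), mul_zero, mul_zero]
  refine ⟨N₀ + 1, fun N hN f hf => ?_⟩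
  refine successive_approx (fil k) (fun _ _ h => fil_anti h) fil_sep fil_complete T (-v) v N hT ?_ f hf
  intro m hm f hf
  have hne : P.eval (m : k) ≠ 0 := fun h => by
    have := hN₀ (show m ∈ {m : ℤ | P.eval (m : k) = 0} from h)
    omega
  have hy : HahnSeries.single (m - v) (f.coeff m / P.eval (m : k)) ∈ fil k (m - v) :=
    fun j hj => HahnSeries.coeff_single_of_ne (by omega)
  refine ⟨_, hy, fun j hj => ?_⟩
  rw [HahnSeries.coeff_sub]
  rcases (show j ≤ m by omega).lt_or_eq with h | rfl
  · rw [hf j h, hT _ _ hy j (by omega), sub_zero]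
  · rw [hTc]
    have : ∀ i, (b i * HahnSeries.single (j - v) (f.coeff j / P.eval (j : k))).coeff j =
        (b i).coeff v * (f.coeff j / P.eval (j : k)) := by
      intro i
      rw [HahnSeries.coeff_mul_single, sub_sub_cancel]
    simp only [this]
    have hev : P.eval (j : k) =
        ∑ i : Fin r, (-1) ^ (i : ℕ) * ((j : k) ^ (i : ℕ) * (b i).coeff v) := by
      simp only [P, Polynomial.eval_finsetSum, Polynomial.eval_monomial]
      exact Finset.sum_congr rfl fun i _ => by ring
    simp only [← mul_assoc] at hev ⊢
    rw [← Finset.sum_mul]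
    simp only [mul_assoc] at hev ⊢
    rw [← hev, mul_div_cancel₀ _ hne, sub_self]

/-! ### The filtration on matrices -/

variable {n : ℕ}

/-- The entrywise `t`-adic filtration on matrices over `k((t))`. -/
def matFil (k : Type*) [Field k] (n : ℕ) (m : ℤ) :
    AddSubgroup (Matrix (Fin n) (Fin n) (LaurentSeries k)) where
  carrier := {X | ∀ i j, X i j ∈ fil k m}
  zero_mem' := fun _ _ => zero_mem _
  add_mem' := fun hX hY i j => add_mem (hX i j) (hY i j)
  neg_mem' := fun hX i j => neg_mem (hX i j)

lemma matFil_anti : Antitone (matFil k n) := fun _ _ h _ hX i j => fil_anti h (hX i j)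

lemma matFil_sep (X : Matrix (Fin n) (Fin n) (LaurentSeries k)) (h : ∀ m, X ∈ matFil k n m) :
    X = 0 := by
  ext1 i j
  exact fil_sep _ fun m => h m i j

lemma matFil_complete (a : ℤ) (x : ℕ → Matrix (Fin n) (Fin n) (LaurentSeries k))
    (hx : ∀ j : ℕ, x j ∈ matFil k n (a + j)) :
    ∃ X, ∀ J : ℕ, X - ∑ j ∈ Finset.range J, x j ∈ matFil k n (a + J) := by
  choose X hX using fun p q => fil_complete a (fun j => x j p q) fun j => hx j p q
  refine ⟨Matrix.of X, fun J p q => ?_⟩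
  simpa [Matrix.sum_apply] using hX p q J

lemma exists_mem_matFil (X : Matrix (Fin n) (Fin n) (LaurentSeries k)) :
    ∃ m, X ∈ matFil k n m := by
  choose m hm using fun p : Fin n × Fin n => exists_mem_fil (X p.1 p.2)
  obtain ⟨M, hM⟩ := Finite.exists_ge m
  exact ⟨M, fun i j => fil_anti (hM (i, j)) (hm (i, j))⟩

lemma smul_mem_matFil {a b : ℤ} {f : LaurentSeries k}
    {X : Matrix (Fin n) (Fin n) (LaurentSeries k)} (hf : f ∈ fil k a) (hX : X ∈ matFil k n b) :
    f • X ∈ matFil k n (a + b) := fun i j => mul_mem_fil hf (hX i j)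

lemma mul_mem_matFil {a b : ℤ} {X Y : Matrix (Fin n) (Fin n) (LaurentSeries k)}
    (hX : X ∈ matFil k n a) (hY : Y ∈ matFil k n b) : X * Y ∈ matFil k n (a + b) := fun i j => by
  rw [Matrix.mul_apply]
  exact sum_mem fun l _ => mul_mem_fil (hX i l) (hY l j)

/-! ### The connection on endomorphisms -/

/-- The derivation `X ↦ θ X + A X - X A` of the matrix algebra attached to the connection matrix
`A` (with respect to `θ = t d/dt`), i.e. the induced connection on endomorphisms. -/
noncomputable def adj (A : Matrix (Fin n) (Fin n) (LaurentSeries k)) :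
    Matrix (Fin n) (Fin n) (LaurentSeries k) →+ Matrix (Fin n) (Fin n) (LaurentSeries k) where
  toFun X := X.map (theta k) + A * X - X * A
  map_zero' := by simp
  map_add' X Y := by
    rw [Matrix.map_add _ (map_add _), mul_add, add_mul]
    abel

lemma adj_apply (A X : Matrix (Fin n) (Fin n) (LaurentSeries k)) :
    adj A X = X.map (theta k) + A * X - X * A := rfl

lemma adj_smul (A X : Matrix (Fin n) (Fin n) (LaurentSeries k)) (f : LaurentSeries k) :
    adj A (f • X) = theta k f • X + f • adj A X := by
  have : (f • X).map (theta k) = theta k f • X + f • X.map (theta k) := by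
    ext1 i j
    simp [theta_mul]
  rw [adj_apply, adj_apply, this, Matrix.mul_smul, Matrix.smul_mul, smul_sub, smul_add]
  abel

/-- Integration by parts: modulo the image of the connection, `D ^ i` moves from `e` to the
coefficient `h`, at the price of a sign and a bounded loss in the filtration. -/
lemma by_parts (A e : Matrix (Fin n) (Fin n) (LaurentSeries k)) (i : ℕ) :
    ∃ c : ℤ, ∀ a, ∀ h ∈ fil k a, ∃ x ∈ matFil k n (a - c),
      h • (adj A)^[i] e = adj A x + ((-1 : LaurentSeries k) ^ i * (theta k)^[i] h) • e := by
  induction i with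
  | zero => exact ⟨0, fun a h _ => ⟨0, zero_mem _, by simp⟩⟩
  | succ i ih =>
    obtain ⟨c, hc⟩ := ih
    obtain ⟨m, hm⟩ := exists_mem_matFil ((adj A)^[i] e)
    refine ⟨max c (-m), fun a h hh => ?_⟩
    obtain ⟨x, hx, hxe⟩ := hc a _ (theta_mem hh)
    refine ⟨h • (adj A)^[i] e - x, sub_mem (matFil_anti (by omega) (smul_mem_matFil hh hm))
      (matFil_anti (by omega) hx), ?_⟩
    rw [map_sub, adj_smul, hxe, ← Function.iterate_succ_apply' (adj A),
      ← Function.iterate_succ_apply (theta k), pow_succ]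
    simp only [mul_neg, mul_one, neg_mul, neg_smul]
    abel

/-- Every `f • e` with `f` deep enough in the filtration is in the image of the connection, with a
bounded loss. A linear relation between `e, D e, D² e, …` turns, by parts, into `D x = (L y) • e` for
a nonzero scalar differential operator `L`. -/
lemma adj_solve_smul [CharZero k] (A e : Matrix (Fin n) (Fin n) (LaurentSeries k)) :
    ∃ c N₀ : ℤ, ∀ N ≥ N₀, ∀ f ∈ fil k N, ∃ x ∈ matFil k n (N - c), adj A x = f • e := by
  classical
  let d := Module.finrank (LaurentSeries k) (Matrix (Fin n) (Fin n) (LaurentSeries k))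
  have hdep : ¬ LinearIndependent (LaurentSeries k) (fun i : Fin (d + 1) => (adj A)^[i] e) := by
    intro h
    have := h.fintype_card_le_finrank
    simp only [Fintype.card_fin] at this
    omega
  obtain ⟨b, hb, i₁, hi₁⟩ := Fintype.not_linearIndependent_iff.1 hdep
  -- `v` is the least order of a nonzero coefficient of the relation.
  obtain ⟨i₀, hi₀, hmin⟩ := Finset.exists_min_image (Finset.univ.filter fun i => b i ≠ 0)
    (fun i => (b i).order) ⟨i₁, by simpa using hi₁⟩
  have hi₀' : b i₀ ≠ 0 := by simpa using hi₀
  have hbv : ∀ i, b i ∈ fil k (b i₀).order := by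
    intro i
    by_cases h : b i = 0
    · rw [h]; exact zero_mem _
    · exact fun j hj => HahnSeries.coeff_eq_zero_of_lt_order
        (hj.trans_le (hmin i (by simpa using h)))
  obtain ⟨N₀, hN₀⟩ := scalar_solve b _ hbv i₀ (HahnSeries.coeff_order_eq_zero.not.2 hi₀')
  choose c hc using fun i : Fin (d + 1) => by_parts A e i
  obtain ⟨C, hC⟩ := Finite.exists_le c
  refine ⟨C, N₀, fun N hN f hf => ?_⟩
  obtain ⟨y, hy, hyf⟩ := hN₀ N hN f hf
  have hby : ∀ i, b i * y ∈ fil k N := fun i => by simpa using mul_mem_fil (hbv i) hy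
  choose x hx hxe using fun i => hc i N (b i * y) (hby i)
  refine ⟨-∑ i, x i, neg_mem (sum_mem fun i _ => matFil_anti (by have := hC i; omega) (hx i)), ?_⟩
  have h0 : ∑ i, (b i * y) • (adj A)^[i] e = 0 := by
    have : y • ∑ i, b i • (adj A)^[i] e = 0 := by rw [hb, smul_zero]
    rw [Finset.smul_sum] at this
    simpa only [smul_smul, mul_comm y] using this
  rw [Finset.sum_congr rfl fun i _ => hxe i, Finset.sum_add_distrib, ← Finset.sum_smul, hyf,
    ← map_sum] at h0
  rw [map_neg]
  exact neg_eq_of_add_eq_zero_right h0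

/-- The connection on endomorphisms has, on deep terms of the filtration, a right inverse with
bounded loss. -/
lemma adj_solve [CharZero k] (A : Matrix (Fin n) (Fin n) (LaurentSeries k)) :
    ∃ c N₀ : ℤ, ∀ N ≥ N₀, ∀ F ∈ matFil k n N, ∃ X ∈ matFil k n (N - c), adj A X = F := by
  choose c N hcN using fun p : Fin n × Fin n => adj_solve_smul A (Matrix.single p.1 p.2 1)
  obtain ⟨C, hC⟩ := Finite.exists_le c
  obtain ⟨N₀, hN₀⟩ := Finite.exists_le N
  refine ⟨C, N₀, fun m hm F hF => ?_⟩
  choose x hx hxe using fun p : Fin n × Fin n =>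
    hcN p m ((hN₀ p).trans hm) (F p.1 p.2) (hF p.1 p.2)
  refine ⟨∑ p, x p, sum_mem fun p _ => matFil_anti (by have := hC p; omega) (hx p), ?_⟩
  rw [map_sum, Finset.sum_congr rfl fun p _ => hxe p, Fintype.sum_prod_type]
  conv_rhs => rw [Matrix.matrix_eq_sum_single F]
  simp

/-! ### Finite determinacy -/

lemma isUnit_det_one_add {X : Matrix (Fin n) (Fin n) (LaurentSeries k)} (hX : X ∈ matFil k n 1) :
    IsUnit (1 + X).det := by
  rw [isUnit_iff_ne_zero]
  intro h
  obtain ⟨w, hw, hXw⟩ := Matrix.exists_mulVec_eq_zero_iff.2 h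
  rw [Matrix.add_mulVec, Matrix.one_mulVec] at hXw
  -- `w = -X w` forces `w` into every step of the filtration.
  have step : ∀ m, (∀ i, w i ∈ fil k m) → ∀ i, w i ∈ fil k (m + 1) := by
    intro m hm i
    have h1 : w i = -(X.mulVec w) i := eq_neg_of_add_eq_zero_left (congrFun hXw i)
    rw [h1, Matrix.mulVec, dotProduct]
    refine neg_mem (sum_mem fun j _ => ?_)
    rw [add_comm]
    exact mul_mem_fil (hX i j) (hm j)
  choose m hm using fun i => exists_mem_fil (w i)
  obtain ⟨M, hM⟩ := Finite.exists_ge m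
  have hall : ∀ J : ℕ, ∀ i, w i ∈ fil k (M + J) := by
    intro J
    induction J with
    | zero => exact fun i => fil_anti (by simpa using hM i) (hm i)
    | succ J ih =>
      have := step _ ih
      simpa [add_assoc] using this
  refine hw (funext fun i => fil_sep _ fun a => fil_anti ?_ (hall (a - M).toNat i))
  omega

/-- Finite determinacy: a connection matrix may be changed arbitrarily at sufficiently high order
in `t` within its gauge class. The gauge transformation `1 + X` solves a linear equation. -/
lemma finite_determinacy [CharZero k] (A : Matrix (Fin n) (Fin n) (LaurentSeries k)) :
    ∃ N : ℤ, ∀ E ∈ matFil k n N, ∃ X ∈ matFil k n 1, adj A X + E * X = -E := by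
  obtain ⟨c, N₀, hD⟩ := adj_solve A
  obtain ⟨a, ha⟩ := exists_mem_matFil A
  refine ⟨max (c + 1) N₀, fun E hE => ?_⟩
  set N := max (c + 1) N₀ with hN
  let T := adj A + AddMonoidHom.mulLeft E
  have hT : ∀ m, ∀ x ∈ matFil k n m, T x ∈ matFil k n (m - (|a| + |N|)) := by
    intro m x hx
    have h1 := neg_abs_le a
    have h2 := neg_abs_le N
    have h3 := abs_nonneg a
    have h4 := abs_nonneg N
    refine add_mem (sub_mem (add_mem ?_ ?_) ?_) ?_
    · exact matFil_anti (by omega) (show x.map (theta k) ∈ matFil k n m from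
        fun i j => theta_mem (hx i j))
    · exact matFil_anti (by omega) (mul_mem_matFil ha hx)
    · exact matFil_anti (by omega) (mul_mem_matFil hx ha)
    · exact matFil_anti (by omega) (mul_mem_matFil hE hx)
  have happ : ∀ m ≥ N, ∀ f ∈ matFil k n m, ∃ x ∈ matFil k n (m - c),
      f - T x ∈ matFil k n (m + 1) := by
    intro m hm f hf
    obtain ⟨x, hx, hxf⟩ := hD m (by omega) f hf
    refine ⟨x, hx, ?_⟩
    have : f - T x = -(E * x) := by
      change f - (adj A x + E * x) = _
      rw [hxf]; abel
    rw [this]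
    exact neg_mem (matFil_anti (by omega) (mul_mem_matFil hE hx))
  obtain ⟨X, hX, hXE⟩ := successive_approx (matFil k n) matFil_anti matFil_sep matFil_complete T
    (|a| + |N|) c N hT happ (-E) (neg_mem hE)
  exact ⟨X, matFil_anti (by omega) hX, hXE⟩

lemma exists_truncation (f : LaurentSeries k) (N : ℤ) :
    ∃ g : LaurentSeries k, g.support.Finite ∧ g - f ∈ fil k N := by
  obtain ⟨m, hm⟩ := exists_mem_fil f
  refine ⟨⟨fun j => if j < N then f.coeff j else 0,
    f.isPWO_support.mono fun j hj h => hj (by simp [h])⟩,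
    (Set.finite_Ico m N).subset fun j hj => ?_, fun j hj => ?_⟩
  · have hj' : (if j < N then f.coeff j else 0) ≠ 0 := hj
    split_ifs at hj' with h
    · exact ⟨not_lt.1 fun h' => hj' (hm j h'), h⟩
    · exact absurd rfl hj'
  · simp [hj]

end FormalGauge

open FormalGauge in
/-- **Every formal connection is gauge equivalent to one with Laurent polynomial
entries.** Let `k` be an algebraically closed field of characteristic zero and
`A ∈ Mₙ(k((t)))`, with `der = d/dt` on `k((t))`. Then there is a matrix
`B ∈ Mₙ(k((t)))` all of whose entries are Laurent polynomials in `t`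
(i.e. each entry has finite support as a Laurent series) such that `B` is gauge
equivalent to `A` over `k((t))`. -/
theorem gauge_equivalent_to_laurent_polynomial
    {k : Type*} [Field k] [IsAlgClosed k] [CharZero k]
    (der : LaurentSeries k → LaurentSeries k)
    (hder : ∀ (f : LaurentSeries k) (m : ℤ), (der f).coeff m = (m + 1) • f.coeff (m + 1))
    (n : ℕ)
    (A : Matrix (Fin n) (Fin n) (LaurentSeries k)) :
    ∃ B : Matrix (Fin n) (Fin n) (LaurentSeries k),
      (∀ i j : Fin n, (B i j).support.Finite) ∧
      ∃ g : Matrix (Fin n) (Fin n) (LaurentSeries k),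
        IsUnit g.det ∧ B = g * A * g⁻¹ - g.map der * g⁻¹ := by
  let t : LaurentSeries k := HahnSeries.single 1 1
  have ht : t ≠ 0 := by simp [t]
  have htd : ∀ f, theta k f = t * der f := by
    intro f
    ext m
    rw [HahnSeries.coeff_single_mul, hder]
    simp
  obtain ⟨N, hN⟩ := finite_determinacy (t • A)
  choose B hBfin hB using fun i j => exists_truncation (A i j) (N - 1)
  have hE : t • (Matrix.of B - A) ∈ matFil k n N := by
    have h1 : Matrix.of B - A ∈ matFil k n (N - 1) := hB
    have h2 : t ∈ fil k 1 := fun j hj => HahnSeries.coeff_single_of_ne (by omega)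
    simpa using smul_mem_matFil h2 h1
  obtain ⟨X, hX, hXE⟩ := hN _ hE
  have hg := isUnit_det_one_add hX
  refine ⟨Matrix.of B, hBfin, 1 + X, hg, ?_⟩
  have hd1 : (1 + X).map (theta k) = X.map (theta k) := by
    have : (1 : Matrix (Fin n) (Fin n) (LaurentSeries k)).map (theta k) = 0 := by
      ext i j m
      by_cases h : i = j
      · subst h
        by_cases hm : m = 0 <;> simp [HahnSeries.coeff_one, hm]
      · simp [Matrix.one_apply_ne h]
    rw [Matrix.map_add _ (map_add _), this, zero_add]
  have hd2 : (1 + X).map (theta k) = t • (1 + X).map der := by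
    ext1 i j
    simp only [Matrix.map_apply, Matrix.smul_apply, htd, smul_eq_mul]
  have key : Matrix.of B * (1 + X) = (1 + X) * A - (1 + X).map der := by
    refine smul_right_injective _ ht ?_
    change t • _ = t • _
    rw [smul_sub, ← hd2, hd1]
    rw [adj_apply] at hXE
    simp only [Matrix.smul_mul, Matrix.mul_smul, sub_mul, smul_sub, mul_add, add_mul, mul_one,
      one_mul, smul_add] at hXE ⊢
    rw [← sub_eq_zero] at hXE ⊢
    rw [← hXE]
    abel
  rw [← sub_mul, ← key, Matrix.mul_nonsing_inv_cancel_right _ _ hg]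
end

section
/- Let k be an algebraically closed field of characteristic zero, and let A₀ ∈ Mₙ(k((t))) and A_∞ ∈ Mₙ(k((s))) be given. Then there exists B ∈ Mₙ(k(t)) with entries rational functions in t such that: (i) B, viewed in Mₙ(k((t))) via Laurent expansion at t = 0, is gauge equivalent to A₀ over the differential field (k((t)), d/dt); and (ii) the matrix −s⁻²·B(1/s), viewed in Mₙ(k((s))) via the substitution t = 1/s (the connection matrix of d + B·dt in the coordinate s at infinity on the projective line), is gauge equivalent to A_∞ over the differential field (k((s)), d/ds). -/
/-!
The gauge class of a formal connection is open in the `t`-adic topology, and `k(t)` is dense in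
`k((t)) × k((s))` under the expansions at `0` and `∞`; the theorem is the combination of the two.

*Openness* (`exists_gauge_of_close`). Let `E = B - A` and look for a gauge `g = 1 + X` from `A` to
`B`. With `θ = t·d/dt`, the condition `B g = g A - g'` reads `δ X = F + F X`, where
`δ X = θ X + t (A X - X A)` and `F = -t E`. It suffices that `δ` has small solutions for small
right-hand sides, with a loss of order bounded by a constant `c` (`exists_solution`): then the
equation is solved by the convergent iteration `δ X₀ = F`, `δ Xᵢ₊₁ = F Xᵢ` as soon as `F` has
order `> c` (`exists_perturbed_solution`).

To solve `δ w = f • v` for a fixed matrix `v` and small scalar `f`, take a nontrivial linear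
relation `∑ aᵢ • δⁱ v = 0`, which exists by finiteness of dimension. Since
`δ (g • u) = θ g • u + g • δ u`, integration by parts gives `z aᵢ • δⁱ v ≡ (-θ)ⁱ (aᵢ z) • v` modulo
the image of `δ`, hence `(∑ (-θ)ⁱ (aᵢ z)) • v` lies in the image for every `z`. The scalar operator
`z ↦ ∑ (-θ)ⁱ (aᵢ z)` acts on the leading coefficient by a nonzero indicial polynomial, which in
characteristic zero has no roots at large integers, so it is onto the series of large order
(`exists_adjoint_solution`).

*Density* (`exists_ratFunc_close_two`). If `a` and `b` are rational functions to be approximated at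
`0` and `∞`, then `a / (1 + t ^ K) + b t ^ K / (1 + t ^ K)` does it for `K` large.
-/

namespace FormalConnection

variable {k : Type*} [Field k]

/-! ### The order filtration on Laurent series -/

/-- `Small N f` says that `f ∈ t ^ N k[[t]]`, i.e. that `f` has order at least `N`; the zero
series is `Small N` for every `N`. -/
def Small (N : ℤ) (f : LaurentSeries k) : Prop := ∀ m < N, f.coeff m = 0

namespace Small

variable {N M : ℤ} {f g : LaurentSeries k}

lemma mono (h : Small N f) (hM : M ≤ N) : Small M f := fun m hm => h m (hm.trans_le hM)

lemma zero : Small N (0 : LaurentSeries k) := fun _ _ => rfl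

lemma add (hf : Small N f) (hg : Small N g) : Small N (f + g) := fun m hm => by
  simp [hf m hm, hg m hm]

lemma neg (hf : Small N f) : Small N (-f) := fun m hm => by simp [hf m hm]

lemma sub (hf : Small N f) (hg : Small N g) : Small N (f - g) := fun m hm => by
  simp [hf m hm, hg m hm]

lemma sum {ι : Type*} {s : Finset ι} {F : ι → LaurentSeries k} (h : ∀ i ∈ s, Small N (F i)) :
    Small N (∑ i ∈ s, F i) := fun m hm => by
  rw [HahnSeries.coeff_sum]
  exact Finset.sum_eq_zero fun i hi => h i hi m hm

lemma mul (hf : Small N f) (hg : Small M g) : Small (N + M) (f * g) := fun m hm => by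
  rw [HahnSeries.coeff_mul]
  refine Finset.sum_eq_zero fun ij hij => ?_
  have hij : ij.1 + ij.2 = m := (Finset.mem_antidiagonal.1 hij).2.2
  rcases lt_or_ge ij.1 N with h | h
  · rw [hf _ h, zero_mul]
  · rw [hg _ (by omega), mul_zero]

lemma single (n : ℤ) (a : k) : Small n (HahnSeries.single n a : LaurentSeries k) :=
  fun _ hm => HahnSeries.coeff_single_of_ne hm.ne

lemma eq_zero (h : ∀ N, Small N f) : f = 0 :=
  HahnSeries.ext <| funext fun m => h (m + 1) m (lt_add_one m)

lemma exists_nat (f : LaurentSeries k) : ∃ c : ℕ, Small (-c : ℤ) f :=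
  ⟨f.order.natAbs, fun m hm => HahnSeries.coeff_eq_zero_of_lt_order (by omega)⟩

lemma ofPowerSeries (F : PowerSeries k) : Small 0 (HahnSeries.ofPowerSeries ℤ k F) :=
  fun m hm => by rw [PowerSeries.coeff_coe, if_pos hm]

lemma exists_powerSeries (h : Small 0 f) :
    ∃ F : PowerSeries k, HahnSeries.ofPowerSeries ℤ k F = f := by
  refine ⟨PowerSeries.mk fun n => f.coeff n, ?_⟩
  ext m
  rw [PowerSeries.coeff_coe]
  split_ifs with hm
  · exact (h m hm).symm
  · rw [PowerSeries.coeff_mk, Int.natAbs_of_nonneg (not_lt.1 hm)]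

end Small

/-! ### The Euler derivation and scalar equations -/

/-- The Euler derivation `θ = t·d/dt`, multiplying the coefficient of `t ^ m` by `m`. -/
def theta (f : LaurentSeries k) : LaurentSeries k where
  coeff m := m * f.coeff m
  isPWO_support' := f.isPWO_support.mono fun m hm => by
    intro h0
    exact hm (by simp [h0])

@[simp] lemma theta_coeff (f : LaurentSeries k) (m : ℤ) : (theta f).coeff m = m * f.coeff m := rfl

lemma theta_add (f g : LaurentSeries k) : theta (f + g) = theta f + theta g := by
  ext m; simp [mul_add]

lemma theta_support (f : LaurentSeries k) : (theta f).support ⊆ f.support := fun m hm h0 =>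
  hm (by simp [h0])

lemma theta_mul (f g : LaurentSeries k) : theta (f * g) = theta f * g + f * theta g := by
  ext m
  rw [HahnSeries.coeff_add, theta_coeff, HahnSeries.coeff_mul,
    HahnSeries.coeff_mul_left' f.isPWO_support (theta_support f),
    HahnSeries.coeff_mul_right' g.isPWO_support (theta_support g), Finset.mul_sum,
    ← Finset.sum_add_distrib]
  refine Finset.sum_congr rfl fun ij hij => ?_
  have hij : ij.1 + ij.2 = m := (Finset.mem_antidiagonal.1 hij).2.2
  rw [← hij]
  simp only [theta_coeff]
  push_cast
  ring

lemma Small.theta {N : ℤ} {f : LaurentSeries k} (h : Small N f) : Small N (theta f) :=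
  fun m hm => by simp [h m hm]

lemma iterate_neg_theta_coeff (i : ℕ) (f : LaurentSeries k) (m : ℤ) :
    ((fun g => -theta g)^[i] f).coeff m = (-(m : k)) ^ i * f.coeff m := by
  induction i generalizing f with
  | zero => simp
  | succ i ih => rw [Function.iterate_succ_apply, ih]; simp; ring

/-- Coefficientwise solution of a triangular linear recursion whose diagonal `Q 0 m` is
invertible for `m ≥ N`. -/
lemma exists_recursion (Q : ℕ → ℕ → k) (φ : ℕ → k) (N : ℕ) (hQ : ∀ m ≥ N, Q 0 m ≠ 0)
    (hφ : ∀ m < N, φ m = 0) :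
    ∃ z : ℕ → k, (∀ m < N, z m = 0) ∧
      ∀ m, ∑ p ∈ Finset.HasAntidiagonal.antidiagonal m, Q p.1 m * z p.2 = φ m := by
  let step : (m : ℕ) → ((l : ℕ) → l < m → k) → k := fun m ih =>
    if m < N then 0 else (φ m - ∑ l : Fin m, Q (m - l) m * ih l l.2) / Q 0 m
  let z : ℕ → k := WellFounded.fix Nat.lt_wfRel.wf step
  have hz : ∀ m, z m = step m fun l _ => z l := fun m => WellFounded.fix_eq _ step m
  have hz0 : ∀ m < N, z m = 0 := fun m hm => by rw [hz]; simp [step, hm]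
  refine ⟨z, hz0, fun m => ?_⟩
  rcases lt_or_ge m N with hm | hm
  · rw [hφ m hm]
    refine Finset.sum_eq_zero fun p hp => ?_
    rw [hz0 p.2 (by have := Finset.HasAntidiagonal.mem_antidiagonal.1 hp; omega), mul_zero]
  · rw [Finset.Nat.sum_antidiagonal_eq_sum_range_succ_mk, Finset.sum_range_succ',
      ← Finset.sum_range_reflect]
    have h1 : Q 0 m * z m = φ m - ∑ l : Fin m, Q (m - l) m * z l := by
      conv_lhs => rw [hz]
      simp only [step, if_neg (not_lt.2 hm)]
      rw [mul_div_cancel₀ _ (hQ m hm)]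
    simp only [Nat.sub_zero]
    rw [h1, Fin.sum_univ_eq_sum_range (fun l => Q (m - l) m * z l)]
    rw [Finset.sum_congr rfl (g := fun l => Q (m - l) m * z l)]
    · ring
    · intro l hl
      have := Finset.mem_range.1 hl
      congr 2 <;> omega

/-- A nonzero family of Laurent series can be rescaled to be integral and nonzero modulo `t`. -/
lemma exists_normalization {r : ℕ} (g : Fin r → LaurentSeries k) (i₁ : Fin r) (h : g i₁ ≠ 0) :
    ∃ u : LaurentSeries k, (∀ i, Small 0 (u * g i)) ∧ ∃ i₀, (u * g i₀).coeff 0 ≠ 0 := by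
  classical
  obtain ⟨i₀, hi₀, hmin⟩ := Finset.exists_min_image (Finset.univ.filter fun i => g i ≠ 0)
    (fun i => (g i).order) ⟨i₁, by simp [h]⟩
  refine ⟨HahnSeries.single (-(g i₀).order) 1, fun i m hm => ?_, i₀, ?_⟩
  · rw [HahnSeries.coeff_single_mul, one_mul]
    by_cases hi : g i = 0
    · simp [hi]
    · have := hmin i (by simp [hi])
      exact HahnSeries.coeff_eq_zero_of_lt_order (by omega)
  · rw [HahnSeries.coeff_single_mul, one_mul]
    simpa using (Finset.mem_filter.1 hi₀).2

/-- The operator `z ↦ ∑ (-θ)ⁱ (aᵢ z)` with integral coefficients, not all divisible by `t`, maps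
`t ^ N k[[t]]` onto itself for large `N`: on the coefficient of `t ^ m` its diagonal part is the
indicial polynomial `∑ aᵢ(0) xⁱ` at `x = -m`. -/
lemma exists_adjoint_solution [CharZero k] {r : ℕ} (a : Fin r → LaurentSeries k)
    (ha : ∀ i, Small 0 (a i)) (i₀ : Fin r) (hi₀ : (a i₀).coeff 0 ≠ 0) :
    ∃ N₀ : ℕ, ∀ N : ℤ, N₀ ≤ N → ∀ f, Small N f →
      ∃ z, Small N z ∧ ∑ i : Fin r, (fun g => -theta g)^[(i : ℕ)] (a i * z) = f := by
  choose α hα using fun i => (ha i).exists_powerSeries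
  let q : Polynomial k := ∑ i : Fin r, Polynomial.monomial (i : ℕ) ((a i).coeff 0)
  have hq : q ≠ 0 := fun h => hi₀ <| by
    have := congrArg (Polynomial.coeff · (i₀ : ℕ)) h
    simpa [q, Polynomial.finsetSum_coeff, Polynomial.coeff_monomial, Fin.val_inj] using this
  have hqe : ∀ x, q.eval x = ∑ i : Fin r, (a i).coeff 0 * x ^ (i : ℕ) := fun x => by
    simp [q, Polynomial.eval_finsetSum]
  obtain ⟨N₀, hN₀⟩ : ∃ N₀ : ℕ, ∀ m : ℕ, N₀ ≤ m → q.eval (-(m : k)) ≠ 0 := by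
    have hfin : {m : ℕ | q.eval (-(m : k)) = 0}.Finite := by
      refine Set.Finite.of_finite_image (f := fun m : ℕ => -(m : k)) ?_ ?_
      · classical
        refine (q.roots.toFinset.finite_toSet).subset ?_
        rintro _ ⟨m, hm, rfl⟩
        simpa [hq] using hm
      · intro x _ y _ h
        simpa using h
    obtain ⟨b, hb⟩ := hfin.bddAbove
    exact ⟨b + 1, fun m hm h => by have := hb h; omega⟩
  refine ⟨N₀, fun N hN f hf => ?_⟩
  lift N to ℕ using by omega
  obtain ⟨φ, rfl⟩ := (hf.mono (by omega : (0:ℤ) ≤ N)).exists_powerSeries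
  obtain ⟨z, hz0, hz⟩ := exists_recursion
    (fun j m => ∑ i : Fin r, (-(m : k)) ^ (i : ℕ) * PowerSeries.coeff j (α i))
    (fun m => PowerSeries.coeff m φ) N
    (fun m hm => by
      have := hN₀ m (by omega)
      rw [hqe] at this
      convert this using 2 with i
      rw [← hα i, mul_comm]
      congr 1
      exact (LaurentSeries.coeff_coe_powerSeries (α i) 0).symm)
    (fun m hm => by
      have := hf m (by omega)
      rwa [LaurentSeries.coeff_coe_powerSeries] at this)
  refine ⟨HahnSeries.ofPowerSeries ℤ k (PowerSeries.mk z), fun m hm => ?_, ?_⟩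
  · rw [PowerSeries.coeff_coe]
    split_ifs with h
    · rfl
    · rw [PowerSeries.coeff_mk, hz0 _ (by omega)]
  · ext m
    rw [HahnSeries.coeff_sum]
    simp only [iterate_neg_theta_coeff, ← hα, ← map_mul]
    rcases lt_or_ge m 0 with hm | hm
    · simp only [Small.ofPowerSeries _ m hm, mul_zero, Finset.sum_const_zero]
    · lift m to ℕ using hm
      simp only [LaurentSeries.coeff_coe_powerSeries, ← hz m, PowerSeries.coeff_mul,
        PowerSeries.coeff_mk, Finset.mul_sum, Finset.sum_mul, Int.cast_natCast]
      rw [Finset.sum_comm]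
      simp only [mul_assoc]


/-! ### The order filtration on matrices -/

/-- All entries of the matrix have order at least `N`. -/
def SmallM {n : ℕ} (N : ℤ) (X : Matrix (Fin n) (Fin n) (LaurentSeries k)) : Prop :=
  ∀ i j, Small N (X i j)

namespace SmallM

variable {n : ℕ} {N M : ℤ} {X Y : Matrix (Fin n) (Fin n) (LaurentSeries k)}

lemma mono (h : SmallM N X) (hM : M ≤ N) : SmallM M X := fun i j => (h i j).mono hM

lemma add (hX : SmallM N X) (hY : SmallM N Y) : SmallM N (X + Y) :=
  fun i j => (hX i j).add (hY i j)

lemma sub (hX : SmallM N X) (hY : SmallM N Y) : SmallM N (X - Y) :=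
  fun i j => (hX i j).sub (hY i j)

lemma neg (hX : SmallM N X) : SmallM N (-X) := fun i j => (hX i j).neg

lemma sum {ι : Type*} {s : Finset ι} {F : ι → Matrix (Fin n) (Fin n) (LaurentSeries k)}
    (h : ∀ i ∈ s, SmallM N (F i)) : SmallM N (∑ i ∈ s, F i) := fun i j => by
  rw [Matrix.sum_apply]
  exact Small.sum fun l hl => h l hl i j

lemma smul {f : LaurentSeries k} (hf : Small N f) (hX : SmallM M X) : SmallM (N + M) (f • X) :=
  fun i j => hf.mul (hX i j)

lemma mul (hX : SmallM N X) (hY : SmallM M Y) : SmallM (N + M) (X * Y) := fun i j => by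
  rw [Matrix.mul_apply]
  exact Small.sum fun l _ => (hX i l).mul (hY l j)

lemma eq_zero (h : ∀ N, SmallM N X) : X = 0 := by
  ext1 i j
  exact Small.eq_zero fun N => h N i j

lemma exists_nat (X : Matrix (Fin n) (Fin n) (LaurentSeries k)) : ∃ c : ℕ, SmallM (-c : ℤ) X := by
  choose c hc using fun p : Fin n × Fin n => Small.exists_nat (X p.1 p.2)
  refine ⟨∑ p, c p, fun i j => (hc (i, j)).mono ?_⟩
  have := Finset.single_le_sum (f := c) (fun _ _ => Nat.zero_le _) (Finset.mem_univ (i, j))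
  omega

end SmallM

/-! ### Solving the linear equation `δ X = Y` -/

/-- Modulo the image of `δ`, the powers of `δ` can be moved from `v` to the scalar `f`, with a
primitive whose loss of order does not depend on `f`. -/
lemma exists_integration_by_parts {n : ℕ}
    (δ : Matrix (Fin n) (Fin n) (LaurentSeries k) →+ Matrix (Fin n) (Fin n) (LaurentSeries k))
    (hδ : ∀ (f : LaurentSeries k) X, δ (f • X) = theta f • X + f • δ X)
    (v : Matrix (Fin n) (Fin n) (LaurentSeries k)) (i : ℕ) :
    ∃ c : ℕ, ∀ (N : ℤ) (f : LaurentSeries k), Small N f →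
      ∃ w, SmallM (N - c) w ∧ δ w = f • δ^[i] v - ((fun g => -theta g)^[i] f) • v := by
  induction i with
  | zero => exact ⟨0, fun N f _ => ⟨0, fun _ _ => Small.zero, by simp⟩⟩
  | succ i ih =>
    obtain ⟨c, hc⟩ := ih
    obtain ⟨d, hd⟩ := SmallM.exists_nat (δ^[i] v)
    refine ⟨c + d, fun N f hf => ?_⟩
    obtain ⟨w, hw, hδw⟩ := hc N _ hf.theta.neg
    refine ⟨f • δ^[i] v + w, ?_, ?_⟩
    · exact ((SmallM.smul hf hd).mono (by push_cast; omega)).add (hw.mono (by push_cast; omega))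
    · rw [map_add, hδ, hδw, Function.iterate_succ_apply', Function.iterate_succ_apply, neg_smul]
      abel

/-- `exists_solution` for right-hand sides that are multiples of a fixed matrix `v`. The scalar
`f` is written as `∑ (-θ)ⁱ (aᵢ z)`, where `∑ aᵢ • δⁱ v = 0`. -/
lemma exists_solution_smul [CharZero k] {n : ℕ}
    (δ : Matrix (Fin n) (Fin n) (LaurentSeries k) →+ Matrix (Fin n) (Fin n) (LaurentSeries k))
    (hδ : ∀ (f : LaurentSeries k) X, δ (f • X) = theta f • X + f • δ X)
    (v : Matrix (Fin n) (Fin n) (LaurentSeries k)) :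
    ∃ c : ℕ, ∀ N : ℤ, c ≤ N → ∀ f : LaurentSeries k, Small N f →
      ∃ w, SmallM (N - c) w ∧ δ w = f • v := by
  let r := Module.finrank (LaurentSeries k) (Matrix (Fin n) (Fin n) (LaurentSeries k)) + 1
  obtain ⟨g, hg, i₁, hi₁⟩ : ∃ g : Fin r → LaurentSeries k,
      ∑ i, g i • δ^[(i : ℕ)] v = 0 ∧ ∃ i, g i ≠ 0 := by
    refine Fintype.not_linearIndependent_iff.1 fun h => ?_
    have := h.fintype_card_le_finrank
    simp [r] at this
  obtain ⟨u, hu, i₀, hi₀⟩ := exists_normalization g i₁ hi₁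
  obtain ⟨N₀, hN₀⟩ := exists_adjoint_solution (fun i => u * g i) hu i₀ hi₀
  choose c hc using exists_integration_by_parts δ hδ v
  refine ⟨N₀ + ∑ i : Fin r, c i, fun N hN f hf => ?_⟩
  obtain ⟨z, hz, hzf⟩ := hN₀ N (by omega) f hf
  choose w hw hδw using fun i : Fin r => hc i (0 + N) _ ((hu i).mul hz)
  refine ⟨-∑ i, w i, (SmallM.sum fun i _ => (hw i).mono ?_).neg, ?_⟩
  · have := Finset.single_le_sum (f := fun i : Fin r => c i) (fun _ _ => Nat.zero_le _)
      (Finset.mem_univ i)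
    push_cast
    have h2 : (c i : ℤ) ≤ ∑ i : Fin r, (c i : ℤ) := by exact_mod_cast this
    omega
  · rw [map_neg, map_sum, Finset.sum_congr rfl fun i _ => hδw i, Finset.sum_sub_distrib,
      ← Finset.sum_smul, hzf]
    have : ∑ i : Fin r, (u * g i * z) • δ^[(i : ℕ)] v = 0 := by
      rw [← smul_zero (u * z), ← hg, Finset.smul_sum]
      refine Finset.sum_congr rfl fun i _ => ?_
      rw [smul_smul]
      congr 1
      ring
    rw [this]
    abel

/-- A derivation-like operator `δ` over `θ` has small solutions for small right-hand sides, with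
a bounded loss of order. -/
lemma exists_solution [CharZero k] {n : ℕ}
    (δ : Matrix (Fin n) (Fin n) (LaurentSeries k) →+ Matrix (Fin n) (Fin n) (LaurentSeries k))
    (hδ : ∀ (f : LaurentSeries k) X, δ (f • X) = theta f • X + f • δ X) :
    ∃ c : ℕ, ∀ N : ℤ, c ≤ N → ∀ Y, SmallM N Y →
      ∃ X, SmallM (N - c) X ∧ δ X = Y := by
  choose c hc using fun p : Fin n × Fin n =>
    exists_solution_smul δ hδ (Matrix.single p.1 p.2 1)
  have hle : ∀ p, c p ≤ ∑ p, c p := fun p =>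
    Finset.single_le_sum (f := c) (fun _ _ => Nat.zero_le _) (Finset.mem_univ p)
  refine ⟨∑ p, c p, fun N hN Y hY => ?_⟩
  choose w hw hδw using fun p : Fin n × Fin n =>
    hc p N (by have := hle p; omega) (Y p.1 p.2) (hY p.1 p.2)
  refine ⟨∑ p, w p, SmallM.sum fun p _ => (hw p).mono (by have := hle p; omega), ?_⟩
  rw [map_sum, Finset.sum_congr rfl fun p _ => hδw p, Fintype.sum_prod_type]
  conv_rhs => rw [Matrix.matrix_eq_sum_single Y]
  simp [Matrix.smul_single]

/-! ### Finite determinacy of formal connections -/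

/-- Convergence of the series `∑ x l` when `x l` has order at least `l + 1`, with the tail
estimate. -/
lemma exists_limit (x : ℕ → LaurentSeries k) (hx : ∀ l : ℕ, Small (l + 1) (x l)) :
    ∃ y : LaurentSeries k, ∀ M : ℕ, Small (M + 1) (y - ∑ l ∈ Finset.range M, x l) := by
  refine ⟨HahnSeries.ofPowerSeries ℤ k
    (PowerSeries.mk fun m => ∑ l ∈ Finset.range m, (x l).coeff m), fun M m hm => ?_⟩
  rw [HahnSeries.coeff_sub, HahnSeries.coeff_sum, sub_eq_zero]
  rcases lt_or_ge m 0 with h | h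
  · rw [Small.ofPowerSeries _ m h, Finset.sum_eq_zero fun l _ => hx l m (by omega)]
  · lift m to ℕ using h
    rw [LaurentSeries.coeff_coe_powerSeries, PowerSeries.coeff_mk]
    refine Finset.sum_subset (Finset.range_mono (by omega)) fun l _ hl => hx l m ?_
    rw [Finset.mem_range] at hl
    omega

/-- Perturbation of `δ X = F` by a term of order exceeding the loss `c` of the solution operator
of `δ`. -/
lemma exists_perturbed_solution {n : ℕ} (δ : Matrix (Fin n) (Fin n) (LaurentSeries k) →+
      Matrix (Fin n) (Fin n) (LaurentSeries k)) (r c : ℕ)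
    (hr : ∀ N X, SmallM N X → SmallM (N - r) (δ X))
    (hc : ∀ N : ℤ, c ≤ N → ∀ Y, SmallM N Y → ∃ X, SmallM (N - c) X ∧ δ X = Y)
    (F : Matrix (Fin n) (Fin n) (LaurentSeries k)) (hF : SmallM (c + 1) F) :
    ∃ X, SmallM 1 X ∧ δ X = F + F * X := by
  have hS : ∀ (N : ℤ) Y, ∃ X, c ≤ N → SmallM N Y → SmallM (N - c) X ∧ δ X = Y := fun N Y => by
    by_cases h : c ≤ N ∧ SmallM N Y
    · obtain ⟨X, hX⟩ := hc N h.1 Y h.2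
      exact ⟨X, fun _ _ => hX⟩
    · exact ⟨0, fun h1 h2 => (h ⟨h1, h2⟩).elim⟩
  choose S hS using hS
  -- the iteration `δ (x 0) = F`, `δ (x (l + 1)) = F * x l`
  let x : ℕ → Matrix (Fin n) (Fin n) (LaurentSeries k) := fun l =>
    Nat.rec (S (c + 1) F) (fun l X => S (c + l + 2) (F * X)) l
  have hx0 : x 0 = S (c + 1) F := rfl
  have hxs : ∀ l, x (l + 1) = S (c + l + 2) (F * x l) := fun _ => rfl
  have hx : ∀ l : ℕ, SmallM (l + 1) (x l) := fun l => by
    induction l with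
    | zero => exact (hS _ _ (by omega) hF).1.mono (by simp)
    | succ l ih =>
      rw [hxs]
      exact (hS _ _ (by omega) ((hF.mul ih).mono (by omega))).1.mono (by push_cast; omega)
  have hδ0 : δ (x 0) = F := (hS _ _ (by omega) hF).2
  have hδs : ∀ l, δ (x (l + 1)) = F * x l := fun l =>
    (hS _ _ (by omega) ((hF.mul (hx l)).mono (by omega))).2
  have hP : ∀ M, δ (∑ l ∈ Finset.range (M + 1), x l) = F + F * ∑ l ∈ Finset.range M, x l :=
    fun M => by
      rw [map_sum, Finset.sum_range_succ', hδ0, Finset.sum_congr rfl fun l _ => hδs l,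
        ← Finset.mul_sum, add_comm]
  choose y hy using fun i j => exists_limit (fun l => x l i j) fun l => hx l i j
  have hX : ∀ M : ℕ, SmallM (M + 1) (Matrix.of y - ∑ l ∈ Finset.range M, x l) :=
    fun M i j => by simpa [Matrix.sum_apply] using hy i j M
  refine ⟨Matrix.of y, by simpa using hX 0, ?_⟩
  rw [← sub_eq_zero]
  have key : ∀ M : ℕ, δ (Matrix.of y) - (F + F * Matrix.of y) =
      δ (Matrix.of y - ∑ l ∈ Finset.range (M + 1), x l) -
        F * (Matrix.of y - ∑ l ∈ Finset.range M, x l) := fun M => by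
    rw [map_sub, hP, mul_sub]
    abel
  -- both terms on the right of `key` have order tending to infinity with `M`
  refine SmallM.eq_zero fun N => ?_
  rw [key (N.toNat + r)]
  exact ((hr _ _ (hX _)).mono (by omega)).sub ((hF.mul (hX _)).mono (by omega))

lemma isUnit_det_one_add {n : ℕ} {X : Matrix (Fin n) (Fin n) (LaurentSeries k)}
    (hX : SmallM 1 X) : IsUnit (1 + X).det := by
  choose F hF using fun i j => ((hX i j).mono zero_le_one).exists_powerSeries
  have h1 : 1 + X = (HahnSeries.ofPowerSeries ℤ k).mapMatrix (1 + Matrix.of F) := by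
    rw [map_add, map_one]
    congr 1
    ext1 i j
    exact (hF i j).symm
  rw [h1, ← RingHom.map_det]
  refine IsUnit.map _ ?_
  rw [PowerSeries.isUnit_iff_constantCoeff, RingHom.map_det, map_add, map_one]
  have h2 : (PowerSeries.constantCoeff (R := k)).mapMatrix (Matrix.of F) = 0 := by
    ext i j
    have := hX i j 0 zero_lt_one
    rw [← hF] at this
    simpa using (LaurentSeries.coeff_coe_powerSeries (F i j) 0).symm.trans this
  rw [h2]
  simp

/-- Finite determinacy: every matrix agreeing with `A` to high enough order is gauge equivalent
to `A`. -/
theorem exists_gauge_of_close [CharZero k] (der : LaurentSeries k → LaurentSeries k)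
    (hder : ∀ (f : LaurentSeries k) (m : ℤ), (der f).coeff m = (m + 1) • f.coeff (m + 1))
    {n : ℕ} (A : Matrix (Fin n) (Fin n) (LaurentSeries k)) :
    ∃ N : ℤ, ∀ B, SmallM N (B - A) → ∃ g : Matrix (Fin n) (Fin n) (LaurentSeries k),
      IsUnit g.det ∧ B = g * A * g⁻¹ - g.map der * g⁻¹ := by
  set t : LaurentSeries k := HahnSeries.single 1 1 with ht
  have ht0 : t ≠ 0 := by simp [ht]
  have htd : ∀ f, t * der f = theta f := fun f => by
    ext m
    rw [ht, HahnSeries.coeff_single_mul, hder]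
    simp
  let δ : Matrix (Fin n) (Fin n) (LaurentSeries k) →+ Matrix (Fin n) (Fin n) (LaurentSeries k) :=
    AddMonoidHom.mk' (fun X => X.map theta + t • (A * X - X * A)) fun X Y => by
      have : (X + Y).map theta = X.map theta + Y.map theta := by
        ext1 i j
        exact theta_add _ _
      simp only [this, mul_add, add_mul, smul_sub, smul_add]
      abel
  have hδdef : ∀ X, δ X = X.map theta + t • (A * X - X * A) := fun _ => rfl
  have hδ : ∀ (f : LaurentSeries k) X, δ (f • X) = theta f • X + f • δ X := fun f X => by
    have : (f • X).map theta = theta f • X + f • X.map theta := by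
      ext1 i j
      exact theta_mul _ _
    simp only [hδdef, this, Matrix.mul_smul, Matrix.smul_mul, smul_add, smul_sub, smul_comm f t]
    abel
  obtain ⟨c, hc⟩ := exists_solution δ hδ
  obtain ⟨r, hr⟩ := SmallM.exists_nat A
  have ht1 : Small 1 t := Small.single 1 1
  refine ⟨c, fun B hB => ?_⟩
  obtain ⟨X, hX, hδX⟩ := exists_perturbed_solution δ r c
    (fun N X hX => by
      rw [hδdef]
      refine SmallM.add (fun i j => (hX i j).theta.mono (by omega)) ?_
      exact (SmallM.smul ht1 (((hr.mul hX).mono (by omega : N - r ≤ _)).sub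
        ((hX.mul hr).mono (by omega)))).mono (by omega))
    hc (-(t • (B - A))) ((SmallM.smul ht1 hB).neg.mono (by omega))
  have hu := isUnit_det_one_add hX
  refine ⟨1 + X, hu, ?_⟩
  have hder1 : (1 + X).map der = X.map der := by
    ext i j m
    simp only [Matrix.map_apply, Matrix.add_apply, hder, HahnSeries.coeff_add]
    by_cases h : i = j
    · subst h
      by_cases hm : m + 1 = 0
      · simp [hm]
      · simp [HahnSeries.coeff_one, hm]
    · simp [Matrix.one_apply_ne h]
  have hXt : X.map theta = t • X.map der := by
    ext1 i j
    exact (htd _).symm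
  rw [hδdef, hXt] at hδX
  have h2 : X.map der + (A * X - X * A) = -((B - A) + (B - A) * X) := by
    refine smul_right_injective _ ht0 ?_
    simp only [smul_add, smul_neg] at hδX ⊢
    rw [hδX, neg_mul, Matrix.smul_mul, neg_add]
  have h3 : B * (1 + X) = (1 + X) * A - (1 + X).map der := by
    rw [hder1, eq_sub_of_add_eq h2]
    noncomm_ring
  calc B = B * (1 + X) * (1 + X)⁻¹ := (Matrix.mul_nonsing_inv_cancel_right _ _ hu).symm
    _ = _ := by rw [h3, sub_mul]

/-! ### Approximation by rational functions at `0` and `∞` -/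

section Approximation

open scoped RatFunc

lemma exists_ratFunc_close (a : LaurentSeries k) (N : ℤ) :
    ∃ q : RatFunc k, Small N (algebraMap (RatFunc k) (LaurentSeries k) q - a) := by
  obtain ⟨q, hq⟩ := LaurentSeries.exists_ratFunc_val_lt a
    (Units.mk0 (WithZero.exp (-N : ℤ)) WithZero.exp_ne_zero)
  refine ⟨q, ?_⟩
  rw [← neg_sub]
  exact Small.neg ((LaurentSeries.valuation_le_iff_coeff_lt_eq_zero k).1 hq.le)

/-- The substitution `t ↦ 1/t` is an involution of `k(t)`. -/
lemma involutive_of_X_inv (σ : RatFunc k →+* RatFunc k) (hσX : σ RatFunc.X = (RatFunc.X)⁻¹)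
    (hσC : ∀ a : k, σ (RatFunc.C a) = RatFunc.C a) (f : RatFunc k) : σ (σ f) = f := by
  have : σ.comp σ = RingHom.id _ := by
    refine IsFractionRing.ringHom_ext (A := Polynomial k) fun p => ?_
    suffices h : (σ.comp σ).comp (algebraMap (Polynomial k) (RatFunc k)) =
        (RingHom.id _).comp (algebraMap (Polynomial k) (RatFunc k)) from RingHom.congr_fun h p
    refine Polynomial.ringHom_ext (fun a => ?_) ?_
    · simp [hσC]
    · simp [hσX]
  exact RingHom.congr_fun this f

/-- The function `1 / (1 + t ^ K)` is regular at `t = 0`. -/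
lemma small_inv_one_add_X_pow (K : ℕ) (hK : 0 < K) :
    (1 + RatFunc.X ^ K : RatFunc k) ≠ 0 ∧
      Small 0 (algebraMap (RatFunc k) (LaurentSeries k) (1 + RatFunc.X ^ K)⁻¹) := by
  have h1 : algebraMap (RatFunc k) (LaurentSeries k) (1 + RatFunc.X ^ K) =
      HahnSeries.ofPowerSeries ℤ k (1 + PowerSeries.X ^ K) := by
    simp
  have h2 : (1 + PowerSeries.X ^ K : PowerSeries k) * (1 + PowerSeries.X ^ K)⁻¹ = 1 :=
    PowerSeries.mul_inv_cancel _ (by simp [hK.ne'])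
  have h3 : algebraMap (RatFunc k) (LaurentSeries k) (1 + RatFunc.X ^ K) *
      HahnSeries.ofPowerSeries ℤ k (1 + PowerSeries.X ^ K)⁻¹ = 1 := by
    rw [h1, ← map_mul, h2, map_one]
  refine ⟨fun h => ?_, ?_⟩
  · rw [h, map_zero, zero_mul] at h3
    exact zero_ne_one h3
  · rw [map_inv₀, inv_eq_of_mul_eq_one_right h3]
    exact Small.ofPowerSeries _

/-- Simultaneous approximation of Laurent series at `0` and at `∞` by a rational function. -/
lemma exists_ratFunc_close_two (σ : RatFunc k →+* RatFunc k) (hσX : σ RatFunc.X = (RatFunc.X)⁻¹)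
    (hσC : ∀ a : k, σ (RatFunc.C a) = RatFunc.C a) (a b : LaurentSeries k) (N : ℤ) :
    ∃ q : RatFunc k, Small N (algebraMap (RatFunc k) (LaurentSeries k) q - a) ∧
      Small N (algebraMap (RatFunc k) (LaurentSeries k) (σ q) - b) := by
  obtain ⟨a₁, ha⟩ := exists_ratFunc_close a N
  obtain ⟨b₁, hb⟩ := exists_ratFunc_close b N
  obtain ⟨c, hc⟩ := Small.exists_nat (algebraMap (RatFunc k) (LaurentSeries k) (σ b₁ - a₁))
  obtain ⟨d, hd⟩ := Small.exists_nat (algebraMap (RatFunc k) (LaurentSeries k) (σ a₁ - b₁))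
  let K : ℕ := N.toNat + c + d + 1
  obtain ⟨hK0, hKs⟩ := small_inv_one_add_X_pow (k := k) K (by omega)
  have hXK : Small K (algebraMap (RatFunc k) (LaurentSeries k) (RatFunc.X ^ K)) := by
    rw [map_pow, RatFunc.coe_X, ← RatFunc.single_one_eq_pow]
    exact Small.single _ _
  have hσ1 : σ (1 + RatFunc.X ^ K)⁻¹ = RatFunc.X ^ K * (1 + RatFunc.X ^ K)⁻¹ := by
    have hX : (RatFunc.X : RatFunc k) ^ K ≠ 0 := pow_ne_zero _ RatFunc.X_ne_zero
    rw [map_inv₀, map_add, map_one, map_pow, hσX, inv_pow]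
    have : 1 + (RatFunc.X ^ K : RatFunc k)⁻¹ = (1 + RatFunc.X ^ K) * (RatFunc.X ^ K)⁻¹ := by
      rw [add_mul, one_mul, mul_inv_cancel₀ hX, add_comm]
    rw [this, mul_inv, inv_inv, mul_comm]
  have hone : (1 + RatFunc.X ^ K : RatFunc k) * (1 + RatFunc.X ^ K)⁻¹ = 1 := mul_inv_cancel₀ hK0
  set u : RatFunc k := (1 + RatFunc.X ^ K)⁻¹ with hu
  have hq : ∀ x y : RatFunc k, x * u + y * (RatFunc.X ^ K * u) =
      x + (y - x) * (RatFunc.X ^ K * u) := fun x y => by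
    linear_combination x * hone
  have hsm : ∀ (x : LaurentSeries k) (x₁ y : RatFunc k) (e : ℕ), (e : ℤ) + N ≤ K →
      Small N (algebraMap (RatFunc k) (LaurentSeries k) x₁ - x) →
      Small (-e : ℤ) (algebraMap (RatFunc k) (LaurentSeries k) (y - x₁)) →
      Small N (algebraMap (RatFunc k) (LaurentSeries k)
        (x₁ * u + y * (RatFunc.X ^ K * u)) - x) := fun x x₁ y e he hx hy => by
    rw [hq, map_add, add_sub_right_comm, map_mul, map_mul]
    exact hx.add ((hy.mul (hXK.mul hKs)).mono (by omega))
  refine ⟨a₁ * u + σ b₁ * (RatFunc.X ^ K * u), hsm a a₁ (σ b₁) c (by omega) ha hc, ?_⟩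
  have : σ (a₁ * u + σ b₁ * (RatFunc.X ^ K * u)) = b₁ * u + σ a₁ * (RatFunc.X ^ K * u) := by
    have h := involutive_of_X_inv σ hσX hσC
    rw [map_add, map_mul, map_mul, h, ← hσ1, h]
    ring
  rw [this]
  exact hsm b b₁ (σ a₁) d (by omega) hb hd

/-- In the coordinate `s = 1/t`, `-s⁻² q` is close to `a` once `q` is close to `-s² a`. -/
lemma small_at_infinity (q : RatFunc k) (a : LaurentSeries k) (M : ℤ)
    (h : Small (M + 2) (algebraMap (RatFunc k) (LaurentSeries k) q -
      -(HahnSeries.single 1 1 ^ 2 * a))) :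
    Small M (algebraMap (RatFunc k) (LaurentSeries k) (-(RatFunc.X ^ 2)⁻¹ * q) - a) := by
  have hs : (HahnSeries.single (1 : ℤ) (1 : k) : LaurentSeries k) ^ 2 ≠ 0 :=
    pow_ne_zero _ (by simp)
  have hsInv : ((HahnSeries.single (1 : ℤ) (1 : k) : LaurentSeries k) ^ 2)⁻¹ =
      HahnSeries.single (-2) 1 := by
    rw [← RatFunc.single_one_eq_pow, HahnSeries.inv_single]
    simp
  have key : algebraMap (RatFunc k) (LaurentSeries k) (-(RatFunc.X ^ 2)⁻¹ * q) - a =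
      -(HahnSeries.single (-2) 1 * (algebraMap (RatFunc k) (LaurentSeries k) q -
          -(HahnSeries.single 1 1 ^ 2 * a))) := by
    rw [← hsInv, map_mul, map_neg, map_inv₀, map_pow, RatFunc.coe_X, mul_sub, mul_neg,
      inv_mul_cancel_left₀ hs]
    ring
  rw [key]
  exact ((Small.single (-2) (1 : k)).mul h).neg.mono (by omega)

end Approximation

end FormalConnection

open FormalConnection in
/-- **Realizing two prescribed formal types by a rational connection on `ℙ¹`.**
Let `k` be an algebraically closed field of characteristic zero, with `der = d/dt`
the derivation of `k((t))` (characterized on coefficients). Let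
`A₀ ∈ Mₙ(k((t)))` and `Ainf ∈ Mₙ(k((s)))` be given (both copies of the field of
Laurent series). Let `σ : k(t) → k(t)` be the substitution `t ↦ 1/s`, i.e. the
ring endomorphism of `RatFunc k` fixing constants and sending `X` to `X⁻¹`.
Then there exists `B ∈ Mₙ(k(t))` such that:
(i) `B`, expanded at `t = 0` (entrywise coercion `RatFunc k → LaurentSeries k`),
is gauge equivalent to `A₀`; and
(ii) `−s⁻²·B(1/s)`, expanded at `s = 0`, is gauge equivalent to `Ainf`. -/
theorem rational_connection_with_two_prescribed_formal_types
    {k : Type*} [Field k] [IsAlgClosed k] [CharZero k]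
    (der : LaurentSeries k → LaurentSeries k)
    (hder : ∀ (f : LaurentSeries k) (m : ℤ), (der f).coeff m = (m + 1) • f.coeff (m + 1))
    (σ : RatFunc k →+* RatFunc k)
    (hσX : σ RatFunc.X = (RatFunc.X)⁻¹)
    (hσC : ∀ a : k, σ (RatFunc.C a) = RatFunc.C a)
    (n : ℕ)
    (A₀ Ainf : Matrix (Fin n) (Fin n) (LaurentSeries k)) :
    ∃ B : Matrix (Fin n) (Fin n) (RatFunc k),
      (∃ g : Matrix (Fin n) (Fin n) (LaurentSeries k),
        IsUnit g.det ∧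
        B.map (fun f => (f : LaurentSeries k)) =
          g * A₀ * g⁻¹ - g.map der * g⁻¹) ∧
      (∃ h : Matrix (Fin n) (Fin n) (LaurentSeries k),
        IsUnit h.det ∧
        (Matrix.map (fun i j => -(RatFunc.X ^ 2)⁻¹ * σ (B i j) :
            Matrix (Fin n) (Fin n) (RatFunc k)) (fun f => (f : LaurentSeries k))) =
          h * Ainf * h⁻¹ - h.map der * h⁻¹) := by
  obtain ⟨N, hN⟩ := exists_gauge_of_close der hder A₀
  obtain ⟨M, hM⟩ := exists_gauge_of_close der hder Ainf
  -- `-s⁻²·B(1/s)` is close to `Ainf` once `B(1/s)` is close to `-s²·Ainf`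
  choose B hB₀ hBinf using fun i j => exists_ratFunc_close_two σ hσX hσC (A₀ i j)
    (-(HahnSeries.single 1 1 ^ 2 * Ainf i j)) (max N (M + 2))
  refine ⟨Matrix.of B, hN _ fun i j => (hB₀ i j).mono (le_max_left _ _), hM _ fun i j => ?_⟩
  exact small_at_infinity _ _ M ((hBinf i j).mono (le_max_right _ _))
end

section
/- Let k be an algebraically closed field of characteristic zero and K = k((t)). For every A ∈ Mₙ(K) there exists g ∈ GLₙ(K) such that B := g⁻¹·A·g + g⁻¹·∂g is in non-degenerate oper form: Bᵢⱼ = 0 whenever i > j+1, and B_{j+1,j} ≠ 0 for all 1 ≤ j ≤ n−1. -/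
/-!
The theorem is the cyclic vector theorem for the operator `D v = A v + ∂v` on `V = Kⁿ`: if
`v, D v, …, D^(n-1) v` is a basis of `V` and `g` has these vectors as columns, then column `j` of
`A g + ∂g` is column `j + 1` of `g`, so `g⁻¹ A g + g⁻¹ ∂g` is a companion matrix.

A cyclic vector exists because the ring of differential operators `K[D]` is simple and not
artinian; the argument below is an elementary form of Stafford's. Take a `D`-stable subspace `W`,
minimal such that `V` is the sum of `W` and the `D`-orbit span of some `v`. If `W ≠ 0`, let
`W' < W` be a maximal proper `D`-stable subspace, and let `P = ∑ aᵢ Dⁱ ≠ 0` kill `v`. Commuting `P`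
with `t` (where `∂t = 1`) lowers its order, so `P` cannot send all of `W` into `W'`
(`le_of_operator_mem`). For `w ∈ W` with `P w ∉ W'`, the orbit span of `v + w` contains
`P (v + w) = P w`; by maximality of `W'`, that span together with `W'` contains `W`, hence `w` and
`v`, hence everything, which contradicts the minimality of `W` (`exists_cyclic`).
-/

section

variable {K V : Type*} [Field K] [AddCommGroup V] [Module K V] {d : K → K} {D : V →+ V}

lemma iterate_smul_const (hD : ∀ (f : K) (v : V), D (f • v) = d f • v + f • D v) {t : K}
    (ht : d t = 1) (i : ℕ) (w : V) :
    D^[i] (t • w) = t • D^[i] w + (i : K) • D^[i - 1] w := by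
  induction i generalizing w with
  | zero => simp
  | succ i ih =>
    rw [Function.iterate_succ_apply', ih, map_add, hD, ht, Nat.cast_smul_eq_nsmul, map_nsmul,
      ← Function.iterate_succ_apply' D, one_smul]
    cases i with
    | zero => simp [add_comm]
    | succ i =>
      simp only [Nat.add_sub_cancel, ← Function.iterate_succ_apply' D, Nat.cast_smul_eq_nsmul]
      rw [succ_nsmul _ (i + 1)]
      abel

/-- A nonzero differential operator `∑ aᵢ Dⁱ` cannot map `W` into `W'` unless `W ≤ W'`. Its
commutator with `t` is the formal derivative `∑ i aᵢ Dⁱ⁻¹`, which has lower order and still maps `W`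
into `W'`; this reduces the claim to an operator of order zero. -/
lemma le_of_operator_mem [CharZero K]
    (hD : ∀ (f : K) (v : V), D (f • v) = d f • v + f • D v) {t : K} (ht : d t = 1)
    {W W' : Submodule K V} (N : ℕ) (a : ℕ → K) (ha : ∃ i < N, a i ≠ 0)
    (h : ∀ w ∈ W, ∑ i ∈ Finset.range N, a i • D^[i] w ∈ W') : W ≤ W' := by
  induction N generalizing a with
  | zero => simp at ha
  | succ N ih =>
    by_cases hex : ∃ i < N, a (i + 1) ≠ 0
    · obtain ⟨i, hi, hai⟩ := hex
      refine ih (fun i => a (i + 1) * ((i + 1 : ℕ) : K))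
        ⟨i, hi, mul_ne_zero hai (Nat.cast_ne_zero.2 i.succ_ne_zero)⟩ fun w hw => ?_
      have h1 := W'.sub_mem (h _ (W.smul_mem t hw)) (W'.smul_mem t (h w hw))
      rw [Finset.smul_sum, ← Finset.sum_sub_distrib, Finset.sum_range_succ'] at h1
      convert h1 using 1
      simp only [iterate_smul_const hD ht, Nat.add_sub_cancel]
      simp only [smul_add, smul_comm t, add_sub_cancel_left, mul_smul]
      simp
    · push Not at hex
      have ha0 : a 0 ≠ 0 := by
        obtain ⟨i, hi, hai⟩ := ha
        cases i with
        | zero => exact hai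
        | succ i => exact absurd (hex i (by omega)) hai
      intro w hw
      have h1 := h w hw
      rw [Finset.sum_range_succ', Finset.sum_eq_zero, zero_add] at h1
      · exact (W'.smul_mem_iff ha0).1 h1
      · intro i hi
        rw [hex i (Finset.mem_range.1 hi), zero_smul]

lemma span_stable (hD : ∀ (f : K) (v : V), D (f • v) = d f • v + f • D v) {s : Set V}
    (hs : ∀ x ∈ s, D x ∈ Submodule.span K s) :
    ∀ x ∈ Submodule.span K s, D x ∈ Submodule.span K s := by
  intro x hx
  induction hx using Submodule.span_induction with
  | mem x hx => exact hs x hx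
  | zero => simp
  | add x y _ _ hx hy => rw [map_add]; exact add_mem hx hy
  | smul f x hx' hx =>
    rw [hD]
    exact add_mem (Submodule.smul_mem _ _ hx') (Submodule.smul_mem _ _ hx)

lemma orbit_stable (hD : ∀ (f : K) (v : V), D (f • v) = d f • v + f • D v) (v : V) :
    ∀ x ∈ Submodule.span K (Set.range fun i => D^[i] v),
      D x ∈ Submodule.span K (Set.range fun i => D^[i] v) := by
  apply span_stable hD
  rintro _ ⟨i, rfl⟩
  exact Submodule.subset_span ⟨i + 1, Function.iterate_succ_apply' D i v⟩

lemma orbit_le {v : V} {W : Submodule K V} (hW : ∀ x ∈ W, D x ∈ W) (hv : v ∈ W) :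
    Submodule.span K (Set.range fun i => D^[i] v) ≤ W := by
  rw [Submodule.span_le]
  rintro _ ⟨i, rfl⟩
  induction i with
  | zero => exact hv
  | succ i ih =>
    simp only [Function.iterate_succ_apply']
    exact hW _ ih

lemma sup_stable {W₁ W₂ : Submodule K V} (h₁ : ∀ x ∈ W₁, D x ∈ W₁) (h₂ : ∀ x ∈ W₂, D x ∈ W₂) :
    ∀ x ∈ W₁ ⊔ W₂, D x ∈ W₁ ⊔ W₂ := by
  intro x hx
  obtain ⟨y, hy, z, hz, rfl⟩ := Submodule.mem_sup.1 hx
  rw [map_add]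
  exact Submodule.add_mem_sup (h₁ y hy) (h₂ z hz)

/-- Every vector is killed by a nonzero differential operator. -/
lemma exists_relation [FiniteDimensional K V] (v : V) :
    ∃ (N : ℕ) (a : ℕ → K), (∃ i < N, a i ≠ 0) ∧ ∑ i ∈ Finset.range N, a i • D^[i] v = 0 := by
  have h : ¬ LinearIndependent K fun i : Fin (Module.finrank K V + 1) => D^[i] v := by
    intro h
    have := h.fintype_card_le_finrank
    simp at this
  obtain ⟨g, hg, i, hi⟩ := Fintype.not_linearIndependent_iff.1 h
  refine ⟨Module.finrank K V + 1, fun i => if h : i < _ then g ⟨i, h⟩ else 0,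
    ⟨i, i.2, by simpa only [i.2, dif_pos] using hi⟩, ?_⟩
  rw [Finset.sum_range]
  simpa only [Fin.is_lt, dif_pos] using hg

/-- Cyclic vector theorem: some vector generates `V` under `D`. -/
lemma exists_cyclic [CharZero K] [FiniteDimensional K V]
    (hD : ∀ (f : K) (v : V), D (f • v) = d f • v + f • D v) {t : K} (ht : d t = 1) :
    ∃ v : V, Submodule.span K (Set.range fun i => D^[i] v) = ⊤ := by
  obtain ⟨W, ⟨hWs, v, hv⟩, hmin⟩ := (wellFounded_lt (α := Submodule K V)).has_min
    {W | (∀ x ∈ W, D x ∈ W) ∧ ∃ v, Submodule.span K (Set.range fun i => D^[i] v) ⊔ W = ⊤}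
    ⟨⊤, by simp, 0, by simp⟩
  by_cases hW0 : W = ⊥
  · exact ⟨v, by simpa [hW0] using hv⟩
  exfalso
  obtain ⟨W', ⟨hW's, hlt⟩, hmax⟩ := (wellFounded_gt (α := Submodule K V)).has_min
    {W' | (∀ x ∈ W', D x ∈ W') ∧ W' < W} ⟨⊥, by simp, bot_lt_iff_ne_bot.2 hW0⟩
  obtain ⟨N, a, ha, hav⟩ := exists_relation (K := K) (D := D) v
  have hw : ∃ w ∈ W, ∑ i ∈ Finset.range N, a i • D^[i] w ∉ W' := by
    by_contra! h
    exact hlt.not_ge (le_of_operator_mem hD ht N a ha h)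
  obtain ⟨w, hw, hwn⟩ := hw
  refine hmin W' ⟨hW's, v + w, ?_⟩ hlt
  set C := Submodule.span K (Set.range fun i => D^[i] (v + w)) with hC
  have hCs : ∀ x ∈ C ⊔ W', D x ∈ C ⊔ W' := sup_stable (orbit_stable hD _) hW's
  have hiter : ∀ i, D^[i] w ∈ W := fun i => orbit_le hWs hw (Submodule.subset_span ⟨i, rfl⟩)
  have hPmem : ∑ i ∈ Finset.range N, a i • D^[i] w ∈ C := by
    have : ∑ i ∈ Finset.range N, a i • D^[i] w
        = ∑ i ∈ Finset.range N, a i • D^[i] (v + w) := by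
      simp only [iterate_map_add, smul_add, Finset.sum_add_distrib, hav, zero_add]
    rw [this]
    exact sum_mem fun i _ => C.smul_mem _ (Submodule.subset_span ⟨i, rfl⟩)
  have hWle : W ≤ C ⊔ W' := by
    by_contra hnot
    refine hmax ((C ⊔ W') ⊓ W) ⟨fun x hx => ⟨hCs x hx.1, hWs x hx.2⟩, ?_⟩ ?_
    · exact lt_of_le_of_ne inf_le_right fun h => hnot (inf_eq_right.1 h)
    · refine lt_of_le_of_ne (le_inf le_sup_right hlt.le) fun h => hwn ?_
      rw [h]
      exact ⟨Submodule.mem_sup_left hPmem,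
        sum_mem fun i _ => W.smul_mem _ (hiter i)⟩
  have hvmem : v ∈ C ⊔ W' := by
    have h1 : v + w ∈ C ⊔ W' := Submodule.mem_sup_left (Submodule.subset_span ⟨0, rfl⟩)
    simpa using sub_mem h1 (hWle hw)
  exact top_le_iff.1 (hv ▸ sup_le (orbit_le hCs hvmem) hWle)

/-- For a cyclic vector, the first `dim V` iterates already span: the spans of initial segments
of the orbit grow strictly until one of them is `D`-stable. -/
lemma span_finrank_eq_top [FiniteDimensional K V]
    (hD : ∀ (f : K) (v : V), D (f • v) = d f • v + f • D v) {v : V}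
    (hv : Submodule.span K (Set.range fun i => D^[i] v) = ⊤) :
    Submodule.span K ((fun i => D^[i] v) '' Set.Iio (Module.finrank K V)) = ⊤ := by
  have key : ∀ m : ℕ, m ≤ Module.finrank K
        (Submodule.span K ((fun i => D^[i] v) '' Set.Iio m)) ∨
      Submodule.span K ((fun i => D^[i] v) '' Set.Iio m) = ⊤ := by
    intro m
    induction m with
    | zero => simp
    | succ m ih =>
      have hle : Submodule.span K ((fun i => D^[i] v) '' Set.Iio m) ≤
          Submodule.span K ((fun i => D^[i] v) '' Set.Iio (m + 1)) :=
        Submodule.span_mono (Set.image_mono (Set.Iio_subset_Iio m.le_succ))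
      rcases ih with ih | ih
      · rcases hle.eq_or_lt with heq | hlt
        · right
          rw [← top_le_iff, ← hv]
          have hst := span_stable hD (s := (fun i => D^[i] v) '' Set.Iio m) (by
            rintro _ ⟨i, hi, rfl⟩
            rw [heq]
            exact Submodule.subset_span ⟨i + 1, Nat.succ_lt_succ hi,
              Function.iterate_succ_apply' D i v⟩)
          rw [heq] at hst
          exact orbit_le hst (Submodule.subset_span ⟨0, m.succ_pos, rfl⟩)
        · left
          have := Submodule.finrank_lt_finrank_of_lt hlt
          omega
      · right
        rw [ih] at hle
        exact top_le_iff.1 hle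
  rcases key (Module.finrank K V) with h | h
  · exact Submodule.eq_top_of_finrank_eq (le_antisymm (Submodule.finrank_le _) h)
  · exact h
end

/-- Leibniz rule for `d/dt`, checked on the Euler operator `t d/dt`, which multiplies the `m`-th
coefficient by `m` and so does not enlarge supports. -/
lemma der_mul {k : Type*} [Field k] (der : LaurentSeries k → LaurentSeries k)
    (hder : ∀ (f : LaurentSeries k) (m : ℤ), (der f).coeff m = (m + 1) • f.coeff (m + 1))
    (f g : LaurentSeries k) : der (f * g) = der f * g + f * der g := by
  set t : LaurentSeries k := HahnSeries.single 1 1 with ht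
  have htc : ∀ (f : LaurentSeries k) (m : ℤ), (t * der f).coeff m = m • f.coeff m := by
    intro f m
    have := HahnSeries.coeff_single_mul_add (r := (1 : k)) (x := der f) (a := m - 1) (b := 1)
    rw [sub_add_cancel] at this
    rw [ht, this, hder, one_mul, sub_add_cancel]
  have hsupp : ∀ f : LaurentSeries k, (t * der f).support ⊆ f.support := by
    intro f m hm h
    exact hm (by rw [htc, h, smul_zero])
  have ht0 : t ≠ 0 := by simp [ht]
  apply mul_left_cancel₀ ht0
  have e : t * (der f * g + f * der g) = (t * der f) * g + f * (t * der g) := by ring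
  rw [e]
  ext m
  rw [htc, HahnSeries.coeff_add, HahnSeries.coeff_mul,
    HahnSeries.coeff_mul_left' f.isPWO_support (hsupp f),
    HahnSeries.coeff_mul_right' g.isPWO_support (hsupp g), Finset.smul_sum,
    ← Finset.sum_add_distrib]
  refine Finset.sum_congr rfl fun ij hij => ?_
  rw [htc, htc, ← (Finset.mem_antidiagonal.1 hij).2.2]
  simp only [zsmul_eq_mul]
  push_cast
  ring

/-- **Frenkel–Zhu theorem for `GLₙ` over the formal punctured disk.**
Let `k` be an algebraically closed field of characteristic zero, `K = k((t))`
with derivation `der = d/dt`. For every `A ∈ Mₙ(K)` there exists `g ∈ GLₙ(K)`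
such that `B := g⁻¹·A·g + g⁻¹·(der g)` is in non-degenerate oper form:
`B i j = 0` whenever `i > j + 1`, and the subdiagonal entries `B (j+1) j` are
all nonzero. -/
theorem frenkel_zhu_oper_form
    {k : Type*} [Field k] [IsAlgClosed k] [CharZero k]
    (der : LaurentSeries k → LaurentSeries k)
    (hder : ∀ (f : LaurentSeries k) (m : ℤ), (der f).coeff m = (m + 1) • f.coeff (m + 1))
    (n : ℕ)
    (A : Matrix (Fin n) (Fin n) (LaurentSeries k)) :
    ∃ g : Matrix (Fin n) (Fin n) (LaurentSeries k),
      IsUnit g.det ∧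
      (∀ i j : Fin n, (j : ℕ) + 1 < (i : ℕ) →
        (g⁻¹ * A * g + g⁻¹ * g.map der) i j = 0) ∧
      (∀ i j : Fin n, (i : ℕ) = (j : ℕ) + 1 →
        (g⁻¹ * A * g + g⁻¹ * g.map der) i j ≠ 0) := by
  have hadd : ∀ f g, der (f + g) = der f + der g := fun f g => by
    ext m
    simp [hder]
  have hone : der (HahnSeries.single 1 1) = 1 := by
    ext m
    rw [hder]
    by_cases hm : m = 0
    · simp [hm]
    · simp [hm, HahnSeries.coeff_one]
  have : CharZero (LaurentSeries k) :=
    charZero_of_injective_algebraMap (algebraMap k (LaurentSeries k)).injective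
  let D : (Fin n → LaurentSeries k) →+ (Fin n → LaurentSeries k) :=
    AddMonoidHom.mk' (fun v => A.mulVec v + fun i => der (v i)) (fun v w => by
      ext1 i
      simp only [Matrix.mulVec_add, Pi.add_apply, hadd]
      abel)
  have hDdef : ∀ v, D v = A.mulVec v + fun i => der (v i) := fun v => rfl
  have hD : ∀ (f : LaurentSeries k) (v : Fin n → LaurentSeries k),
      D (f • v) = der f • v + f • D v := fun f v => by
    ext1 i
    simp only [hDdef, Matrix.mulVec_smul, Pi.add_apply, Pi.smul_apply, smul_eq_mul,
      der_mul der hder]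
    ring
  obtain ⟨v, hv⟩ := exists_cyclic hD hone
  have htop := span_finrank_eq_top hD hv
  rw [Module.finrank_fin_fun] at htop
  let g : Matrix (Fin n) (Fin n) (LaurentSeries k) := Matrix.of fun i j => (D^[(j : ℕ)] v) i
  have hli : LinearIndependent (LaurentSeries k) g.col := by
    apply linearIndependent_of_top_le_span_of_card_eq_finrank _ (by simp)
    rw [← htop]
    apply Submodule.span_mono
    rintro _ ⟨i, hi, rfl⟩
    exact ⟨⟨i, hi⟩, rfl⟩
  have hdet : IsUnit g.det :=
    (Matrix.isUnit_iff_isUnit_det g).1 (Matrix.linearIndependent_cols_iff_isUnit.1 hli)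
  -- Column `j` of `A * g + g.map der` is `D (D^[j] v)`, that is, column `j + 1` of `g`.
  have hcomp : ∀ i j : Fin n, (h : (j : ℕ) + 1 < n) →
      (g⁻¹ * A * g + g⁻¹ * g.map der) i j = (1 : Matrix (Fin n) (Fin n) (LaurentSeries k)) i ⟨j + 1, h⟩ := by
    intro i j h
    rw [← Matrix.nonsing_inv_mul g hdet, Matrix.mul_assoc, ← Matrix.mul_add]
    simp only [Matrix.mul_apply (M := g⁻¹)]
    refine Finset.sum_congr rfl fun l _ => ?_
    congr 1
    change _ = (D^[(j : ℕ) + 1] v) l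
    rw [Function.iterate_succ_apply', hDdef]
    rfl
  refine ⟨g, hdet, fun i j hij => ?_, fun i j hij => ?_⟩
  · rw [hcomp i j (by omega), Matrix.one_apply_ne]
    intro h
    simp [h] at hij
  · have hj : (j : ℕ) + 1 < n := hij ▸ i.2
    obtain rfl : i = ⟨j + 1, hj⟩ := Fin.ext hij
    rw [hcomp _ j hj, Matrix.one_apply_eq]
    exact one_ne_zero
end

section
/- Let F be a field and let A ∈ Mₙ(F) be a lower triangular matrix whose diagonal entries are pairwise distinct. Then the map X ↦ A·X − X·A is a bijection from the space of strictly lower triangular matrices in Mₙ(F) to itself. -/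
/-!
The space of strictly lower triangular matrices is finite-dimensional, so once the commutator
with `A` is known to preserve it, bijectivity reduces to triviality of the kernel. If `X` is
strictly lower triangular and vanishes on the subdiagonals closer to the main diagonal than the
entry `(i, j)`, then the `(i, j)` entry of `A * X - X * A` is `(A i i - A j j) * X i j`
(`commutator_apply_of_vanish`). As the diagonal of `A` has no repetition, an `X` in the kernel
vanishes one subdiagonal after another, by induction on `i - j` (`eq_zero_of_commutator_eq_zero`).
-/

/-- The subspace of strictly lower triangular matrices. -/
def strictLower (F : Type*) [Field F] (n : ℕ) : Submodule F (Matrix (Fin n) (Fin n) F) where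
  carrier := {X | ∀ i j : Fin n, i ≤ j → X i j = 0}
  add_mem' := by
    intro X Y hX hY i j hij
    simp [hX i j hij, hY i j hij]
  zero_mem' := by
    intro i j _
    rfl
  smul_mem' := by
    intro c X hX i j hij
    simp [hX i j hij]

/-- The linear endomorphism `X ↦ A * X - X * A` of the matrix space. -/
def commutatorMap {F : Type*} [Field F] {n : ℕ} (A : Matrix (Fin n) (Fin n) F) :
    Matrix (Fin n) (Fin n) F →ₗ[F] Matrix (Fin n) (Fin n) F :=
  LinearMap.mulLeft F A - LinearMap.mulRight F A

theorem commutator_mem_strictLower {F : Type*} [Field F] {n : ℕ}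
    {A : Matrix (Fin n) (Fin n) F} (hlow : ∀ i j : Fin n, i < j → A i j = 0)
    {X : Matrix (Fin n) (Fin n) F} (hX : X ∈ strictLower F n) :
    A * X - X * A ∈ strictLower F n := by
  intro i j hij
  rw [Matrix.sub_apply, Matrix.mul_apply, Matrix.mul_apply, Finset.sum_eq_zero,
    Finset.sum_eq_zero, sub_zero]
  · intro k _
    rcases le_or_gt i k with h | h
    · rw [hX i k h, zero_mul]
    · rw [hlow k j (h.trans_le hij), mul_zero]
  · intro k _
    rcases lt_or_ge i k with h | h
    · rw [hlow i k h, zero_mul]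
    · rw [hX k j (h.trans hij), mul_zero]

/-- Only the diagonal entries of `A` contribute to the `(i, j)` entry of the commutator when `X`
vanishes at the positions `(k, j)` with `k < i` and `(i, k)` with `j < k`. -/
theorem commutator_apply_of_vanish {F : Type*} [Field F] {n : ℕ}
    {A : Matrix (Fin n) (Fin n) F} (hlow : ∀ i j : Fin n, i < j → A i j = 0)
    {X : Matrix (Fin n) (Fin n) F} {i j : Fin n}
    (hcol : ∀ k < i, X k j = 0) (hrow : ∀ k, j < k → X i k = 0) :
    (A * X - X * A) i j = (A i i - A j j) * X i j := by
  rw [Matrix.sub_apply, Matrix.mul_apply, Matrix.mul_apply, Finset.sum_eq_single i,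
    Finset.sum_eq_single j]
  · ring
  · intro k _ hk
    rcases lt_or_gt_of_ne hk with h | h
    · rw [hlow k j h, mul_zero]
    · rw [hrow k h, zero_mul]
  · simp
  · intro k _ hk
    rcases lt_or_gt_of_ne hk with h | h
    · rw [hcol k h, mul_zero]
    · rw [hlow i k h, zero_mul]
  · simp

theorem eq_zero_of_commutator_eq_zero {F : Type*} [Field F] {n : ℕ}
    {A : Matrix (Fin n) (Fin n) F} (hlow : ∀ i j : Fin n, i < j → A i j = 0)
    (hdiag : ∀ i j : Fin n, i ≠ j → A i i ≠ A j j)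
    {X : Matrix (Fin n) (Fin n) F} (hX : X ∈ strictLower F n)
    (h : A * X - X * A = 0) : X = 0 := by
  -- The bound `i ≤ j + d` says that `(i, j)` lies on one of the first `d` subdiagonals or above.
  have key : ∀ d : ℕ, ∀ i j : Fin n, (i : ℕ) ≤ j + d → X i j = 0 := by
    intro d
    induction d with
    | zero => exact fun i j hij => hX i j (by simpa using hij)
    | succ d ih =>
      intro i j hij
      rcases le_or_gt i j with hle | hlt
      · exact hX i j hle
      have e := commutator_apply_of_vanish hlow (X := X) (i := i) (j := j)
        (fun k hk => ih k j (by have := Fin.lt_def.mp hk; omega))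
        (fun k hk => ih i k (by have := Fin.lt_def.mp hk; omega))
      rw [h, Matrix.zero_apply] at e
      exact (mul_eq_zero.mp e.symm).resolve_left (sub_ne_zero.mpr (hdiag i j hlt.ne'))
  ext i j
  exact key n i j (by omega)

/-- **`ad` of a lower triangular matrix with distinct diagonal entries is a
bijection on strictly lower triangular matrices.** Let `F` be a field and
`A ∈ Mₙ(F)` lower triangular with pairwise distinct diagonal entries. Then
`X ↦ A·X − X·A` maps the set of strictly lower triangular matrices bijectively
onto itself. -/
theorem ad_bijective_on_strictly_lower_triangular
    {F : Type*} [Field F] (n : ℕ)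
    (A : Matrix (Fin n) (Fin n) F)
    (hlow : ∀ i j : Fin n, i < j → A i j = 0)
    (hdiag : ∀ i j : Fin n, i ≠ j → A i i ≠ A j j) :
    Set.BijOn (fun X : Matrix (Fin n) (Fin n) F => A * X - X * A)
      {X : Matrix (Fin n) (Fin n) F | ∀ i j : Fin n, i ≤ j → X i j = 0}
      {X : Matrix (Fin n) (Fin n) F | ∀ i j : Fin n, i ≤ j → X i j = 0} := by
  have hmaps : ∀ X ∈ strictLower F n, commutatorMap A X ∈ strictLower F n :=
    fun X hX => commutator_mem_strictLower hlow hX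
  have hinj : Function.Injective ((commutatorMap A).restrict hmaps) := by
    rw [injective_iff_map_eq_zero]
    intro X hX
    exact Subtype.ext
      (eq_zero_of_commutator_eq_zero hlow hdiag X.2 (congrArg Subtype.val hX))
  have hsurj := LinearMap.injective_iff_surjective.mp hinj
  refine ⟨hmaps, ?_, ?_⟩
  · intro X hX Y hY hXY
    exact congrArg Subtype.val (@hinj ⟨X, hX⟩ ⟨Y, hY⟩ (Subtype.ext hXY))
  · intro Y hY
    obtain ⟨X, hX⟩ := hsurj ⟨Y, hY⟩
    exact ⟨X, X.2, congrArg Subtype.val hX⟩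
end
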